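/- arXiv:1808.01273 — 2 statements merged into one kernel-verified Lean document; each statement's English description precedes it below -/
import Mathlib

section
/- For each 1 < p < ∞ there exists a constant C_p > 0 such that for every integer k ≥ 1 and every polynomial P on ℝ^k, one has ‖∇P‖_{L^p(γ_k)} ≤ C_p · (deg P)^{1/2 + (1/π)·arctan(|p−2|/(2√(p−1)))} · ‖P‖_{L^p(γ_k)}. -/
open MeasureTheory ProbabilityTheory Real

/-- The standard Gaussian measure on `ℝ^k`. -/
noncomputable def gaussMeasure (k : ℕ) : Measure (Fin k → ℝ) :=
  Measure.pi fun _ => gaussianReal 0 1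

/-- The `L^p` norm with respect to the standard Gaussian measure on `ℝ^k`. -/
noncomputable def lpNormGauss {k : ℕ} (p : ℝ) (f : (Fin k → ℝ) → ℝ) : ℝ :=
  (∫ x, |f x| ^ p ∂(gaussMeasure k)) ^ (1 / p)

/-- The Euclidean length of the gradient of a polynomial on `ℝ^k`. -/
noncomputable def gradNorm {k : ℕ} (P : MvPolynomial (Fin k) ℝ) (x : Fin k → ℝ) : ℝ :=
  Real.sqrt (∑ j, (MvPolynomial.eval x (MvPolynomial.pderiv j P)) ^ 2)

/-! Write `L = Δ - x · ∇` for the Ornstein–Uhlenbeck operator, `κ = |p - 2| / (2 √(p - 1))`, and let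
`d` be the degree of the polynomial `P`. Mehler's formula and Hölder's inequality give
`‖∇P‖_p ≤ C t^{-1/2} ‖e^{-tL} P‖_p` for `t > 0`, where `e^{-tL}` runs the semigroup backwards, as
is possible on polynomials, which are sums of eigenpolynomials of `L`. It remains to find a `t` at
which going backwards costs only a constant factor.

Integration by parts shows that `e^{zL}` contracts `L^p` for `z` in the sector `κ |Im z| ≤ Re z`.
Since `e^{zL} P` is an `L^p`-valued exponential sum `∑_{n ≤ d} e^{-nz} c_n`, the maximum principle
bounds it by `e^{O(d)} ‖P‖_p` on the unit disc. The complement of the sector has the opening angle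
`α π` with `α = 1 + (2/π) arctan κ`, so `ξ ↦ -ξ^α` maps the right half disc into it, and the two
constants theorem there bounds `e^{zL} P` by `O(‖P‖_p)` at `z = -t` with `t = d^{-α}`. Finally
`t^{-1/2} = d^{1/2 + (1/π) arctan κ}`. -/

/-- A continuous function between normed spaces growing at most exponentially:
`‖f x‖ ≤ C * exp (m * ‖x‖)`. These functions are stable under the algebraic operations and are
integrable for every Gaussian measure. Applied to a function of `(r, x) : ℝ × E`, the notion
contains a bound that is uniform for `r` in bounded sets, as needed to differentiate under the
integral. -/
@[fun_prop]
structure HasExpGrowth {E F : Type*} [NormedAddCommGroup E] [NormedAddCommGroup F]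
    (f : E → F) : Prop where
  continuous : Continuous f
  exists_norm_le : ∃ C m : ℝ, ∀ x, ‖f x‖ ≤ C * exp (m * ‖x‖)

namespace HasExpGrowth

variable {E F G : Type*} [NormedAddCommGroup E] [NormedAddCommGroup F] [NormedAddCommGroup G]

lemma exists_nonneg_norm_le {f : E → F} (hf : HasExpGrowth f) :
    ∃ C m : ℝ, 0 ≤ C ∧ 0 ≤ m ∧ ∀ x, ‖f x‖ ≤ C * exp (m * ‖x‖) := by
  obtain ⟨C, m, h⟩ := hf.exists_norm_le
  refine ⟨|C|, |m|, abs_nonneg C, abs_nonneg m, fun x => (h x).trans ?_⟩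
  gcongr <;> exact le_abs_self _

lemma of_norm_le {f : E → F} {g : E → G} (hg : HasExpGrowth g) (hf : Continuous f)
    (h : ∀ x, ‖f x‖ ≤ ‖g x‖) : HasExpGrowth f := by
  obtain ⟨C, m, hC⟩ := hg.exists_norm_le
  exact ⟨hf, C, m, fun x => (h x).trans (hC x)⟩

@[fun_prop]
lemma const (c : F) : HasExpGrowth fun _ : E => c :=
  ⟨continuous_const, ‖c‖, 0, by simp⟩

@[fun_prop]
lemma id : HasExpGrowth fun x : E => x :=
  ⟨continuous_id, 1, 1, fun x => by simpa using (lt_add_one ‖x‖).le.trans (add_one_le_exp ‖x‖)⟩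

@[fun_prop]
lemma add {f g : E → F} (hf : HasExpGrowth f) (hg : HasExpGrowth g) :
    HasExpGrowth fun x => f x + g x := by
  obtain ⟨C, m, hC, hm, hf'⟩ := hf.exists_nonneg_norm_le
  obtain ⟨D, n, hD, hn, hg'⟩ := hg.exists_nonneg_norm_le
  refine ⟨hf.continuous.add hg.continuous, C + D, m + n, fun x => ?_⟩
  calc ‖f x + g x‖ ≤ C * exp (m * ‖x‖) + D * exp (n * ‖x‖) :=
        (norm_add_le _ _).trans (add_le_add (hf' x) (hg' x))
    _ ≤ C * exp ((m + n) * ‖x‖) + D * exp ((m + n) * ‖x‖) := by gcongr <;> linarith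
    _ = (C + D) * exp ((m + n) * ‖x‖) := by ring

@[fun_prop]
lemma norm {f : E → F} (hf : HasExpGrowth f) : HasExpGrowth fun x => ‖f x‖ :=
  hf.of_norm_le hf.continuous.norm fun x => by simp

@[fun_prop]
lemma abs {f : E → ℝ} (hf : HasExpGrowth f) : HasExpGrowth fun x => |f x| :=
  hf.norm

@[fun_prop]
lemma neg {f : E → F} (hf : HasExpGrowth f) : HasExpGrowth fun x => -f x :=
  hf.of_norm_le hf.continuous.neg fun x => by simp

@[fun_prop]
lemma sub {f g : E → F} (hf : HasExpGrowth f) (hg : HasExpGrowth g) :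
    HasExpGrowth fun x => f x - g x := by
  simpa only [sub_eq_add_neg] using hf.add hg.neg

@[fun_prop]
lemma fst {f : E → F × G} (hf : HasExpGrowth f) : HasExpGrowth fun x => (f x).1 :=
  hf.of_norm_le hf.continuous.fst fun x => norm_fst_le (f x)

@[fun_prop]
lemma snd {f : E → F × G} (hf : HasExpGrowth f) : HasExpGrowth fun x => (f x).2 :=
  hf.of_norm_le hf.continuous.snd fun x => norm_snd_le (f x)

lemma apply {ι : Type*} [Fintype ι] {f : E → ι → F} (hf : HasExpGrowth f) (i : ι) :
    HasExpGrowth fun x => f x i :=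
  hf.of_norm_le (continuous_pi_iff.1 hf.continuous i) fun x => norm_le_pi_norm (f x) i

@[fun_prop]
lemma proj {ι : Type*} [Fintype ι] (i : ι) : HasExpGrowth fun x : ι → F => x i :=
  id.apply i

@[fun_prop]
lemma sum {ι : Type*} {s : Finset ι} {f : ι → E → F} (hf : ∀ i, HasExpGrowth (f i)) :
    HasExpGrowth fun x => ∑ i ∈ s, f i x := by
  induction s using Finset.cons_induction with
  | empty => simpa using const (0 : F)
  | cons i s hi ih => simpa only [Finset.sum_cons] using (hf i).add ih

@[fun_prop]
lemma pi {ι : Type*} [Fintype ι] {f : E → ι → F} (hf : ∀ i, HasExpGrowth fun x => f x i) :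
    HasExpGrowth f := by
  refine (sum (s := Finset.univ) fun i => (hf i).norm).of_norm_le
    (continuous_pi fun i => (hf i).continuous) fun x => ?_
  rw [norm_of_nonneg (Finset.sum_nonneg fun i _ => norm_nonneg _),
    pi_norm_le_iff_of_nonneg (Finset.sum_nonneg fun i _ => norm_nonneg _)]
  exact fun i => Finset.single_le_sum (f := fun i => ‖f x i‖)
    (fun i _ => norm_nonneg _) (Finset.mem_univ i)

@[fun_prop]
lemma smul {A : Type*} [NormedRing A] [Module A F] [IsBoundedSMul A F]
    {f : E → A} {g : E → F} (hf : HasExpGrowth f) (hg : HasExpGrowth g) :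
    HasExpGrowth fun x => f x • g x := by
  obtain ⟨C, m, hC, -, hf'⟩ := hf.exists_nonneg_norm_le
  obtain ⟨D, n, -, -, hg'⟩ := hg.exists_nonneg_norm_le
  refine ⟨hf.continuous.smul hg.continuous, C * D, m + n, fun x => ?_⟩
  calc ‖f x • g x‖ ≤ ‖f x‖ * ‖g x‖ := norm_smul_le _ _
    _ ≤ (C * exp (m * ‖x‖)) * (D * exp (n * ‖x‖)) := by gcongr; exacts [hf' x, hg' x]
    _ = C * D * exp ((m + n) * ‖x‖) := by rw [add_mul, exp_add]; ring

@[fun_prop]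
lemma mul {A : Type*} [NormedRing A] {f g : E → A} (hf : HasExpGrowth f) (hg : HasExpGrowth g) :
    HasExpGrowth fun x => f x * g x :=
  hf.smul hg

@[fun_prop]
lemma pow {A : Type*} [NormedRing A] {f : E → A} (hf : HasExpGrowth f) (n : ℕ) :
    HasExpGrowth fun x => f x ^ n := by
  induction n with
  | zero => simpa using const (1 : A)
  | succ n ih => simpa only [pow_succ] using ih.mul hf

lemma clm_apply [NormedSpace ℝ F] [NormedSpace ℝ G] {L : E → F →L[ℝ] G} {f : E → F}
    (hL : HasExpGrowth L) (hf : HasExpGrowth f) : HasExpGrowth fun x => L x (f x) :=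
  (hL.norm.mul hf.norm).of_norm_le (hL.continuous.clm_apply hf.continuous) fun x => by
    simpa using (L x).le_opNorm (f x)

lemma const_clm_apply [NormedSpace ℝ F] [NormedSpace ℝ G] (L : F →L[ℝ] G) {f : E → F}
    (hf : HasExpGrowth f) : HasExpGrowth fun x => L (f x) :=
  (const L).clm_apply hf

@[fun_prop]
lemma cos {f : E → ℝ} (hf : Continuous f) : HasExpGrowth fun x => Real.cos (f x) :=
  (const (1 : ℝ)).of_norm_le (by fun_prop) fun x => by simpa using abs_cos_le_one (f x)

@[fun_prop]
lemma sin {f : E → ℝ} (hf : Continuous f) : HasExpGrowth fun x => Real.sin (f x) :=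
  (const (1 : ℝ)).of_norm_le (by fun_prop) fun x => by simpa using abs_sin_le_one (f x)

@[fun_prop]
lemma ofReal {f : E → ℝ} (hf : HasExpGrowth f) : HasExpGrowth fun x => (f x : ℂ) :=
  hf.of_norm_le (by have := hf.continuous; fun_prop) fun x => by simp

lemma cexp : HasExpGrowth Complex.exp :=
  ⟨Complex.continuous_exp, 1, 1, fun z => by simpa using Complex.norm_exp_le_exp_norm z⟩

@[fun_prop]
lemma eval_mvPolynomial {σ A : Type*} [Fintype σ] [NormedCommRing A] {f : E → σ → A}
    (hf : HasExpGrowth f) (P : MvPolynomial σ A) :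
    HasExpGrowth fun x => MvPolynomial.eval (f x) P := by
  induction P using MvPolynomial.induction_on with
  | C a => simpa using const a
  | add P Q hP hQ => simpa using hP.add hQ
  | mul_X P i hP => simpa using hP.mul (hf.apply i)

lemma rpow_const {f : E → ℝ} (hf : HasExpGrowth f) {s : ℝ} (hs : 0 ≤ s) :
    HasExpGrowth fun x => f x ^ s := by
  obtain ⟨C, m, hC, -, h⟩ := hf.exists_nonneg_norm_le
  refine ⟨hf.continuous.rpow_const fun _ => Or.inr hs, C ^ s, s * m, fun x => ?_⟩
  calc ‖f x ^ s‖ ≤ ‖f x‖ ^ s := Real.abs_rpow_le_abs_rpow _ _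
    _ ≤ (C * exp (m * ‖x‖)) ^ s := by gcongr; exact h x
    _ = C ^ s * exp (s * m * ‖x‖) := by
      rw [mul_rpow hC (exp_pos _).le, ← exp_mul]; ring_nf

lemma rpow_const_of_le {f : E → ℝ} (hf : HasExpGrowth f) {ε : ℝ} (hε : 0 < ε)
    (h : ∀ x, ε ≤ f x) (s : ℝ) : HasExpGrowth fun x => f x ^ s := by
  rcases le_total 0 s with hs | hs
  · exact hf.rpow_const hs
  · refine (const (ε ^ s)).of_norm_le
      (hf.continuous.rpow_const fun x => Or.inl (hε.trans_le (h x)).ne') fun x => ?_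
    rw [norm_of_nonneg (rpow_nonneg (hε.le.trans (h x)) s), norm_of_nonneg (by positivity)]
    exact rpow_le_rpow_of_nonpos hε (h x) hs

lemma comp_of_norm_le {f : F → G} (hf : HasExpGrowth f) {g : E → F} (hg : Continuous g) {a b : ℝ}
    (h : ∀ x, ‖g x‖ ≤ a + b * ‖x‖) : HasExpGrowth fun x => f (g x) := by
  obtain ⟨C, m, hC, hm, hf'⟩ := hf.exists_nonneg_norm_le
  refine ⟨hf.continuous.comp hg, C * exp (m * a), m * b, fun x => ?_⟩
  calc ‖f (g x)‖ ≤ C * exp (m * ‖g x‖) := hf' _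
    _ ≤ C * exp (m * (a + b * ‖x‖)) := by gcongr; exact h x
    _ = C * exp (m * a) * exp (m * b * ‖x‖) := by rw [mul_add, exp_add]; ring_nf

lemma comp_prodMk {f : E × F → G} (hf : HasExpGrowth f) (r : E) :
    HasExpGrowth fun x => f (r, x) :=
  hf.comp_of_norm_le (Continuous.prodMk_right r) (a := ‖r‖) (b := 1) fun x => by
    rw [one_mul]
    exact max_le (le_add_of_nonneg_right (norm_nonneg x)) (le_add_of_nonneg_left (norm_nonneg r))

lemma comp_fst {f : E → G} (hf : HasExpGrowth f) : HasExpGrowth fun x : E × F => f x.1 :=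
  hf.comp_of_norm_le continuous_fst (a := 0) (b := 1) fun x => by simpa using norm_fst_le x

section Gaussian

variable [NormedSpace ℝ E] [CompleteSpace E] [SecondCountableTopology E] [MeasurableSpace E]
  [BorelSpace E] {μ : Measure E} [IsGaussian μ]

lemma integrable_exp_mul_norm (μ : Measure E) [IsGaussian μ] (m : ℝ) :
    Integrable (fun x => exp (m * ‖x‖)) μ := by
  obtain ⟨c, hc, hint⟩ := IsGaussian.exists_integrable_exp_sq μ
  refine (hint.const_mul (exp (m ^ 2 / (4 * c)))).mono' (by fun_prop) (ae_of_all _ fun x => ?_)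
  rw [norm_of_nonneg (exp_pos _).le, ← exp_add, exp_le_exp]
  have hsq : m ^ 2 / (4 * c) + c * ‖x‖ ^ 2 - m * ‖x‖ = (m / 2 - c * ‖x‖) ^ 2 / c := by
    field_simp; ring
  have : 0 ≤ (m / 2 - c * ‖x‖) ^ 2 / c := by positivity
  linarith

lemma integrable {f : E → F} (hf : HasExpGrowth f) : Integrable f μ := by
  obtain ⟨C, m, h⟩ := hf.exists_norm_le
  exact ((integrable_exp_mul_norm μ m).const_mul C).mono'
    hf.continuous.aestronglyMeasurable (ae_of_all _ h)

lemma memLp {f : E → F} (hf : HasExpGrowth f) {p : ℝ} (hp : 0 < p) :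
    MemLp f (ENNReal.ofReal p) μ := by
  rw [← integrable_norm_rpow_iff hf.continuous.aestronglyMeasurable (by simpa) (by simp),
    ENNReal.toReal_ofReal hp.le]
  exact (hf.norm.rpow_const hp.le).integrable

variable [NormedSpace ℝ F]

lemma hasDerivAt_integral {f f' : ℝ → E → F} (hf : HasExpGrowth ↿f) (hf' : HasExpGrowth ↿f')
    (h : ∀ r x, HasDerivAt (fun r => f r x) (f' r x) r) (r : ℝ) :
    HasDerivAt (fun r => ∫ x, f r x ∂μ) (∫ x, f' r x ∂μ) r := by
  obtain ⟨C, m, hC, hm, hbound⟩ := hf'.exists_nonneg_norm_le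
  refine (hasDerivAt_integral_of_dominated_loc_of_deriv_le (Metric.ball_mem_nhds r one_pos)
    (.of_forall fun s => (hf.comp_prodMk s).continuous.aestronglyMeasurable)
    (hf.comp_prodMk r).integrable (hf'.comp_prodMk r).continuous.aestronglyMeasurable
    (.of_forall fun x s hs => ?_)
    ((integrable_exp_mul_norm μ m).const_mul (C * exp (m * (|r| + 1))))
    (.of_forall fun x s _ => h s x)).2
  have hnorm : ‖(s, x)‖ ≤ |r| + 1 + ‖x‖ := by
    have hs' : |s| ≤ |r| + 1 := by
      have := abs_sub_abs_le_abs_sub s r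
      rw [Metric.mem_ball, Real.dist_eq] at hs
      linarith
    exact max_le (hs'.trans (by simp)) (by simpa using by positivity)
  calc ‖f' s x‖ ≤ C * exp (m * ‖(s, x)‖) := hbound (s, x)
    _ ≤ C * exp (m * (|r| + 1 + ‖x‖)) := by gcongr
    _ = C * exp (m * (|r| + 1)) * exp (m * ‖x‖) := by rw [mul_add, exp_add]; ring

end Gaussian

end HasExpGrowth

section Rotation

variable {E F : Type*} [NormedAddCommGroup E] [NormedSpace ℝ E] [NormedAddCommGroup F]

lemma norm_rotation_apply_le (θ : ℝ) (x : E × E) :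
    ‖ContinuousLinearMap.rotation θ x‖ ≤ 2 * ‖x‖ := by
  have hbound (a b : ℝ) (ha : |a| ≤ 1) (hb : |b| ≤ 1) : ‖a • x.1 + b • x.2‖ ≤ 2 * ‖x‖ :=
    calc ‖a • x.1 + b • x.2‖ ≤ |a| * ‖x.1‖ + |b| * ‖x.2‖ := by
          simpa [norm_smul] using norm_add_le (a • x.1) (b • x.2)
      _ ≤ 1 * ‖x‖ + 1 * ‖x‖ := by gcongr; exacts [norm_fst_le x, norm_snd_le x]
      _ = 2 * ‖x‖ := by ring
  rw [ContinuousLinearMap.rotation_apply]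
  exact max_le (hbound _ _ (abs_cos_le_one θ) (abs_sin_le_one θ))
    (hbound _ _ (by simpa using abs_sin_le_one θ) (abs_cos_le_one θ))

lemma hasDerivAt_rotation (x : E × E) (θ : ℝ) :
    HasDerivAt (fun θ => ContinuousLinearMap.rotation θ x)
      ((ContinuousLinearMap.rotation θ x).2, -(ContinuousLinearMap.rotation θ x).1) θ := by
  simp only [ContinuousLinearMap.rotation_apply]
  have hcos := hasDerivAt_cos θ
  have hsin := hasDerivAt_sin θ
  refine HasDerivAt.prodMk ?_ ?_
  · exact (hcos.smul_const x.1).add (hsin.smul_const x.2)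
  · exact ((hsin.neg.smul_const x.1).add (hcos.smul_const x.2)).congr_deriv (by module)

lemma HasExpGrowth.comp_rotation {H : E × E → F} (hH : HasExpGrowth H) :
    HasExpGrowth fun z : ℝ × E × E => H (ContinuousLinearMap.rotation z.1 z.2) := by
  refine hH.comp_of_norm_le (a := 0) (b := 2) ?_ fun z => ?_
  · simp only [ContinuousLinearMap.rotation_apply]
    fun_prop
  · rw [zero_add]
    exact (norm_rotation_apply_le _ _).trans (by gcongr; exact norm_snd_le z)

variable [CompleteSpace E] [SecondCountableTopology E] [MeasurableSpace E] [BorelSpace E]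
  {μ : Measure E} [IsGaussian μ] [NormedSpace ℝ F]

lemma integral_comp_rotation (hμ : μ[id] = 0) {H : E × E → F} (hH : Continuous H) (θ : ℝ) :
    ∫ x, H (ContinuousLinearMap.rotation θ x) ∂(μ.prod μ) = ∫ x, H x ∂(μ.prod μ) := by
  rw [← integral_map (by fun_prop) hH.aestronglyMeasurable, IsGaussian.map_rotation_eq_self hμ θ]

lemma integral_cos_smul_add_sin_smul (hμ : μ[id] = 0) {g : E → F} (hg : Continuous g) (θ : ℝ) :
    ∫ x, g (cos θ • x.1 + sin θ • x.2) ∂(μ.prod μ) = ∫ x, g x ∂μ := by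
  simpa [ContinuousLinearMap.rotation_apply, integral_fun_fst] using
    integral_comp_rotation hμ (hg.comp continuous_fst) θ

-- The rotations preserve `μ ⊗ μ`, so the derivative of `∫ H ∘ rotation θ` at `θ = 0` vanishes.
lemma integral_fderiv_rotation_eq_zero (hμ : μ[id] = 0) {H : E × E → F}
    {H' : E × E → E × E →L[ℝ] F} (hH : HasExpGrowth H)
    (hH' : HasExpGrowth fun x => H' x (x.2, -x.1)) (hderiv : ∀ x, HasFDerivAt H (H' x) x) :
    ∫ x, H' x (x.2, -x.1) ∂(μ.prod μ) = 0 := by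
  have h := HasExpGrowth.hasDerivAt_integral (μ := μ.prod μ) hH.comp_rotation
    hH'.comp_rotation (fun θ x => (hderiv _).comp_hasDerivAt θ (hasDerivAt_rotation x θ)) 0
  simp only [Function.comp_apply, integral_comp_rotation hμ hH.continuous,
    integral_comp_rotation hμ hH'.continuous] at h
  exact h.unique (hasDerivAt_const _ _)

-- Stein's lemma: the previous identity for `H (x, y) = L y • g x`.
lemma integral_dual_smul_eq_integral_fderiv [CompleteSpace F] (hμ : μ[id] = 0) {g : E → F}
    {g' : E → E →L[ℝ] F} (hg : HasExpGrowth g) (hg' : HasExpGrowth g')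
    (hderiv : ∀ x, HasFDerivAt g (g' x) x) (L : StrongDual ℝ E) :
    ∫ x, L x • g x ∂μ = ∫ x, g' x (∫ y, L y • y ∂μ) ∂μ := by
  have hL₁ : HasExpGrowth fun x : E × E => L x.1 := .const_clm_apply L (by fun_prop)
  have hL₂ : HasExpGrowth fun x : E × E => L x.2 := .const_clm_apply L (by fun_prop)
  have hleft : HasExpGrowth fun x : E × E => L x.1 • g x.1 := hL₁.smul hg.comp_fst
  have hright : HasExpGrowth fun x : E × E => L x.2 • g' x.1 x.2 :=
    hL₂.smul (hg'.comp_fst.clm_apply (by fun_prop))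
  have hderivH (x : E × E) : HasFDerivAt (fun x : E × E => L x.2 • g x.1)
      (L x.2 • (g' x.1).comp (.fst ℝ E E) + (L.comp (.snd ℝ E E)).smulRight (g x.1)) x :=
    (L.comp (.snd ℝ E E)).hasFDerivAt.smul ((hderiv x.1).comp x hasFDerivAt_fst)
  have key := integral_fderiv_rotation_eq_zero hμ (hL₂.smul hg.comp_fst)
    (by simpa [sub_eq_add_neg] using hright.sub hleft) hderivH
  have hinner (x : E) : ∫ y, L y • g' x y ∂μ = g' x (∫ y, L y • y ∂μ) := by
    simpa using
      (g' x).integral_comp_comm ((HasExpGrowth.const_clm_apply L .id).smul .id).integrable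
  have hsub : ∫ x, (L x.2 • g' x.1 x.2 - L x.1 • g x.1) ∂(μ.prod μ) = 0 := by
    simpa [sub_eq_add_neg] using key
  rw [integral_sub hright.integrable hleft.integrable, sub_eq_zero,
    integral_prod _ hright.integrable] at hsub
  simpa [integral_fun_fst (f := fun x => L x • g x), hinner] using hsub.symm

end Rotation

section StandardGaussian

variable {k : ℕ}

instance isGaussian_gaussMeasure : IsGaussian (gaussMeasure k) := by
  rw [← isGaussian_map_equiv_iff (PiLp.continuousLinearEquiv 2 ℝ fun _ : Fin k => ℝ).symm]
  have h := map_pi_eq_stdGaussian (ι := Fin k)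
  exact h ▸ isGaussian_stdGaussian

lemma integral_eval_gaussMeasure (i : Fin k) : ∫ x, x i ∂(gaussMeasure k) = 0 :=
  integral_eval.trans integral_id_gaussianReal

lemma integral_id_gaussMeasure : ∫ x, id x ∂(gaussMeasure k) = 0 := by
  ext i
  simp only [id_eq, Pi.zero_apply]
  rw [eval_integral fun i => (HasExpGrowth.proj i).integrable, integral_eval_gaussMeasure]

lemma integral_eval_mul_eval_gaussMeasure (i j : Fin k) :
    ∫ y, y i * y j ∂(gaussMeasure k) = Pi.single (M := fun _ => ℝ) i 1 j := by
  rcases eq_or_ne i j with rfl | hij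
  · have hvar : ∫ y, y i ^ 2 ∂(gaussMeasure k) = 1 := by
      rw [gaussMeasure, integral_comp_eval (X := fun _ => ℝ) (f := fun s => s ^ 2) (by fun_prop),
        ← variance_of_integral_eq_zero aemeasurable_id' integral_id_gaussianReal,
        variance_fun_id_gaussianReal, NNReal.coe_one]
    simpa [sq] using hvar
  · have hindep : iIndepFun (fun (i : Fin k) (y : Fin k → ℝ) => y i) (gaussMeasure k) :=
      iIndepFun_pi (X := fun _ s => s) fun _ => aemeasurable_id
    rw [(hindep.indepFun hij).integral_fun_mul_eq_mul_integral
      (HasExpGrowth.proj i).integrable.aestronglyMeasurable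
      (HasExpGrowth.proj j).integrable.aestronglyMeasurable]
    simp [hij.symm, integral_eval_gaussMeasure]

lemma integral_eval_smul_gaussMeasure (i : Fin k) :
    ∫ y, y i • y ∂(gaussMeasure k) = Pi.single i 1 := by
  ext j
  have hint (j : Fin k) : HasExpGrowth fun y : Fin k → ℝ => y i * y j := by fun_prop
  rw [eval_integral (f := fun y => y i • y) fun j => (hint j).integrable]
  exact integral_eval_mul_eval_gaussMeasure i j

lemma integral_eval_smul_eq_integral_fderiv {F : Type*} [NormedAddCommGroup F] [NormedSpace ℝ F]
    [CompleteSpace F] {g : (Fin k → ℝ) → F} {g' : (Fin k → ℝ) → (Fin k → ℝ) →L[ℝ] F}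
    (hg : HasExpGrowth g) (hg' : HasExpGrowth g') (hderiv : ∀ x, HasFDerivAt g (g' x) x)
    (i : Fin k) :
    ∫ x, x i • g x ∂(gaussMeasure k) = ∫ x, g' x (Pi.single i 1) ∂(gaussMeasure k) := by
  simpa [integral_eval_smul_gaussMeasure] using
    integral_dual_smul_eq_integral_fderiv integral_id_gaussMeasure hg hg' hderiv
      (ContinuousLinearMap.proj i)

lemma map_sum_mul_gaussMeasure (u : Fin k → ℝ) :
    (gaussMeasure k).map (fun y => ∑ j, u j * y j) = gaussianReal 0 (∑ j, u j ^ 2).toNNReal := by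
  have hcoord (j : Fin k) : Var[fun s => u j * s; gaussianReal 0 1] = u j ^ 2 := by
    rw [variance_const_mul (u j) fun s => s, variance_fun_id_gaussianReal, NNReal.coe_one, mul_one]
  have hvar : Var[∑ j, fun y => u j * y j; gaussMeasure k] = ∑ j, u j ^ 2 := by
    rw [gaussMeasure, variance_sum_pi (X := fun j s => u j * s)
      fun j => (IsGaussian.memLp_two_id (μ := gaussianReal 0 1)).const_mul (u j)]
    simp only [hcoord]
  have hmean : ∫ y, ∑ j, u j * y j ∂(gaussMeasure k) = 0 := by
    have hint (j : Fin k) : HasExpGrowth fun y : Fin k → ℝ => u j * y j := by fun_prop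
    rw [integral_finsetSum _ fun j _ => (hint j).integrable]
    simp [integral_const_mul, integral_eval_gaussMeasure]
  have h := IsGaussian.map_eq_gaussianReal (μ := gaussMeasure k)
    (∑ j, u j • ContinuousLinearMap.proj (R := ℝ) (φ := fun _ : Fin k => ℝ) j)
  have hcoe : ⇑(∑ j, u j • ContinuousLinearMap.proj (R := ℝ) (φ := fun _ : Fin k => ℝ) j)
      = fun y => ∑ j, u j * y j := by ext y; simp
  rwa [hcoe, hmean, ← Finset.sum_fn, hvar, Finset.sum_fn] at h

lemma integral_abs_sum_mul_rpow_gaussMeasure {q : ℝ} (hq : 0 ≤ q) (u : Fin k → ℝ) :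
    ∫ y, |∑ j, u j * y j| ^ q ∂(gaussMeasure k)
      = √(∑ j, u j ^ 2) ^ q * ∫ s, |s| ^ q ∂(gaussianReal 0 1) := by
  have hcont : Continuous fun s : ℝ => |s| ^ q := by fun_prop (disch := exact hq)
  have hscale : gaussianReal 0 (∑ j, u j ^ 2).toNNReal
      = (gaussianReal 0 1).map (√(∑ j, u j ^ 2) * ·) := by
    rw [gaussianReal_map_const_mul, mul_zero, mul_one]
    congr 1
    ext
    simp [Real.sq_sqrt, Finset.sum_nonneg, sq_nonneg]
  calc ∫ y, |∑ j, u j * y j| ^ q ∂(gaussMeasure k)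
      = ∫ s, |s| ^ q ∂((gaussMeasure k).map fun y => ∑ j, u j * y j) :=
        (integral_map (Measurable.aemeasurable (by fun_prop)) hcont.aestronglyMeasurable).symm
    _ = ∫ s, |√(∑ j, u j ^ 2) * s| ^ q ∂(gaussianReal 0 1) := by
        rw [map_sum_mul_gaussMeasure, hscale,
          integral_map (by fun_prop) hcont.aestronglyMeasurable]
    _ = √(∑ j, u j ^ 2) ^ q * ∫ s, |s| ^ q ∂(gaussianReal 0 1) := by
        simp only [abs_mul, abs_of_nonneg (Real.sqrt_nonneg _),
          mul_rpow (Real.sqrt_nonneg _) (abs_nonneg _), integral_const_mul]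

end StandardGaussian

section OrnsteinUhlenbeck

open MvPolynomial

variable {σ R : Type*} [CommRing R]

lemma pderiv_pderiv_comm (i j : σ) (P : MvPolynomial σ R) :
    pderiv i (pderiv j P) = pderiv j (pderiv i P) := by
  classical
  have h : ⁅pderiv (R := R) i, pderiv (R := R) j⁆ = 0 := by
    refine derivation_ext fun l => ?_
    simp only [Derivation.commutator_apply, pderiv_X, Pi.single_apply]
    split_ifs <;> simp
  simpa [Derivation.commutator_apply, sub_eq_zero] using congrArg (fun D => D P) h

variable [Fintype σ]

/-- The Ornstein–Uhlenbeck operator `Δ - x · ∇` on polynomials, the generator of the semigroup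
whose `L^p` theory controls the gradient. -/
noncomputable def ouOp : MvPolynomial σ R →ₗ[R] MvPolynomial σ R :=
  ∑ j, ((pderiv j).toLinearMap ∘ₗ (pderiv j).toLinearMap -
    LinearMap.mulLeft R (X j) ∘ₗ (pderiv j).toLinearMap)

lemma ouOp_apply (P : MvPolynomial σ R) :
    ouOp P = ∑ j, (pderiv j (pderiv j P) - X j * pderiv j P) := by
  simp [ouOp, LinearMap.sum_apply]

lemma ouOp_pderiv (i : σ) (P : MvPolynomial σ R) :
    ouOp (pderiv i P) = pderiv i (ouOp P) + pderiv i P := by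
  classical
  simp only [ouOp_apply, map_sum, map_sub, Derivation.leibniz, pderiv_X, smul_eq_mul]
  rw [← sub_eq_iff_eq_add', ← Finset.sum_sub_distrib, Finset.sum_eq_single i]
  · simp
  · intro j _ hj
    simp [hj, pderiv_pderiv_comm i j]
  · simp

lemma map_ouOp {S : Type*} [CommRing S] (f : R →+* S) (P : MvPolynomial σ R) :
    map f (ouOp P) = ouOp (map f P) := by
  simp only [ouOp_apply, map_sum, map_sub, map_mul, map_X, pderiv_map]

lemma ouOp_add_nsmul_of_isHomogeneous {m : ℕ} {P : MvPolynomial σ R} (hP : P.IsHomogeneous m) :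
    ouOp P + m • P = ∑ j, pderiv j (pderiv j P) := by
  rw [ouOp_apply, Finset.sum_sub_distrib, hP.sum_X_mul_pderiv, sub_add_cancel]

-- The terms of degree `d + 1` cancel because the Laplacian lowers the degree.
lemma totalDegree_ouOp_add_nsmul_le {d : ℕ} {P : MvPolynomial σ R} (hP : P.totalDegree ≤ d + 1) :
    (ouOp P + (d + 1) • P).totalDegree ≤ d := by
  have hcomp (m : ℕ) (hm : m ≤ d + 1) : (ouOp (homogeneousComponent m P) +
      (d + 1) • homogeneousComponent m P).totalDegree ≤ d := by
    have hhom := homogeneousComponent_isHomogeneous m P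
    have hsplit : ouOp (homogeneousComponent m P) + (d + 1) • homogeneousComponent m P =
        ∑ j, pderiv j (pderiv j (homogeneousComponent m P)) +
          (d + 1 - m) • homogeneousComponent m P := by
      rw [← ouOp_add_nsmul_of_isHomogeneous hhom, add_assoc, ← add_smul, Nat.add_sub_cancel' hm]
    rw [hsplit]
    refine (totalDegree_add _ _).trans (max_le ?_ ?_)
    · exact totalDegree_finsetSum_le fun j _ => hhom.pderiv.pderiv.totalDegree_le.trans (by lia)
    · rcases hm.eq_or_lt with rfl | hlt
      · simp
      · exact (totalDegree_smul_le _ _).trans (hhom.totalDegree_le.trans (by lia))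
  have hsum : ouOp P + (d + 1) • P = ∑ m ∈ Finset.range (P.totalDegree + 1),
      (ouOp (homogeneousComponent m P) + (d + 1) • homogeneousComponent m P) := by
    rw [Finset.sum_add_distrib, ← map_sum, ← Finset.smul_sum, sum_homogeneousComponent]
  rw [hsum]
  exact totalDegree_finsetSum_le fun m hm =>
    hcomp m ((Finset.mem_range_succ_iff.1 hm).trans hP)

lemma exists_ouOp_eigen_decomposition {K : Type*} [Field K] [CharZero K] {d : ℕ}
    {P : MvPolynomial σ K} (hP : P.totalDegree ≤ d) :
    ∃ F : ℕ → MvPolynomial σ K, (∀ n, ouOp (F n) = -(n : K) • F n) ∧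
      P = ∑ n ∈ Finset.range (d + 1), F n := by
  induction d generalizing P with
  | zero =>
    have hconst := totalDegree_eq_zero_iff_eq_C.1 (Nat.le_zero.1 hP)
    refine ⟨Pi.single 0 P, fun n => ?_, by simp⟩
    rcases eq_or_ne n 0 with rfl | hn
    · rw [hconst]; simp [ouOp_apply]
    · simp [hn]
  | succ d ih =>
    obtain ⟨G, hG, hGsum⟩ := ih (totalDegree_ouOp_add_nsmul_le hP)
    set H : ℕ → MvPolynomial σ K := fun n => ((d + 1 : K) - n)⁻¹ • G n with hH
    have hHeigen (n : ℕ) : ouOp (H n) = -(n : K) • H n := by rw [hH, map_smul, hG, smul_comm]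
    set S := ∑ n ∈ Finset.range (d + 1), H n with hS
    have hSG : ouOp S + (d + 1) • S = ouOp P + (d + 1) • P := by
      rw [hGsum, hS, map_sum, Finset.smul_sum, ← Finset.sum_add_distrib]
      refine Finset.sum_congr rfl fun n hn => ?_
      have hne : (d + 1 : K) - n ≠ 0 := by
        rw [sub_ne_zero]
        exact_mod_cast (Finset.mem_range.1 hn).ne'
      have hone : -(n : K) * ((d + 1 : K) - n)⁻¹ + (d + 1) * ((d + 1 : K) - n)⁻¹ = 1 := by
        field_simp
        ring
      rw [hHeigen, hH, ← Nat.cast_smul_eq_nsmul K, smul_smul, smul_smul, ← add_smul]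
      push_cast
      rw [hone, one_smul]
    refine ⟨Function.update H (d + 1) (P - S), fun n => ?_, ?_⟩
    · rcases eq_or_ne n (d + 1) with rfl | hn
      · rw [Function.update_self, map_sub, neg_smul, Nat.cast_smul_eq_nsmul, smul_sub]
        linear_combination -hSG
      · rw [Function.update_of_ne hn, hHeigen]
    · rw [Finset.sum_range_succ, Finset.sum_update_of_notMem (by simp), ← hS,
        Function.update_self, add_sub_cancel]

end OrnsteinUhlenbeck

lemma hasFDerivAt_eval {𝕜 E A σ : Type*} [NontriviallyNormedField 𝕜] [NormedAddCommGroup E]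
    [NormedSpace 𝕜 E] [NormedCommRing A] [NormedAlgebra 𝕜 A] [Fintype σ] (P : MvPolynomial σ A)
    {f : E → σ → A} {f' : σ → E →L[𝕜] A} {x : E}
    (hf : ∀ j, HasFDerivAt (fun y => f y j) (f' j) x) :
    HasFDerivAt (fun y => MvPolynomial.eval (f y) P)
      (∑ j, MvPolynomial.eval (f x) (MvPolynomial.pderiv j P) • f' j) x := by
  classical
  induction P using MvPolynomial.induction_on with
  | C a =>
    simp only [MvPolynomial.eval_C]
    refine (hasFDerivAt_const a x).congr_fderiv (ContinuousLinearMap.ext fun v => ?_)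
    simp
  | add P Q hP hQ =>
    simp only [map_add]
    refine (hP.fun_add hQ).congr_fderiv (ContinuousLinearMap.ext fun v => ?_)
    simp [add_mul, Finset.sum_add_distrib]
  | mul_X P i hP =>
    simp only [map_mul, MvPolynomial.eval_X]
    refine (hP.fun_mul (hf i)).congr_fderiv (ContinuousLinearMap.ext fun v => ?_)
    simp [Derivation.leibniz, Pi.single_apply, add_mul, mul_assoc, Finset.sum_add_distrib,
      Finset.mul_sum, apply_ite, ite_mul]

section RegularizedNorm

variable {E F : Type*} [NormedAddCommGroup E] [NormedAddCommGroup F] {ε : ℝ}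

@[fun_prop]
lemma HasExpGrowth.norm_sq_add_rpow {f : E → F} (hf : HasExpGrowth f) (hε : 0 < ε) (s : ℝ) :
    HasExpGrowth fun x => (‖f x‖ ^ 2 + ε) ^ s :=
  HasExpGrowth.rpow_const_of_le (by fun_prop) hε (fun _ => by simp) s

variable [InnerProductSpace ℝ F]

@[fun_prop]
lemma HasExpGrowth.inner {f g : E → F} (hf : HasExpGrowth f) (hg : HasExpGrowth g) :
    HasExpGrowth fun x => inner ℝ (f x) (g x) :=
  (hf.norm.mul hg.norm).of_norm_le (hf.continuous.inner hg.continuous) fun x => by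
    simpa using norm_inner_le_norm (𝕜 := ℝ) (f x) (g x)

variable [NormedSpace ℝ E]

lemma hasFDerivAt_norm_sq_add_rpow {f : E → F} {f' : E →L[ℝ] F} {x : E}
    (hf : HasFDerivAt f f' x) (hε : 0 < ε) (s : ℝ) :
    HasFDerivAt (fun y => (‖f y‖ ^ 2 + ε) ^ s)
      ((2 * s * (‖f x‖ ^ 2 + ε) ^ (s - 1)) • (innerSL ℝ (f x)).comp f') x := by
  refine ((hf.norm_sq.add_const ε).rpow_const (p := s) (.inl (by positivity))).congr_fderiv ?_
  rw [← Nat.cast_smul_eq_nsmul ℝ, smul_smul]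
  congr 1
  push_cast
  ring

lemma hasDerivAt_norm_sq_add_rpow {f : ℝ → F} {f' : F} {r : ℝ} (hf : HasDerivAt f f' r)
    (hε : 0 < ε) (s : ℝ) :
    HasDerivAt (fun t => (‖f t‖ ^ 2 + ε) ^ s)
      (2 * s * (‖f r‖ ^ 2 + ε) ^ (s - 1) * inner ℝ (f r) f') r := by
  simpa using (hasFDerivAt_norm_sq_add_rpow hf.hasFDerivAt hε s).hasDerivAt

end RegularizedNorm

section Dissipativity

open MvPolynomial ComplexConjugate

variable {k : ℕ}

/-- Evaluation of a polynomial with complex coefficients at a real point. Complex coefficients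
accommodate the semigroup at complex times. -/
noncomputable def evalOfReal {σ : Type*} (x : σ → ℝ) : MvPolynomial σ ℂ →ₐ[ℂ] ℂ :=
  aeval fun i => (x i : ℂ)

lemma evalOfReal_eq_eval {σ : Type*} (x : σ → ℝ) (Q : MvPolynomial σ ℂ) :
    evalOfReal x Q = eval (fun i => (x i : ℂ)) Q := by
  rw [evalOfReal, ← coe_aeval_eq_eval, RingHom.coe_coe]

@[simp]
lemma evalOfReal_X {σ : Type*} (x : σ → ℝ) (i : σ) : evalOfReal x (X i) = x i :=
  aeval_X _ i

@[fun_prop]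
lemma HasExpGrowth.evalOfReal {E σ : Type*} [NormedAddCommGroup E] [Fintype σ] {f : E → σ → ℝ}
    (hf : HasExpGrowth f) (Q : MvPolynomial σ ℂ) : HasExpGrowth fun x => evalOfReal (f x) Q := by
  have := fun i => hf.apply i
  simp only [evalOfReal_eq_eval]
  fun_prop

lemma hasFDerivAt_evalOfReal (Q : MvPolynomial (Fin k) ℂ) (x : Fin k → ℝ) :
    HasFDerivAt (fun y : Fin k → ℝ => evalOfReal y Q)
      (∑ j, evalOfReal x (pderiv j Q) •
        Complex.ofRealCLM.comp (ContinuousLinearMap.proj j)) x := by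
  simp only [evalOfReal_eq_eval]
  exact hasFDerivAt_eval Q fun j : Fin k =>
    Complex.ofRealCLM.hasFDerivAt.comp x (hasFDerivAt_apply j x)

lemma integral_ofReal_mul_mul_eval_pderiv {G : (Fin k → ℝ) → ℂ}
    {G' : (Fin k → ℝ) → (Fin k → ℝ) →L[ℝ] ℂ} (hG : HasExpGrowth G) (hG' : HasExpGrowth G')
    (hderiv : ∀ x, HasFDerivAt G (G' x) x) (Q : MvPolynomial (Fin k) ℂ) (j : Fin k) :
    ∫ x, (x j : ℂ) * (G x * evalOfReal x Q) ∂(gaussMeasure k) =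
      ∫ x, (G x * evalOfReal x (pderiv j Q) +
        G' x (Pi.single j 1) * evalOfReal x Q) ∂(gaussMeasure k) := by
  have h := integral_eval_smul_eq_integral_fderiv (i := j)
    (g := fun x => G x * evalOfReal x Q)
    (g' := fun x => G x • ∑ j, evalOfReal x (pderiv j Q) •
        Complex.ofRealCLM.comp (ContinuousLinearMap.proj j) +
      evalOfReal x Q • G' x)
    (by fun_prop) (by fun_prop) fun x => (hderiv x).fun_mul (hasFDerivAt_evalOfReal Q x)
  simpa [Pi.single_apply, apply_ite, mul_comm] using h

lemma integral_mul_eval_ouOp {G : (Fin k → ℝ) → ℂ} {G' : (Fin k → ℝ) → (Fin k → ℝ) →L[ℝ] ℂ}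
    (hG : HasExpGrowth G) (hG' : HasExpGrowth G') (hderiv : ∀ x, HasFDerivAt G (G' x) x)
    (Q : MvPolynomial (Fin k) ℂ) :
    ∫ x, G x * evalOfReal x (ouOp Q) ∂(gaussMeasure k) =
      -∫ x, ∑ j, G' x (Pi.single j 1) * evalOfReal x (pderiv j Q)
        ∂(gaussMeasure k) := by
  have hGe (P : MvPolynomial (Fin k) ℂ) :
      HasExpGrowth fun x : Fin k → ℝ => G x * evalOfReal x P := by fun_prop
  have hxGe (j : Fin k) : HasExpGrowth fun x : Fin k → ℝ =>
      (x j : ℂ) * (G x * evalOfReal x (pderiv j Q)) := by fun_prop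
  have hG'e (j : Fin k) : HasExpGrowth fun x : Fin k → ℝ =>
      G' x (Pi.single j 1) * evalOfReal x (pderiv j Q) :=
    (hG'.clm_apply (.const _)).mul (by fun_prop)
  calc ∫ x, G x * evalOfReal x (ouOp Q) ∂(gaussMeasure k)
      = ∫ x, ∑ j, (G x * evalOfReal x (pderiv j (pderiv j Q)) -
          (x j : ℂ) * (G x * evalOfReal x (pderiv j Q))) ∂(gaussMeasure k) := by
        simp only [ouOp_apply, map_sum, map_sub, map_mul, evalOfReal_X, Finset.mul_sum, mul_sub,
          mul_left_comm]
    _ = ∑ j, -∫ x, G' x (Pi.single j 1) * evalOfReal x (pderiv j Q)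
          ∂(gaussMeasure k) := by
        rw [integral_finsetSum _ fun j _ => ((hGe _).sub (hxGe j)).integrable]
        refine Finset.sum_congr rfl fun j _ => ?_
        rw [integral_sub (hGe _).integrable (hxGe j).integrable,
          integral_ofReal_mul_mul_eval_pderiv hG hG' hderiv,
          integral_add (hGe _).integrable (hG'e j).integrable, sub_add_cancel_left]
    _ = -∫ x, ∑ j, G' x (Pi.single j 1) * evalOfReal x (pderiv j Q)
          ∂(gaussMeasure k) := by
        rw [integral_finsetSum _ fun j _ => (hG'e j).integrable, Finset.sum_neg_distrib]

/-- The slope `κ` such that `{z | κ |Im z| ≤ Re z}` is the sector of complex times at which the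
Ornstein–Uhlenbeck semigroup contracts `L^p`. -/
noncomputable def sectorSlope (p : ℝ) : ℝ :=
  |p - 2| / (2 * √(p - 1))

lemma sectorSlope_nonneg (p : ℝ) : 0 ≤ sectorSlope p := by
  unfold sectorSlope
  positivity

-- In the coordinates `w = a + b i` this is a quadratic form in `(a, b)`, and `hz` says that its
-- discriminant is nonpositive.
lemma re_mul_norm_sq_add_nonneg {p : ℝ} (hp : 1 < p) {z : ℂ}
    (hz : sectorSlope p * |z.im| ≤ z.re) (w : ℂ) :
    0 ≤ z.re * ‖w‖ ^ 2 + (p - 2) * w.re * (z * w).re := by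
  have hsqrt : 0 < √(p - 1) := Real.sqrt_pos.2 (by linarith)
  have hsq : √(p - 1) ^ 2 = p - 1 := Real.sq_sqrt (by linarith)
  have hre : 0 ≤ z.re := (mul_nonneg (sectorSlope_nonneg p) (abs_nonneg _)).trans hz
  have hslope : |p - 2| * |z.im| ≤ 2 * √(p - 1) * z.re := by
    rwa [sectorSlope, div_mul_eq_mul_div, div_le_iff₀' (by positivity)] at hz
  have hcross : (p - 2) * z.im * (w.re * w.im) ≤ 2 * √(p - 1) * z.re * (|w.re| * |w.im|) := by
    refine (le_abs_self _).trans ?_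
    rw [abs_mul, abs_mul, abs_mul]
    gcongr
  have hsquare : 0 ≤ z.re * (√(p - 1) * |w.re| - |w.im|) ^ 2 := by positivity
  calc 0 ≤ z.re * (√(p - 1) * |w.re| - |w.im|) ^ 2 + (2 * √(p - 1) * z.re * (|w.re| * |w.im|) -
        (p - 2) * z.im * (w.re * w.im)) := by linarith
    _ = z.re * (√(p - 1) ^ 2 * |w.re| ^ 2 + |w.im| ^ 2) - (p - 2) * z.im * (w.re * w.im) := by
        ring
    _ = z.re * ‖w‖ ^ 2 + (p - 2) * w.re * (z * w).re := by
        rw [hsq, sq_abs, sq_abs, ← Complex.normSq_eq_norm_sq, Complex.normSq_apply, Complex.mul_re]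
        ring

lemma re_mul_mul_nonneg {p ε : ℝ} (hp : 1 < p) (hε : 0 < ε) {z : ℂ}
    (hz : sectorSlope p * |z.im| ≤ z.re) (v u : ℂ) :
    0 ≤ (z * (((‖v‖ ^ 2 + ε) ^ (p / 2 - 1) • conj u +
      (2 * (p / 2 - 1) * (‖v‖ ^ 2 + ε) ^ (p / 2 - 1 - 1) * inner ℝ v u) • conj v) * u)).re := by
  set S := ‖v‖ ^ 2 + ε
  have hSpos : 0 < S := by positivity
  have hre : 0 ≤ z.re := (mul_nonneg (sectorSlope_nonneg p) (abs_nonneg _)).trans hz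
  have hnorm : ‖conj v * u‖ ^ 2 ≤ S * ‖u‖ ^ 2 := by
    rw [norm_mul, RCLike.norm_conj, mul_pow]
    gcongr
    exact le_add_of_nonneg_right hε.le
  have hform := re_mul_norm_sq_add_nonneg hp hz (conj v * u)
  have hcoord : z * ((S ^ (p / 2 - 1) • conj u +
        (2 * (p / 2 - 1) * S ^ (p / 2 - 1 - 1) * inner ℝ v u) • conj v) * u) =
      ((S ^ (p / 2 - 1) * ‖u‖ ^ 2 : ℝ) : ℂ) * z +
        (((p - 2) * S ^ (p / 2 - 1 - 1) * (conj v * u).re : ℝ) : ℂ) * (z * (conj v * u)) := by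
    rw [Complex.inner, mul_comm u (conj v), ← Complex.normSq_eq_norm_sq]
    simp only [Complex.real_smul]
    push_cast
    rw [Complex.normSq_eq_conj_mul_self]
    ring
  rw [hcoord, Complex.add_re, Complex.re_ofReal_mul, Complex.re_ofReal_mul]
  calc 0 ≤ S ^ (p / 2 - 1 - 1) *
        (z.re * ‖conj v * u‖ ^ 2 + (p - 2) * (conj v * u).re * (z * (conj v * u)).re) := by
        positivity
    _ ≤ S ^ (p / 2 - 1 - 1) *
        (z.re * (S * ‖u‖ ^ 2) + (p - 2) * (conj v * u).re * (z * (conj v * u)).re) := by gcongr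
    _ = S ^ (p / 2 - 1) * ‖u‖ ^ 2 * z.re +
        (p - 2) * S ^ (p / 2 - 1 - 1) * (conj v * u).re * (z * (conj v * u)).re := by
        rw [show S ^ (p / 2 - 1) = S ^ (p / 2 - 1 - 1) * S by
          rw [← rpow_add_one hSpos.ne', sub_add_cancel]]
        ring

@[fun_prop]
lemma HasExpGrowth.conj {E : Type*} [NormedAddCommGroup E] {f : E → ℂ} (hf : HasExpGrowth f) :
    HasExpGrowth fun x => conj (f x) :=
  hf.const_clm_apply (Complex.conjCLE : ℂ →L[ℝ] ℂ)

lemma hasFDerivAt_rpow_smul_conj {E : Type*} [NormedAddCommGroup E] [NormedSpace ℝ E] {ε : ℝ}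
    (hε : 0 < ε) (s : ℝ) {f : E → ℂ} {f' : E →L[ℝ] ℂ} {x : E} (hf : HasFDerivAt f f' x) :
    HasFDerivAt (fun y => (‖f y‖ ^ 2 + ε) ^ s • conj (f y))
      ((‖f x‖ ^ 2 + ε) ^ s • (Complex.conjCLE : ℂ →L[ℝ] ℂ).comp f' +
        ((2 * s * (‖f x‖ ^ 2 + ε) ^ (s - 1)) • (innerSL ℝ (f x)).comp f').smulRight
          (conj (f x))) x :=
  (hasFDerivAt_norm_sq_add_rpow hf hε s).fun_smul
    ((Complex.conjCLE : ℂ →L[ℝ] ℂ).hasFDerivAt.comp x hf)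

lemma hasExpGrowth_fderiv_rpow_smul_conj {E : Type*} [NormedAddCommGroup E] [NormedSpace ℝ E]
    {ε : ℝ} (hε : 0 < ε) (s : ℝ) {f : E → ℂ} {f' : E → E →L[ℝ] ℂ} (hf : HasExpGrowth f)
    (hf' : HasExpGrowth f') :
    HasExpGrowth fun x => (‖f x‖ ^ 2 + ε) ^ s • (Complex.conjCLE : ℂ →L[ℝ] ℂ).comp (f' x) +
      ((2 * s * (‖f x‖ ^ 2 + ε) ^ (s - 1)) • (innerSL ℝ (f x)).comp (f' x)).smulRight
        (conj (f x)) := by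
  have hinner : HasExpGrowth fun x => (innerSL ℝ (f x)).comp (f' x) :=
    ((hf.const_clm_apply (innerSL ℝ)).const_clm_apply
      (ContinuousLinearMap.compL ℝ E ℂ ℝ)).clm_apply hf'
  have hscaled : HasExpGrowth fun x =>
      (2 * s * (‖f x‖ ^ 2 + ε) ^ (s - 1)) • (innerSL ℝ (f x)).comp (f' x) :=
    ((HasExpGrowth.const (2 * s)).mul (hf.norm_sq_add_rpow hε (s - 1))).smul hinner
  exact ((hf.norm_sq_add_rpow hε s).smul
      (hf'.const_clm_apply (ContinuousLinearMap.compL ℝ E ℂ ℂ _))).add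
    ((hscaled.const_clm_apply (ContinuousLinearMap.smulRightL ℝ E ℂ)).clm_apply hf.conj)

lemma integral_rpow_smul_conj_mul_ouOp {ε : ℝ} (hε : 0 < ε) (s : ℝ)
    (Q : MvPolynomial (Fin k) ℂ) :
    ∫ x, (‖evalOfReal x Q‖ ^ 2 + ε) ^ s • conj (evalOfReal x Q) * evalOfReal x (ouOp Q)
        ∂(gaussMeasure k) =
      -∫ x, ∑ j, ((‖evalOfReal x Q‖ ^ 2 + ε) ^ s • conj (evalOfReal x (pderiv j Q)) +
        (2 * s * (‖evalOfReal x Q‖ ^ 2 + ε) ^ (s - 1) *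
          inner ℝ (evalOfReal x Q) (evalOfReal x (pderiv j Q))) • conj (evalOfReal x Q)) *
        evalOfReal x (pderiv j Q) ∂(gaussMeasure k) := by
  have hQ : HasExpGrowth fun x : Fin k → ℝ => evalOfReal x Q := by fun_prop
  have h := integral_mul_eval_ouOp
    ((hQ.norm_sq_add_rpow hε s).smul hQ.conj)
    (hasExpGrowth_fderiv_rpow_smul_conj hε s hQ (by fun_prop))
    (fun x => hasFDerivAt_rpow_smul_conj hε s (hasFDerivAt_evalOfReal Q x)) Q
  simpa [-Complex.inner, Pi.single_apply, apply_ite] using h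

lemma integral_rpow_mul_inner_ouOp_nonpos {p ε : ℝ} (hp : 1 < p) (hε : 0 < ε) {z : ℂ}
    (hz : sectorSlope p * |z.im| ≤ z.re) (Q : MvPolynomial (Fin k) ℂ) :
    ∫ x, (‖evalOfReal x Q‖ ^ 2 + ε) ^ (p / 2 - 1) *
      inner ℝ (evalOfReal x Q) (z * evalOfReal x (ouOp Q)) ∂(gaussMeasure k) ≤ 0 := by
  have hint : HasExpGrowth fun x : Fin k → ℝ => z *
      ((‖evalOfReal x Q‖ ^ 2 + ε) ^ (p / 2 - 1) • conj (evalOfReal x Q) *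
        evalOfReal x (ouOp Q)) := by fun_prop (disch := assumption)
  have hint' : HasExpGrowth fun x : Fin k → ℝ => z *
      ∑ j, ((‖evalOfReal x Q‖ ^ 2 + ε) ^ (p / 2 - 1) • conj (evalOfReal x (pderiv j Q)) +
        (2 * (p / 2 - 1) * (‖evalOfReal x Q‖ ^ 2 + ε) ^ (p / 2 - 1 - 1) *
          inner ℝ (evalOfReal x Q) (evalOfReal x (pderiv j Q))) • conj (evalOfReal x Q)) *
        evalOfReal x (pderiv j Q) := by fun_prop (disch := assumption)
  have hdirichlet := congrArg (fun c => (z * c).re)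
    (integral_rpow_smul_conj_mul_ouOp (k := k) hε (p / 2 - 1) Q)
  simp only [mul_neg, Complex.neg_re, ← integral_const_mul] at hdirichlet
  rw [← RCLike.re_eq_complex_re, ← integral_re hint.integrable, ← integral_re hint'.integrable]
    at hdirichlet
  calc ∫ x, (‖evalOfReal x Q‖ ^ 2 + ε) ^ (p / 2 - 1) *
        inner ℝ (evalOfReal x Q) (z * evalOfReal x (ouOp Q)) ∂(gaussMeasure k)
      = ∫ x, RCLike.re (z * ((‖evalOfReal x Q‖ ^ 2 + ε) ^ (p / 2 - 1) •
          conj (evalOfReal x Q) * evalOfReal x (ouOp Q))) ∂(gaussMeasure k) := by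
        refine integral_congr_ae (.of_forall fun x => ?_)
        simp only [Complex.inner, Complex.real_smul, ← Complex.re_ofReal_mul,
          RCLike.re_eq_complex_re]
        ring_nf
    _ ≤ 0 := by
        rw [hdirichlet]
        refine neg_nonpos.2 (integral_nonneg fun x => ?_)
        simp only [Pi.zero_apply, Finset.mul_sum, RCLike.re_eq_complex_re, Complex.re_sum]
        exact Finset.sum_nonneg fun j _ => re_mul_mul_nonneg hp hε hz _ _

end Dissipativity

section ExpSum

open Finset

/-- The exponential sum `∑_{n ≤ d} e^{-nz} c_n` with vector coefficients. When `c n` is the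
component of a polynomial in the `n`-th eigenspace of the Ornstein–Uhlenbeck operator, this is the
semigroup at the complex time `z`, and it makes sense for `Re z < 0` too. -/
noncomputable def expSum {V : Type*} [AddCommMonoid V] [Module ℂ V] (c : ℕ → V) (d : ℕ) (z : ℂ) :
    V :=
  ∑ n ∈ range (d + 1), Complex.exp (-n * z) • c n

@[simp]
lemma expSum_zero {V : Type*} [AddCommMonoid V] [Module ℂ V] (c : ℕ → V) (d : ℕ) :
    expSum c d 0 = ∑ n ∈ range (d + 1), c n := by
  simp [expSum]

lemma map_expSum {V W : Type*} [AddCommMonoid V] [Module ℂ V] [AddCommMonoid W] [Module ℂ W]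
    {L : Type*} [FunLike L V W] [LinearMapClass L ℂ V W] (T : L) (c : ℕ → V) (d : ℕ) (z : ℂ) :
    T (expSum c d z) = expSum (fun n => T (c n)) d z := by
  simp [expSum]

lemma hasDerivAt_expSum {V : Type*} [NormedAddCommGroup V] [NormedSpace ℂ V] (c : ℕ → V) (d : ℕ)
    (z : ℂ) : HasDerivAt (expSum c d) (expSum (fun n => -(n : ℂ) • c n) d z) z := by
  unfold expSum
  refine HasDerivAt.fun_sum fun n _ => ?_
  refine ((((hasDerivAt_id z).const_mul (-(n : ℂ))).cexp).smul_const (c n)).congr_deriv ?_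
  simp [smul_smul]

lemma ouOp_expSum {σ : Type*} [Fintype σ] {F : ℕ → MvPolynomial σ ℂ}
    (hF : ∀ n, ouOp (F n) = -(n : ℂ) • F n) (d : ℕ) (z : ℂ) :
    ouOp (expSum F d z) = expSum (fun n => -(n : ℂ) • F n) d z := by
  simp only [map_expSum, hF]

end ExpSum

section Contraction

variable {k d : ℕ} {F : ℕ → MvPolynomial (Fin k) ℂ} {z : ℂ}

lemma hasDerivAt_evalOfReal_expSum (hF : ∀ n, ouOp (F n) = -(n : ℂ) • F n) (z : ℂ)
    (x : Fin k → ℝ) (r : ℝ) :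
    HasDerivAt (fun r : ℝ => evalOfReal x (expSum F d (r * z)))
      (z * evalOfReal x (ouOp (expSum F d (r * z)))) r := by
  simp only [ouOp_expSum hF, map_expSum, map_smul]
  have h := (hasDerivAt_expSum (fun n => evalOfReal x (F n)) d (r * z)).comp (r : ℂ)
    ((hasDerivAt_id (r : ℂ)).mul_const z)
  refine h.comp_ofReal.congr_deriv ?_
  simp [mul_comm]

lemma hasExpGrowth_cexp_mul (a z : ℂ) : HasExpGrowth fun r : ℝ => Complex.exp (a * (r * z)) :=
  HasExpGrowth.cexp.comp_of_norm_le (by fun_prop) (a := 0) (b := ‖a‖ * ‖z‖) fun r => by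
    simp [mul_comm, mul_left_comm]

lemma hasExpGrowth_evalOfReal_expSum (F : ℕ → MvPolynomial (Fin k) ℂ) (d : ℕ) (z : ℂ) :
    HasExpGrowth fun y : ℝ × (Fin k → ℝ) => evalOfReal y.2 (expSum F d (y.1 * z)) := by
  simp only [map_expSum]
  unfold expSum
  exact .sum fun n => ((hasExpGrowth_cexp_mul _ z).comp_fst).smul (by fun_prop)

lemma hasDerivAt_integral_norm_sq_add_rpow {p ε : ℝ} (hε : 0 < ε)
    (hF : ∀ n, ouOp (F n) = -(n : ℂ) • F n) (d : ℕ) (z : ℂ) (r : ℝ) :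
    HasDerivAt (fun r : ℝ => ∫ x, (‖evalOfReal x (expSum F d (r * z))‖ ^ 2 + ε) ^ (p / 2)
        ∂(gaussMeasure k))
      (p * ∫ x, (‖evalOfReal x (expSum F d (r * z))‖ ^ 2 + ε) ^ (p / 2 - 1) *
        inner ℝ (evalOfReal x (expSum F d (r * z)))
          (z * evalOfReal x (ouOp (expSum F d (r * z)))) ∂(gaussMeasure k)) r := by
  have hf := hasExpGrowth_evalOfReal_expSum F d z
  have hf' := hasExpGrowth_evalOfReal_expSum (fun n => -(n : ℂ) • F n) d z
  simp only [← ouOp_expSum hF] at hf'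
  have h := HasExpGrowth.hasDerivAt_integral (μ := gaussMeasure k) (r := r)
    (f := fun r x => (‖evalOfReal x (expSum F d (r * z))‖ ^ 2 + ε) ^ (p / 2))
    (f' := fun r x => 2 * (p / 2) * (‖evalOfReal x (expSum F d (r * z))‖ ^ 2 + ε) ^ (p / 2 - 1) *
      inner ℝ (evalOfReal x (expSum F d (r * z)))
        (z * evalOfReal x (ouOp (expSum F d (r * z)))))
    (hf.norm_sq_add_rpow hε _)
    (((HasExpGrowth.const _).mul (hf.norm_sq_add_rpow hε _)).mul
      (hf.inner ((HasExpGrowth.const z).mul hf')))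
    fun r x => hasDerivAt_norm_sq_add_rpow (hasDerivAt_evalOfReal_expSum hF z x r) hε _
  simpa only [mul_div_cancel₀ p two_ne_zero, mul_assoc, integral_const_mul] using h

lemma integral_norm_sq_add_rpow_expSum_le {p ε : ℝ} (hp : 1 < p) (hε : 0 < ε)
    (hF : ∀ n, ouOp (F n) = -(n : ℂ) • F n) (d : ℕ) (hz : sectorSlope p * |z.im| ≤ z.re) :
    ∫ x, (‖evalOfReal x (expSum F d z)‖ ^ 2 + ε) ^ (p / 2) ∂(gaussMeasure k) ≤
      ∫ x, (‖evalOfReal x (expSum F d 0)‖ ^ 2 + ε) ^ (p / 2) ∂(gaussMeasure k) := by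
  have hanti := antitone_of_hasDerivAt_nonpos
    (fun r => hasDerivAt_integral_norm_sq_add_rpow (p := p) hε hF d z r) fun r =>
      mul_nonpos_of_nonneg_of_nonpos (by linarith)
        (integral_rpow_mul_inner_ouOp_nonpos hp hε hz _)
  simpa using hanti zero_le_one

lemma tendsto_integral_norm_sq_add_rpow {E F : Type*} [NormedAddCommGroup E] [NormedSpace ℝ E]
    [CompleteSpace E] [SecondCountableTopology E] [MeasurableSpace E] [BorelSpace E]
    [NormedAddCommGroup F] {μ : Measure E} [IsGaussian μ] {f : E → F} (hf : HasExpGrowth f)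
    {p : ℝ} (hp : 0 < p) :
    Filter.Tendsto (fun ε => ∫ x, (‖f x‖ ^ 2 + ε) ^ (p / 2) ∂μ) (nhdsWithin 0 (Set.Ioi 0))
      (nhds (∫ x, ‖f x‖ ^ p ∂μ)) := by
  refine tendsto_integral_filter_of_dominated_convergence
    (fun x => (‖f x‖ ^ 2 + 1) ^ (p / 2)) ?_ ?_ (hf.norm_sq_add_rpow one_pos _).integrable ?_
  · filter_upwards [self_mem_nhdsWithin] with ε hε
    exact (hf.norm_sq_add_rpow hε _).integrable.aestronglyMeasurable
  · filter_upwards [Ioo_mem_nhdsGT one_pos] with ε hε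
    refine .of_forall fun x => ?_
    have := hε.1
    rw [Real.norm_of_nonneg (by positivity)]
    gcongr
    exact hε.2.le
  · refine .of_forall fun x => ?_
    have hcont : Continuous fun ε : ℝ => (‖f x‖ ^ 2 + ε) ^ (p / 2) := by
      fun_prop (disch := positivity)
    have hzero : (‖f x‖ ^ 2 + 0) ^ (p / 2) = ‖f x‖ ^ p := by
      rw [add_zero, ← rpow_natCast, ← rpow_mul (norm_nonneg _), Nat.cast_ofNat,
        mul_div_cancel₀ p two_ne_zero]
    exact hzero ▸ (hcont.tendsto 0).mono_left (nhdsWithin_le_nhds (s := Set.Ioi 0))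

lemma integral_norm_expSum_rpow_le {p : ℝ} (hp : 1 < p) (hF : ∀ n, ouOp (F n) = -(n : ℂ) • F n)
    (d : ℕ) (hz : sectorSlope p * |z.im| ≤ z.re) :
    ∫ x, ‖evalOfReal x (expSum F d z)‖ ^ p ∂(gaussMeasure k) ≤
      ∫ x, ‖evalOfReal x (expSum F d 0)‖ ^ p ∂(gaussMeasure k) := by
  have hp0 : 0 < p := by linarith
  refine le_of_tendsto_of_tendsto (tendsto_integral_norm_sq_add_rpow (by fun_prop) hp0)
    (tendsto_integral_norm_sq_add_rpow (by fun_prop) hp0) ?_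
  filter_upwards [self_mem_nhdsWithin] with ε hε
  exact integral_norm_sq_add_rpow_expSum_le hp hε hF d hz

end Contraction

section Extrapolation

open Finset

variable {V : Type*} [NormedAddCommGroup V] [NormedSpace ℂ V] {c : ℕ → V} {d : ℕ} {κ M : ℝ} {z : ℂ}

lemma cexp_mul_smul_expSum {V : Type*} [AddCommMonoid V] [Module ℂ V] (c : ℕ → V) (d : ℕ) (z : ℂ) :
    Complex.exp (d * z) • expSum c d z =
      ∑ n ∈ range (d + 1), Complex.exp z ^ (d - n) • c n := by
  rw [expSum, smul_sum]
  refine sum_congr rfl fun n hn => ?_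
  rw [smul_smul, ← Complex.exp_add, ← Complex.exp_nat_mul,
    Nat.cast_sub (mem_range_succ_iff.mp hn)]
  ring_nf

-- `e^{dz} expSum c d z` is a polynomial in `e^z`: the maximum principle on the disc
-- `‖e^z‖ ≤ e^{κπ}`, whose boundary consists of exponentials of points of the sector.
lemma norm_expSum_le_of_re_le (hκ : 0 ≤ κ) (hM : ∀ z : ℂ, κ * |z.im| ≤ z.re → ‖expSum c d z‖ ≤ M)
    (hz : z.re ≤ κ * π) : ‖expSum c d z‖ ≤ M * exp (d * (κ * π - z.re)) := by
  have hR : exp (κ * π) ≠ 0 := (exp_pos _).ne'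
  have hnorm (w : ℂ) : ‖∑ n ∈ range (d + 1), Complex.exp w ^ (d - n) • c n‖ =
      exp (d * w.re) * ‖expSum c d w‖ := by
    simp [← cexp_mul_smul_expSum, norm_smul, Complex.norm_exp]
  have hsphere (v : ℂ) (hv : ‖v‖ = exp (κ * π)) :
      ‖∑ n ∈ range (d + 1), v ^ (d - n) • c n‖ ≤ exp (d * (κ * π)) * M := by
    have hv0 : v ≠ 0 := norm_ne_zero_iff.mp (hv ▸ hR)
    have hre : (Complex.log v).re = κ * π := by rw [Complex.log_re, hv, log_exp]
    rw [← Complex.exp_log hv0, hnorm, hre]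
    gcongr
    refine hM _ ?_
    rw [hre, Complex.log_im]
    exact mul_le_mul_of_nonneg_left (Complex.abs_arg_le_pi v) hκ
  have hdisc := Complex.norm_le_of_forall_mem_frontier_norm_le
    (f := fun u : ℂ => ∑ n ∈ range (d + 1), u ^ (d - n) • c n) (z := Complex.exp z)
    (U := Metric.ball 0 (exp (κ * π))) Metric.isBounded_ball
    (Differentiable.diffContOnCl (by fun_prop))
    (fun v hv => hsphere v (by simpa [frontier_ball _ hR] using hv))
    (by simpa [closure_ball _ hR, Complex.norm_exp] using hz)
  rw [hnorm] at hdisc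
  rw [mul_sub, exp_sub, ← mul_div_assoc, le_div_iff₀ (exp_pos _)]
  linarith

lemma norm_expSum_le_of_norm_le_one (hκ : 0 ≤ κ)
    (hM : ∀ z : ℂ, κ * |z.im| ≤ z.re → ‖expSum c d z‖ ≤ M) (hz : ‖z‖ ≤ 1) :
    ‖expSum c d z‖ ≤ M * exp (d * (1 + κ * π)) := by
  have hM0 : 0 ≤ M := (norm_nonneg _).trans (hM 0 (by simp))
  have hre := (abs_le.mp ((Complex.abs_re_le_norm z).trans hz)).1
  rcases le_total z.re (κ * π) with h | h
  · refine (norm_expSum_le_of_re_le hκ hM h).trans ?_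
    gcongr
    linarith
  · refine (hM z ?_).trans (le_mul_of_one_le_right hM0 (one_le_exp (by positivity)))
    have him := (Complex.abs_im_le_norm z).trans hz
    exact (mul_le_mul_of_nonneg_left (by linarith [pi_gt_three]) hκ).trans h

lemma one_add_two_div_pi_mul_arctan_pos (κ : ℝ) : 0 < 1 + 2 / π * arctan κ := by
  have h := neg_pi_div_two_lt_arctan κ
  have := pi_pos
  field_simp
  linarith

lemma abs_arg_of_re_eq_zero {ξ : ℂ} (hξ : ξ.re = 0) (h0 : ξ ≠ 0) : |ξ.arg| = π / 2 := by
  rcases lt_trichotomy ξ.im 0 with h | h | h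
  · rw [Complex.arg_eq_neg_pi_div_two_iff.mpr ⟨hξ, h⟩, abs_neg, abs_of_pos (by positivity)]
  · exact absurd (Complex.ext hξ h) h0
  · rw [Complex.arg_eq_pi_div_two_iff.mpr ⟨hξ, h⟩, abs_of_pos (by positivity)]

-- The power `1 + 2 / π * arctan κ` opens the angle `π / 2` to `π / 2 + arctan κ`, the angle between
-- the positive real axis and the negative of an edge of the sector `κ * |z.im| ≤ z.re`.
lemma mul_abs_im_neg_cpow_le (κ : ℝ) {ξ : ℂ} (hξ : ξ.re = 0) :
    κ * |(-ξ ^ ((1 + 2 / π * arctan κ : ℝ) : ℂ)).im| ≤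
      (-ξ ^ ((1 + 2 / π * arctan κ : ℝ) : ℂ)).re := by
  rcases eq_or_ne ξ 0 with rfl | h0
  · rw [Complex.zero_cpow (by exact_mod_cast (one_add_two_div_pi_mul_arctan_pos κ).ne')]
    simp
  have harg : |ξ.arg * (1 + 2 / π * arctan κ)| = |arctan κ + π / 2| := by
    rw [abs_mul, abs_arg_of_re_eq_zero hξ h0, abs_of_pos (one_add_two_div_pi_mul_arctan_pos κ),
      abs_of_pos (by linarith [neg_pi_div_two_lt_arctan κ])]
    field_simp
    ring
  have hcos : cos (ξ.arg * (1 + 2 / π * arctan κ)) = -(κ / √(1 + κ ^ 2)) := by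
    rw [← cos_abs, harg, cos_abs, cos_add_pi_div_two, sin_arctan]
  have hsin : |sin (ξ.arg * (1 + 2 / π * arctan κ))| = 1 / √(1 + κ ^ 2) := by
    rw [← cos_arctan, ← abs_of_pos (cos_arctan_pos κ), ← sin_add_pi_div_two]
    rcases abs_eq_abs.mp harg with h | h <;> simp only [h, sin_neg, abs_neg]
  rw [Complex.neg_im, Complex.neg_re, Complex.cpow_ofReal_im, Complex.cpow_ofReal_re, abs_neg,
    abs_mul, hsin, hcos, abs_of_nonneg (by positivity)]
  exact le_of_eq (by ring)

/-- The open right half of the unit disc, on which the two constants theorem is applied. -/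
def halfDisc : Set ℂ := {ξ | 0 < ξ.re} ∩ Metric.ball 0 1

lemma isOpen_halfDisc : IsOpen halfDisc :=
  (isOpen_lt continuous_const Complex.continuous_re).inter Metric.isOpen_ball

lemma re_nonneg_and_norm_le_one_of_mem_closure_halfDisc {ξ : ℂ} (hξ : ξ ∈ closure halfDisc) :
    0 ≤ ξ.re ∧ ‖ξ‖ ≤ 1 :=
  closure_minimal (t := {ξ : ℂ | 0 ≤ ξ.re ∧ ‖ξ‖ ≤ 1})
    (fun _ hξ => ⟨hξ.1.le, (mem_ball_zero_iff.mp hξ.2).le⟩)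
    ((isClosed_le continuous_const Complex.continuous_re).inter
      (isClosed_le continuous_norm continuous_const)) hξ

lemma re_eq_zero_or_norm_eq_one_of_mem_frontier_halfDisc {ξ : ℂ}
    (hξ : ξ ∈ frontier halfDisc) : ξ.re = 0 ∨ ‖ξ‖ = 1 := by
  rw [isOpen_halfDisc.frontier_eq] at hξ
  obtain ⟨hre, hnorm⟩ := re_nonneg_and_norm_le_one_of_mem_closure_halfDisc hξ.1
  by_contra! hne
  exact hξ.2 ⟨hre.lt_of_ne' hne.1, mem_ball_zero_iff.mpr (hnorm.lt_of_ne hne.2)⟩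

-- Two constants theorem: `exp (-2 * A * (ξ - ξ ^ 2 / 2))` has norm at most `1` on the diameter and
-- at most `exp (-A)` on the half circle.
lemma norm_le_mul_exp_of_halfDisc {H : ℂ → V} {A r : ℝ} (hH : DiffContOnCl ℂ H halfDisc)
    (hA : 0 ≤ A)
    (hdiam : ∀ ξ : ℂ, ξ.re = 0 → ‖ξ‖ ≤ 1 → ‖H ξ‖ ≤ M)
    (harc : ∀ ξ : ℂ, 0 ≤ ξ.re → ‖ξ‖ = 1 → ‖H ξ‖ ≤ M * exp A)
    (hr0 : 0 < r) (hr1 : r ≤ 1) : ‖H r‖ ≤ M * exp (2 * A * r) := by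
  have hM : 0 ≤ M := (norm_nonneg _).trans (hdiam 0 rfl (by simp))
  rcases hr1.eq_or_lt with rfl | hr1
  · refine (harc _ (by simp) (by simp)).trans ?_
    gcongr
    linarith
  set D : ℂ → ℂ := fun ξ => Complex.exp (-(2 * A : ℝ) * (ξ - ξ ^ 2 / 2))
  have hD (ξ : ℂ) : ‖D ξ‖ = exp (-(2 * A) * (ξ.re - (ξ.re ^ 2 - ξ.im ^ 2) / 2)) := by
    rw [Complex.norm_exp, ← Complex.ofReal_neg, Complex.re_ofReal_mul]
    simp [sq]
  have hbound (ξ : ℂ) (hξ : ξ ∈ frontier halfDisc) : ‖D ξ • H ξ‖ ≤ M := by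
    obtain ⟨hre, hnorm⟩ :=
      re_nonneg_and_norm_le_one_of_mem_closure_halfDisc (frontier_subset_closure hξ)
    rw [norm_smul, hD]
    rcases re_eq_zero_or_norm_eq_one_of_mem_frontier_halfDisc hξ with h | h
    · refine (mul_le_of_le_one_left (norm_nonneg _) (exp_le_one_iff.mpr ?_)).trans (hdiam ξ h hnorm)
      rw [h]
      nlinarith [mul_nonneg hA (sq_nonneg ξ.im)]
    · have hsq : ξ.re ^ 2 + ξ.im ^ 2 = 1 := by
        rw [← one_pow 2, ← h, Complex.sq_norm, Complex.normSq_apply, sq, sq]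
      have hre1 := (Complex.re_le_norm ξ).trans hnorm
      calc _ ≤ exp (-A) * (M * exp A) := by
            gcongr
            · nlinarith [mul_nonneg hA (mul_nonneg hre (sub_nonneg.mpr hre1))]
            · exact harc ξ hre h
        _ = M := by rw [mul_left_comm, ← exp_add, neg_add_cancel, exp_zero, mul_one]
  have hmem : (r : ℂ) ∈ halfDisc := ⟨by simpa, by simpa [abs_of_pos hr0]⟩
  have hmax := Complex.norm_le_of_forall_mem_frontier_norm_le
    (Metric.isBounded_ball.subset Set.inter_subset_right)
    (DiffContOnCl.smul (Differentiable.diffContOnCl (f := D) (by fun_prop)) hH) hbound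
    (subset_closure hmem)
  rw [norm_smul, hD, mul_comm] at hmax
  refine (le_div_iff₀ (exp_pos _)).mpr hmax |>.trans ?_
  rw [div_eq_mul_inv, ← exp_neg]
  gcongr
  simp only [Complex.ofReal_re, Complex.ofReal_im]
  nlinarith [mul_nonneg hA (sq_nonneg r)]

-- With `A = d * (1 + κ * π)` on the half circle and `r = 1 / d`, the bound does not depend on `d`.
lemma norm_expSum_neg_rpow_le (hκ : 0 ≤ κ)
    (hM : ∀ z : ℂ, κ * |z.im| ≤ z.re → ‖expSum c d z‖ ≤ M) (hd : 1 ≤ d) :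
    ‖expSum c d (-((1 / d : ℝ) ^ (1 + 2 / π * arctan κ) : ℝ))‖ ≤ M * exp (2 * (1 + κ * π)) := by
  have hα := one_add_two_div_pi_mul_arctan_pos κ
  set α := 1 + 2 / π * arctan κ
  have hd0 : (0 : ℝ) < d := by positivity
  have hdiff : Differentiable ℂ (expSum c d) := fun z => (hasDerivAt_expSum c d z).differentiableAt
  have hH : DiffContOnCl ℂ (fun ξ : ℂ => expSum c d (-ξ ^ (α : ℂ))) halfDisc := by
    refine ⟨fun ξ hξ => ?_, fun ξ hξ => ?_⟩
    · exact ((hdiff _).comp ξ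
        (differentiableAt_id.cpow_const (.inl hξ.1)).neg).differentiableWithinAt
    · have hre := (re_nonneg_and_norm_le_one_of_mem_closure_halfDisc hξ).1
      exact (hdiff.continuous.continuousAt.comp (Complex.continuousAt_cpow_const_of_re_pos
        (.inl hre) (by simpa)).neg).continuousWithinAt
  have h := norm_le_mul_exp_of_halfDisc (A := d * (1 + κ * π)) hH (by positivity)
    (fun ξ hξ _ => hM _ (mul_abs_im_neg_cpow_le κ hξ))
    (fun ξ _ hξ => norm_expSum_le_of_norm_le_one hκ hM (by simp [Complex.norm_cpow_real, hξ]))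
    (r := 1 / d) (by positivity) ((div_le_one hd0).mpr (by exact_mod_cast hd))
  rw [← Complex.ofReal_cpow (by positivity)] at h
  refine h.trans_eq ?_
  field_simp

end Extrapolation

section BackwardSemigroup

open MvPolynomial

variable {k d : ℕ} {p : ℝ}

lemma evalOfReal_map {σ : Type*} (x : σ → ℝ) (P : MvPolynomial σ ℝ) :
    evalOfReal x (map Complex.ofRealHom P) = eval x P := by
  rw [evalOfReal_eq_eval, eval_map]
  exact (map_aeval x Complex.ofRealHom P).symm

/-- The class of a complex polynomial in `L^p(γ_k)`: the exponential sums of the semigroup become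
exponential sums in a Banach space, to which the extrapolation from a sector applies. -/
noncomputable def evalLp (k : ℕ) (hp : 0 < p) :
    MvPolynomial (Fin k) ℂ →ₗ[ℂ] Lp ℂ (ENNReal.ofReal p) (gaussMeasure k) where
  toFun P := (HasExpGrowth.memLp (f := fun x => evalOfReal x P) (by fun_prop) hp).toLp
  map_add' P Q := by
    rw [← MemLp.toLp_add]
    exact MemLp.toLp_congr _ _ (.of_forall fun x => map_add (evalOfReal x) P Q)
  map_smul' a P := by
    rw [RingHom.id_apply, ← MemLp.toLp_const_smul]
    exact MemLp.toLp_congr _ _ (.of_forall fun x => map_smul (evalOfReal x) a P)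

lemma norm_evalLp (hp : 0 < p) (P : MvPolynomial (Fin k) ℂ) :
    ‖evalLp k hp P‖ = (∫ x, ‖evalOfReal x P‖ ^ p ∂(gaussMeasure k)) ^ (1 / p) := by
  have hmem := HasExpGrowth.memLp (μ := gaussMeasure k) (f := fun x => evalOfReal x P)
    (by fun_prop) hp
  have h : ‖evalLp k hp P‖ = ‖hmem.toLp‖ := rfl
  rw [h, Lp.norm_toLp, hmem.eLpNorm_eq_integral_rpow_norm (by simpa) (by simp),
    ENNReal.toReal_ofReal (by positivity), ENNReal.toReal_ofReal hp.le, one_div]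

lemma norm_evalLp_map (hp : 0 < p) (P : MvPolynomial (Fin k) ℝ) :
    ‖evalLp k hp (map Complex.ofRealHom P)‖ = lpNormGauss p fun x => eval x P := by
  simp only [norm_evalLp, evalOfReal_map, Complex.norm_real, norm_eq_abs, lpNormGauss]

/-- The polynomial `∑_{n ≤ d} e^{nt} F_n`: when `F n` is an eigenpolynomial of the
Ornstein–Uhlenbeck operator for the eigenvalue `-n`, this is `∑ F_n` evolved backwards for the
time `t`. -/
noncomputable def ouBackward {σ : Type*} (F : ℕ → MvPolynomial σ ℝ) (d : ℕ) (t : ℝ) :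
    MvPolynomial σ ℝ :=
  ∑ n ∈ Finset.range (d + 1), exp (n * t) • F n

lemma map_ouBackward {σ : Type*} (F : ℕ → MvPolynomial σ ℝ) (d : ℕ) (t : ℝ) :
    map Complex.ofRealHom (ouBackward F d t) =
      expSum (fun n => map Complex.ofRealHom (F n)) d (-(t : ℂ)) := by
  rw [ouBackward, expSum, map_sum]
  refine Finset.sum_congr rfl fun n _ => ?_
  simp [smul_eq_C_mul]

@[simp]
lemma ouBackward_zero {σ : Type*} (F : ℕ → MvPolynomial σ ℝ) (d : ℕ) :
    ouBackward F d 0 = ∑ n ∈ Finset.range (d + 1), F n := by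
  simp [ouBackward]

lemma lpNormGauss_eval_ouBackward_le {F : ℕ → MvPolynomial (Fin k) ℝ} (hp : 1 < p)
    (hF : ∀ n, ouOp (F n) = -(n : ℝ) • F n) (hd : 1 ≤ d) :
    lpNormGauss p (fun x => eval x
        (ouBackward F d ((1 / d) ^ (1 + 2 / π * arctan (sectorSlope p))))) ≤
      lpNormGauss p (fun x => eval x (∑ n ∈ Finset.range (d + 1), F n)) *
        exp (2 * (1 + sectorSlope p * π)) := by
  have hp0 : 0 < p := by linarith
  have : Fact (1 ≤ ENNReal.ofReal p) := ⟨by simpa using hp.le⟩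
  set FC : ℕ → MvPolynomial (Fin k) ℂ := fun n => map Complex.ofRealHom (F n)
  have hFC (n : ℕ) : ouOp (FC n) = -(n : ℂ) • FC n := by
    simp [FC, ← map_ouOp, hF, smul_eq_C_mul]
  have hsector (z : ℂ) (hz : sectorSlope p * |z.im| ≤ z.re) :
      ‖expSum (fun n => evalLp k hp0 (FC n)) d z‖ ≤ ‖evalLp k hp0 (expSum FC d 0)‖ := by
    rw [← map_expSum, norm_evalLp, norm_evalLp]
    refine rpow_le_rpow (by positivity) ?_ (by positivity)
    exact integral_norm_expSum_rpow_le hp hFC d hz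
  have hextrapolated := norm_expSum_neg_rpow_le (sectorSlope_nonneg p) hsector hd
  rwa [← map_expSum, ← map_ouBackward, norm_evalLp_map, ← neg_zero, ← Complex.ofReal_zero,
    ← map_ouBackward, norm_evalLp_map, ouBackward_zero] at hextrapolated

end BackwardSemigroup

section Mehler

open MvPolynomial

variable {k : ℕ} {θ : ℝ} {x : Fin k → ℝ}

/-- Mehler's integral `P ↦ ∫ P(x cos θ + y sin θ) dγ_k(y)`, which represents the value at `x` of
the Ornstein–Uhlenbeck semigroup at the time `-log (cos θ)`. -/
noncomputable def mehlerIntegral (θ : ℝ) (x : Fin k → ℝ) : MvPolynomial (Fin k) ℝ →ₗ[ℝ] ℝ where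
  toFun P := ∫ y, eval (cos θ • x + sin θ • y) P ∂(gaussMeasure k)
  map_add' P Q := by
    simp only [map_add]
    exact integral_add (HasExpGrowth.integrable (by fun_prop))
      (HasExpGrowth.integrable (by fun_prop))
  map_smul' a P := by simp only [smul_eval, integral_const_mul, RingHom.id_apply, smul_eq_mul]

lemma mehlerIntegral_apply (θ : ℝ) (x : Fin k → ℝ) (P : MvPolynomial (Fin k) ℝ) :
    mehlerIntegral θ x P = ∫ y, eval (cos θ • x + sin θ • y) P ∂(gaussMeasure k) :=
  rfl

@[simp]
lemma mehlerIntegral_zero (x : Fin k → ℝ) (P : MvPolynomial (Fin k) ℝ) :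
    mehlerIntegral 0 x P = eval x P := by
  simp [mehlerIntegral_apply]

lemma integral_mul_eval_cos_smul_add_sin_smul (θ : ℝ) (x : Fin k → ℝ) (j : Fin k)
    (P : MvPolynomial (Fin k) ℝ) :
    ∫ y, y j * eval (cos θ • x + sin θ • y) P ∂(gaussMeasure k) =
      sin θ * mehlerIntegral θ x (pderiv j P) := by
  have hderiv (y : Fin k → ℝ) := hasFDerivAt_eval (f := fun y => cos θ • x + sin θ • y) P fun i =>
    ((hasFDerivAt_apply (𝕜 := ℝ) (F' := fun _ => ℝ) i y).const_mul (sin θ)).const_add (cos θ * x i)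
  have h := integral_eval_smul_eq_integral_fderiv (by fun_prop) (by fun_prop) hderiv j
  simpa [Pi.single_apply, mehlerIntegral_apply, integral_mul_const, mul_comm (sin θ)] using h

lemma mehlerIntegral_X_mul (θ : ℝ) (x : Fin k → ℝ) (j : Fin k) (P : MvPolynomial (Fin k) ℝ) :
    mehlerIntegral θ x (X j * P) =
      cos θ * x j * mehlerIntegral θ x P + sin θ ^ 2 * mehlerIntegral θ x (pderiv j P) := by
  have hP : HasExpGrowth fun y => cos θ * x j * eval (cos θ • x + sin θ • y) P := by fun_prop
  have hyP : HasExpGrowth fun y => sin θ * (y j * eval (cos θ • x + sin θ • y) P) := by fun_prop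
  calc mehlerIntegral θ x (X j * P)
      = ∫ y, (cos θ * x j * eval (cos θ • x + sin θ • y) P +
          sin θ * (y j * eval (cos θ • x + sin θ • y) P)) ∂(gaussMeasure k) := by
        simp only [mehlerIntegral_apply, map_mul, eval_X, Pi.add_apply, Pi.smul_apply, smul_eq_mul,
          add_mul, mul_assoc]
    _ = _ := by
        rw [integral_add hP.integrable hyP.integrable, integral_const_mul, integral_const_mul,
          integral_mul_eval_cos_smul_add_sin_smul, ← mehlerIntegral_apply]
        ring

lemma mehlerIntegral_ouOp (θ : ℝ) (x : Fin k → ℝ) (P : MvPolynomial (Fin k) ℝ) :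
    mehlerIntegral θ x (ouOp P) = ∑ j, (cos θ ^ 2 * mehlerIntegral θ x (pderiv j (pderiv j P)) -
      cos θ * x j * mehlerIntegral θ x (pderiv j P)) := by
  rw [ouOp_apply, map_sum]
  refine Finset.sum_congr rfl fun j _ => ?_
  rw [map_sub, mehlerIntegral_X_mul, cos_sq']
  ring

lemma hasDerivAt_mehlerIntegral (θ : ℝ) (x : Fin k → ℝ) (P : MvPolynomial (Fin k) ℝ) :
    HasDerivAt (fun θ => mehlerIntegral θ x P)
      (∑ j, (cos θ * sin θ * mehlerIntegral θ x (pderiv j (pderiv j P)) -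
        sin θ * x j * mehlerIntegral θ x (pderiv j P))) θ := by
  have hderiv (r : ℝ) (y : Fin k → ℝ) :
      HasDerivAt (fun r => eval (cos r • x + sin r • y) P)
        (∑ j, (cos r * (y j * eval (cos r • x + sin r • y) (pderiv j P)) -
          sin r * x j * eval (cos r • x + sin r • y) (pderiv j P))) r := by
    have h := (hasFDerivAt_eval (f := fun r => cos r • x + sin r • y) P fun j =>
      (((hasDerivAt_cos r).mul_const (x j)).add
        ((hasDerivAt_sin r).mul_const (y j))).hasFDerivAt).hasDerivAt
    refine h.congr_deriv ?_
    simp only [sum_apply]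
    refine Finset.sum_congr rfl fun j _ => ?_
    simp
    ring
  have hcoord (j : Fin k) : HasExpGrowth fun q : ℝ × (Fin k → ℝ) => q.2 j :=
    HasExpGrowth.apply (by fun_prop) j
  have h := HasExpGrowth.hasDerivAt_integral (μ := gaussMeasure k)
    (by simp only [Function.HasUncurry.uncurry, id]; fun_prop)
    (by simp only [Function.HasUncurry.uncurry, id]; fun_prop) hderiv θ
  have hint (j : Fin k) : HasExpGrowth fun y : Fin k → ℝ =>
      cos θ * (y j * eval (cos θ • x + sin θ • y) (pderiv j P)) := by fun_prop
  have hint' (j : Fin k) : HasExpGrowth fun y : Fin k → ℝ =>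
      sin θ * x j * eval (cos θ • x + sin θ • y) (pderiv j P) := by fun_prop
  refine h.congr_deriv ?_
  rw [integral_finsetSum _ fun j _ => ((hint j).sub (hint' j)).integrable]
  refine Finset.sum_congr rfl fun j _ => ?_
  rw [integral_sub (hint j).integrable (hint' j).integrable, integral_const_mul,
    integral_const_mul, integral_mul_eval_cos_smul_add_sin_smul, ← mehlerIntegral_apply,
    ← mul_assoc]

lemma cos_mul_deriv_mehlerIntegral (θ : ℝ) (x : Fin k → ℝ) (P : MvPolynomial (Fin k) ℝ) :
    cos θ * deriv (fun θ => mehlerIntegral θ x P) θ = sin θ * mehlerIntegral θ x (ouOp P) := by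
  rw [(hasDerivAt_mehlerIntegral θ x P).deriv, mehlerIntegral_ouOp, Finset.mul_sum, Finset.mul_sum]
  exact Finset.sum_congr rfl fun j _ => by ring

lemma mehlerIntegral_eq_cos_rpow_mul_eval {P : MvPolynomial (Fin k) ℝ} {l : ℝ}
    (hP : ouOp P = -l • P) (x : Fin k → ℝ) (h0 : 0 ≤ θ) (h1 : θ < π / 2) :
    mehlerIntegral θ x P = cos θ ^ l * eval x P := by
  have hcos (s : ℝ) (hs : s ∈ Set.Icc 0 θ) : 0 < cos s :=
    cos_pos_of_mem_Ioo ⟨by linarith [hs.1, pi_pos], by linarith [hs.2]⟩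
  have hderiv (s : ℝ) (hs : s ∈ Set.Icc 0 θ) :
      HasDerivAt (fun s => mehlerIntegral s x P * cos s ^ (-l)) 0 s := by
    have hode := cos_mul_deriv_mehlerIntegral s x P
    rw [hP, map_smul, smul_eq_mul] at hode
    refine ((hasDerivAt_mehlerIntegral s x P).differentiableAt.hasDerivAt.fun_mul
      ((hasDerivAt_cos s).rpow_const (p := -l) (.inl (hcos s hs).ne'))).congr_deriv ?_
    rw [show cos s ^ (-l) = cos s * cos s ^ (-l - 1) by
      rw [rpow_sub_one (hcos s hs).ne', mul_div_cancel₀ _ (hcos s hs).ne']]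
    linear_combination cos s ^ (-l - 1) * hode
  have hconst := constant_of_has_deriv_right_zero
    (fun s hs => (hderiv s hs).continuousAt.continuousWithinAt)
    (fun s hs => (hderiv s (Set.Ico_subset_Icc_self hs)).hasDerivWithinAt) θ ⟨h0, le_rfl⟩
  have hθ := hcos θ ⟨h0, le_rfl⟩
  rwa [mehlerIntegral_zero, cos_zero, one_rpow, mul_one, rpow_neg hθ.le, ← div_eq_mul_inv,
    div_eq_iff (by positivity), mul_comm] at hconst

end Mehler

section Gradient

open MvPolynomial

variable {k d : ℕ} {p q θ t : ℝ}

lemma ouOp_pderiv_of_ouOp_eq_neg_smul {R σ : Type*} [CommRing R] [Fintype σ]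
    {P : MvPolynomial σ R} {l : R} (hP : ouOp P = -l • P) (j : σ) :
    ouOp (pderiv j P) = -(l - 1) • pderiv j P := by
  rw [ouOp_pderiv, hP, Derivation.map_smul, neg_sub, sub_smul, one_smul, neg_smul, neg_add_eq_sub]

lemma cos_mul_mehlerIntegral_pderiv_ouBackward {F : ℕ → MvPolynomial (Fin k) ℝ}
    (hF : ∀ n, ouOp (F n) = -(n : ℝ) • F n) (h0 : 0 ≤ θ) (h1 : θ < π / 2)
    (hθ : cos θ = exp (-t)) (x : Fin k → ℝ) (j : Fin k) :
    cos θ * mehlerIntegral θ x (pderiv j (ouBackward F d t)) =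
      eval x (pderiv j (∑ n ∈ Finset.range (d + 1), F n)) := by
  have hcos : cos θ ≠ 0 := hθ ▸ (exp_pos _).ne'
  simp only [ouBackward, map_sum, Derivation.map_smul, map_smul, Finset.mul_sum]
  refine Finset.sum_congr rfl fun n _ => ?_
  have hcancel : exp (n * t) * cos θ ^ n = 1 := by
    rw [hθ, ← exp_nat_mul, ← exp_add]
    simp
  rw [mehlerIntegral_eq_cos_rpow_mul_eval (ouOp_pderiv_of_ouOp_eq_neg_smul (hF n) j) x h0 h1,
    rpow_sub_one hcos, rpow_natCast, smul_eq_mul]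
  field_simp
  linear_combination eval x (pderiv j (F n)) * hcancel

lemma integral_sum_mul_mul_eval_cos_smul_add_sin_smul (θ : ℝ) (x u : Fin k → ℝ)
    (Q : MvPolynomial (Fin k) ℝ) :
    ∫ y, (∑ j, u j * y j) * eval (cos θ • x + sin θ • y) Q ∂(gaussMeasure k) =
      sin θ * ∑ j, u j * mehlerIntegral θ x (pderiv j Q) := by
  have hint (j : Fin k) : HasExpGrowth fun y : Fin k → ℝ =>
      u j * (y j * eval (cos θ • x + sin θ • y) Q) := by fun_prop
  simp only [Finset.sum_mul, mul_assoc]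
  rw [integral_finsetSum _ fun j _ => (hint j).integrable, Finset.mul_sum]
  refine Finset.sum_congr rfl fun j _ => ?_
  rw [integral_const_mul, integral_mul_eval_cos_smul_add_sin_smul, mul_left_comm]

lemma integral_sum_mul_mul_le (hpq : p.HolderConjugate q) (u : Fin k → ℝ) {g : (Fin k → ℝ) → ℝ}
    (hg : HasExpGrowth g) :
    ∫ y, (∑ j, u j * y j) * g y ∂(gaussMeasure k) ≤
      √(∑ j, u j ^ 2) * (∫ s, |s| ^ q ∂(gaussianReal 0 1)) ^ (1 / q) *
        (∫ y, |g y| ^ p ∂(gaussMeasure k)) ^ (1 / p) := by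
  have hq := hpq.symm.pos
  have hlin : HasExpGrowth fun y : Fin k → ℝ => ∑ j, u j * y j := by fun_prop
  calc ∫ y, (∑ j, u j * y j) * g y ∂(gaussMeasure k)
      ≤ ∫ y, |∑ j, u j * y j| * |g y| ∂(gaussMeasure k) := by
        simp only [← abs_mul]
        exact (le_abs_self _).trans abs_integral_le_integral_abs
    _ ≤ (∫ y, |∑ j, u j * y j| ^ q ∂(gaussMeasure k)) ^ (1 / q) *
          (∫ y, |g y| ^ p ∂(gaussMeasure k)) ^ (1 / p) :=
        integral_mul_le_Lp_mul_Lq_of_nonneg hpq.symm (.of_forall fun y => abs_nonneg _)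
          (.of_forall fun y => abs_nonneg _) (hlin.memLp hq).abs (hg.memLp hpq.pos).abs
    _ = _ := by
        rw [integral_abs_sum_mul_rpow_gaussMeasure hq.le, mul_rpow (by positivity) (by positivity),
          ← rpow_mul (sqrt_nonneg _), mul_one_div_cancel hq.ne', rpow_one]

-- Duality: pair the vector with itself and apply Hölder's inequality.
lemma sin_mul_sqrt_sum_sq_mehlerIntegral_pderiv_le (hpq : p.HolderConjugate q) (θ : ℝ)
    (x : Fin k → ℝ) (Q : MvPolynomial (Fin k) ℝ) :
    sin θ * √(∑ j, mehlerIntegral θ x (pderiv j Q) ^ 2) ≤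
      (∫ s, |s| ^ q ∂(gaussianReal 0 1)) ^ (1 / q) *
        (∫ y, |eval (cos θ • x + sin θ • y) Q| ^ p ∂(gaussMeasure k)) ^ (1 / p) := by
  rcases (sqrt_nonneg (∑ j, mehlerIntegral θ x (pderiv j Q) ^ 2)).eq_or_lt with h0 | h0
  · rw [← h0, mul_zero]
    positivity
  · refine le_of_mul_le_mul_left ?_ h0
    have h := integral_sum_mul_mul_le hpq (fun j => mehlerIntegral θ x (pderiv j Q))
      (g := fun y => eval (cos θ • x + sin θ • y) Q) (by fun_prop)
    rw [integral_sum_mul_mul_eval_cos_smul_add_sin_smul] at h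
    simp only [← sq] at h
    rwa [mul_left_comm, mul_self_sqrt (by positivity), ← mul_assoc]

lemma sin_mul_gradNorm_le (hpq : p.HolderConjugate q) {F : ℕ → MvPolynomial (Fin k) ℝ}
    (hF : ∀ n, ouOp (F n) = -(n : ℝ) • F n) (h0 : 0 ≤ θ) (h1 : θ < π / 2)
    (hθ : cos θ = exp (-t)) (x : Fin k → ℝ) :
    sin θ * gradNorm (∑ n ∈ Finset.range (d + 1), F n) x ≤
      cos θ * ((∫ s, |s| ^ q ∂(gaussianReal 0 1)) ^ (1 / q) *
        (∫ y, |eval (cos θ • x + sin θ • y) (ouBackward F d t)| ^ p ∂(gaussMeasure k)) ^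
          (1 / p)) := by
  have hcos : 0 ≤ cos θ := hθ ▸ (exp_pos _).le
  have hgrad : gradNorm (∑ n ∈ Finset.range (d + 1), F n) x =
      cos θ * √(∑ j, mehlerIntegral θ x (pderiv j (ouBackward F d t)) ^ 2) := by
    simp only [gradNorm, ← cos_mul_mehlerIntegral_pderiv_ouBackward hF h0 h1 hθ, mul_pow,
      ← Finset.mul_sum]
    rw [sqrt_mul (sq_nonneg _), sqrt_sq hcos]
  rw [hgrad, mul_left_comm]
  exact mul_le_mul_of_nonneg_left (sin_mul_sqrt_sum_sq_mehlerIntegral_pderiv_le hpq θ x _) hcos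

lemma cos_le_rpow_neg_half_mul_sin (ht : 0 < t) (hθ : cos θ = exp (-t)) (hsin : 0 ≤ sin θ) :
    cos θ ≤ t ^ (-(1 / 2) : ℝ) * sin θ := by
  rw [rpow_neg ht.le, ← sqrt_eq_rpow, inv_mul_eq_div, le_div_iff₀ (sqrt_pos.mpr ht)]
  refine le_of_sq_le_sq ?_ hsin
  have hsq : cos θ ^ 2 * exp (2 * t) = 1 := by
    rw [hθ, ← exp_nat_mul, ← exp_add]
    simp
  rw [mul_pow, sq_sqrt ht.le, sin_sq]
  nlinarith [mul_le_mul_of_nonneg_left (add_one_le_exp (2 * t)) (sq_nonneg (cos θ)),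
    mul_nonneg (sq_nonneg (cos θ)) ht.le]

lemma lpNormGauss_le_mul_of_abs_le {D : ℝ} (hp : 0 < p) (hD : 0 ≤ D) (θ : ℝ)
    {f g : (Fin k → ℝ) → ℝ} (hg : HasExpGrowth g)
    (h : ∀ x, |f x| ≤ D * (∫ y, |g (cos θ • x + sin θ • y)| ^ p ∂(gaussMeasure k)) ^ (1 / p)) :
    lpNormGauss p f ≤ D * lpNormGauss p g := by
  have hgp : HasExpGrowth fun x => |g x| ^ p := hg.abs.rpow_const hp.le
  have hrot : HasExpGrowth fun z : (Fin k → ℝ) × (Fin k → ℝ) =>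
      |g (cos θ • z.1 + sin θ • z.2)| ^ p := by
    simpa [ContinuousLinearMap.rotation_apply] using
      (hgp.comp_fst (F := Fin k → ℝ)).comp_rotation.comp_prodMk θ
  have hint := (hrot.integrable (μ := (gaussMeasure k).prod (gaussMeasure k)))
  have hpow : ∫ x, |f x| ^ p ∂(gaussMeasure k) ≤ D ^ p * ∫ x, |g x| ^ p ∂(gaussMeasure k) := by
    rw [← integral_cos_smul_add_sin_smul integral_id_gaussMeasure hgp.continuous θ,
      integral_prod _ hint, ← integral_const_mul]
    refine integral_mono_of_nonneg (.of_forall fun x => by positivity)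
      (hint.integral_prod_left.const_mul _) (.of_forall fun x => ?_)
    refine (rpow_le_rpow (abs_nonneg _) (h x) hp.le).trans_eq ?_
    rw [mul_rpow hD (by positivity), ← rpow_mul (by positivity), one_div_mul_cancel hp.ne',
      rpow_one]
  refine (rpow_le_rpow (by positivity) hpow (by positivity)).trans_eq ?_
  rw [mul_rpow (by positivity) (by positivity), ← rpow_mul hD, mul_one_div_cancel hp.ne',
    rpow_one, lpNormGauss]

lemma lpNormGauss_gradNorm_le (hpq : p.HolderConjugate q) {F : ℕ → MvPolynomial (Fin k) ℝ}
    (hF : ∀ n, ouOp (F n) = -(n : ℝ) • F n) (d : ℕ) (ht : 0 < t) :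
    lpNormGauss p (gradNorm (∑ n ∈ Finset.range (d + 1), F n)) ≤
      t ^ (-(1 / 2) : ℝ) * (∫ s, |s| ^ q ∂(gaussianReal 0 1)) ^ (1 / q) *
        lpNormGauss p fun x => eval x (ouBackward F d t) := by
  have hexp : exp (-t) < 1 := exp_lt_one_iff.mpr (neg_neg_of_pos ht)
  set θ := arccos (exp (-t))
  have hθ : cos θ = exp (-t) := cos_arccos (by linarith [exp_pos (-t)]) hexp.le
  have h0 : 0 < θ := arccos_pos.mpr hexp
  have h1 : θ < π / 2 := arccos_lt_pi_div_two.mpr (exp_pos _)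
  have hsin : 0 < sin θ := sin_pos_of_pos_of_lt_pi h0 (by linarith)
  refine lpNormGauss_le_mul_of_abs_le hpq.pos (by positivity) θ (by fun_prop) fun x => ?_
  rw [abs_of_nonneg (a := gradNorm _ x) (sqrt_nonneg _)]
  refine le_of_mul_le_mul_left ((sin_mul_gradNorm_le hpq hF h0.le h1 hθ x).trans ?_) hsin
  refine (mul_le_mul_of_nonneg_right (cos_le_rpow_neg_half_mul_sin ht hθ hsin.le)
    (by positivity)).trans_eq ?_
  ring

end Gradient

lemma lpNormGauss_nonneg {k : ℕ} (p : ℝ) (f : (Fin k → ℝ) → ℝ) : 0 ≤ lpNormGauss p f :=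
  rpow_nonneg (integral_nonneg fun x => by positivity) _

lemma lpNormGauss_gradNorm_of_totalDegree_eq_zero {k : ℕ} {p : ℝ} (hp : p ≠ 0)
    {P : MvPolynomial (Fin k) ℝ} (hP : P.totalDegree = 0) : lpNormGauss p (gradNorm P) = 0 := by
  rw [MvPolynomial.totalDegree_eq_zero_iff_eq_C.mp hP]
  simp [lpNormGauss, gradNorm, zero_rpow hp, hp]

lemma lpNormGauss_gradNorm_le_rpow_totalDegree {k : ℕ} {p q : ℝ} (hpq : p.HolderConjugate q)
    {P : MvPolynomial (Fin k) ℝ} (hP : 1 ≤ P.totalDegree) :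
    lpNormGauss p (gradNorm P) ≤
      (∫ s, |s| ^ q ∂(gaussianReal 0 1)) ^ (1 / q) * exp (2 * (1 + sectorSlope p * π)) *
        (P.totalDegree : ℝ) ^ (1 / 2 + 1 / π * arctan (sectorSlope p)) *
        lpNormGauss p fun x => MvPolynomial.eval x P := by
  obtain ⟨F, hF, hsum⟩ := exists_ouOp_eigen_decomposition (P := P) le_rfl
  set d := P.totalDegree
  set t : ℝ := (1 / d) ^ (1 + 2 / π * arctan (sectorSlope p))
  have ht : 0 < t := by positivity
  have htd : t ^ (-(1 / 2) : ℝ) = (d : ℝ) ^ (1 / 2 + 1 / π * arctan (sectorSlope p)) := by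
    rw [← rpow_mul (by positivity), one_div (d : ℝ), inv_rpow (by positivity),
      ← rpow_neg (by positivity)]
    ring_nf
  calc lpNormGauss p (gradNorm P)
      ≤ t ^ (-(1 / 2) : ℝ) * (∫ s, |s| ^ q ∂(gaussianReal 0 1)) ^ (1 / q) *
          lpNormGauss p fun x => MvPolynomial.eval x (ouBackward F d t) := by
        simpa only [← hsum] using lpNormGauss_gradNorm_le hpq hF d ht
    _ ≤ t ^ (-(1 / 2) : ℝ) * (∫ s, |s| ^ q ∂(gaussianReal 0 1)) ^ (1 / q) *
          (lpNormGauss p (fun x => MvPolynomial.eval x P) *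
            exp (2 * (1 + sectorSlope p * π))) := by
        have hbackward := lpNormGauss_eval_ouBackward_le hpq.lt hF hP
        rw [← hsum] at hbackward
        exact mul_le_mul_of_nonneg_left hbackward (by positivity)
    _ = _ := by rw [htd]; ring

/-- Dimension independent Bernstein–Markov inequality in Gauss space. -/
theorem bernstein_markov_gauss (p : ℝ) (hp : 1 < p) :
    ∃ C : ℝ, 0 < C ∧ ∀ k : ℕ, 1 ≤ k → ∀ P : MvPolynomial (Fin k) ℝ,
      lpNormGauss p (gradNorm P) ≤
        C * (P.totalDegree : ℝ) ^
            ((1 : ℝ) / 2 + (1 / π) * Real.arctan (|p - 2| / (2 * Real.sqrt (p - 1)))) *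
          lpNormGauss p (fun x => MvPolynomial.eval x P) := by
  set q := p.conjExponent
  refine ⟨((∫ s, |s| ^ q ∂(gaussianReal 0 1)) ^ (1 / q) + 1) *
    exp (2 * (1 + sectorSlope p * π)), by positivity, fun k _ P => ?_⟩
  have hnorm := lpNormGauss_nonneg p fun x => MvPolynomial.eval x P
  rcases P.totalDegree.eq_zero_or_pos with hP | hP
  · rw [lpNormGauss_gradNorm_of_totalDegree_eq_zero (by linarith) hP]
    positivity
  · refine (lpNormGauss_gradNorm_le_rpow_totalDegree (HolderConjugate.conjExponent hp) hP).trans ?_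
    rw [← sectorSlope]
    gcongr
    linarith
end

section
/- For every integer k ≥ 1 and every polynomial P on ℝ^k, one has ∫_{ℝ^k} B(|LP(x)|) dγ_k(x) ≤ ∫_{ℝ^k} B(10 · (deg P)^{α_B} · |P(x)|) dγ_k(x). -/
open MeasureTheory ProbabilityTheory Real

/-- The Ornstein–Uhlenbeck operator `L P (x) = Δ P (x) - x · ∇P (x)` applied to a
polynomial on `ℝ^k`. -/
noncomputable def OU {k : ℕ} (P : MvPolynomial (Fin k) ℝ) (x : Fin k → ℝ) : ℝ :=
  (∑ j, MvPolynomial.eval x (MvPolynomial.pderiv j (MvPolynomial.pderiv j P)))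
    - ∑ j, x j * MvPolynomial.eval x (MvPolynomial.pderiv j P)

/-!
Write `P = ∑ Q n` with `L (Q n) = -n Q n`, and let the Mehler semigroup act with a complex
parameter: `w` sends `P` to `∑ w ^ n Q n`, and its derivative at `w = 1` is `-L P`. Regularise
`B(|z|)` to `B(√(|z|² + a))` and move along `w = 1 - t v`. By Gaussian integration by parts the
derivative of the modular `∫ B(√(|·|² + a)) dγ` is minus the integral of a Hessian form, twisted by
the complex number `v / (1 - t v)`; that form is nonnegative as soon as this number lies in the
sector `κ |Im ζ| ≤ Re ζ`, with `κ = √(c_B - 2) / 2`. The sector contains it for all `t` in `[0, 1)`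
when `1 - v` lies in a lens with vertices `0` and `1`, so the semigroup contracts the modular for
`w` in the lens.

The coefficient vectors `y` for which `∑ y n Q n` has modular at most that of `P` form a closed
convex balanced set containing `(w ^ n)` for every `w` in the lens. By Hahn–Banach, a multiple of
`(n)` lies in it as soon as `|p' 1|` is bounded by `sup |p|` over the lens for polynomials `p` of
degree `d`. This is a Markov inequality: the exterior of the lens is the image of a half-plane under
a power map of exponent `α_B` followed by a Möbius map, so Phragmén–Lindelöf gives a Bernstein–Walsh
bound outside the lens, hence on the disc of radius of order `d ^ (-α_B)` around `1`, and Cauchy's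
estimate gives `|p' 1| ≤ 10 d ^ α_B sup |p|`.
-/

section Lens

/-- The closed convex sector of half-angle `arccot κ` around the positive real axis. -/
def sector (κ : ℝ) : Set ℂ := {ζ | κ * |ζ.im| ≤ ζ.re}

/-- The closed lens with vertices `0` and `1`, bounded by two circular arcs which meet the segment
`[0, 1]` at the angle `arccot κ`: the closure of the image of `sector κ` under `m ↦ (1 + m)⁻¹`. -/
def lens (κ : ℝ) : Set ℂ := {w | κ * |w.im| ≤ w.re - Complex.normSq w}

/-- The growth exponent `1 + (2 / π) arctan κ` of the lens at its vertices: the complement of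
`lens κ` is uniformized by the right half-plane through `ζ ↦ (1 - ζ ^ lensExponent κ)⁻¹`. -/
noncomputable def lensExponent (κ : ℝ) : ℝ := 1 + (2 / π) * arctan κ

variable {κ : ℝ}

lemma one_le_lensExponent (hκ : 0 ≤ κ) : 1 ≤ lensExponent κ := by
  have : 0 ≤ arctan κ := by simpa using hκ
  simpa only [lensExponent, le_add_iff_nonneg_right] using by positivity

lemma lensExponent_mul_pi_div_two (κ : ℝ) :
    lensExponent κ * (π / 2) = π / 2 + arctan κ := by
  unfold lensExponent
  field_simp

lemma lensExponent_lt_two (κ : ℝ) : lensExponent κ < 2 := by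
  refine lt_of_mul_lt_mul_right ?_ pi_div_two_pos.le
  rw [lensExponent_mul_pi_div_two]
  linarith [arctan_lt_pi_div_two κ]

lemma ofReal_mem_lens {t : ℝ} (ht0 : 0 ≤ t) (ht1 : t ≤ 1) : (t : ℂ) ∈ lens κ := by
  simp only [lens, Set.mem_ofPred_eq, Complex.ofReal_im, abs_zero, mul_zero, Complex.ofReal_re,
    Complex.normSq_ofReal]
  nlinarith

lemma inv_one_add_mem_lens {m : ℂ} (hm : m ∈ sector κ) : (1 + m)⁻¹ ∈ lens κ := by
  by_cases h : 1 + m = 0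
  · simpa only [h, inv_zero, Complex.ofReal_zero] using
      ofReal_mem_lens (κ := κ) le_rfl zero_le_one
  have hpos : 0 < Complex.normSq (1 + m) := Complex.normSq_pos.2 h
  simp only [lens, Set.mem_ofPred_eq, Complex.inv_im, Complex.inv_re, Complex.normSq_inv, abs_div,
    abs_neg, abs_of_pos hpos, Complex.add_im, Complex.one_im, zero_add, Complex.add_re,
    Complex.one_re]
  rw [inv_eq_one_div, ← sub_div, mul_div_assoc', add_sub_cancel_left]
  gcongr
  exact hm

lemma div_one_sub_mul_mem_sector {v : ℂ} (hv : 1 - v ∈ lens κ) {t : ℝ} (ht : t ≤ 1) :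
    v / (1 - t * v) ∈ sector κ := by
  have hre : (v / (1 - t * v)).re = (v.re - t * Complex.normSq v) / Complex.normSq (1 - t * v) := by
    simp only [Complex.div_re, Complex.normSq_apply, Complex.sub_re, Complex.sub_im,
      Complex.one_re, Complex.one_im, Complex.re_ofReal_mul, Complex.im_ofReal_mul]
    ring
  have him : (v / (1 - t * v)).im = v.im / Complex.normSq (1 - t * v) := by
    simp only [Complex.div_im, Complex.normSq_apply, Complex.sub_re, Complex.sub_im,
      Complex.one_re, Complex.one_im, Complex.re_ofReal_mul, Complex.im_ofReal_mul]
    ring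
  have hlens : κ * |v.im| ≤ v.re - Complex.normSq v := by
    simp only [lens, Set.mem_ofPred_eq, Complex.normSq_apply, Complex.sub_re, Complex.sub_im,
      Complex.one_re, Complex.one_im, zero_sub, abs_neg] at hv ⊢
    linarith
  have ht' : t * Complex.normSq v ≤ Complex.normSq v :=
    mul_le_of_le_one_left (Complex.normSq_nonneg v) ht
  rw [sector, Set.mem_ofPred_eq, hre, him, abs_div, abs_of_nonneg (Complex.normSq_nonneg _),
    mul_div_assoc']
  gcongr
  · exact Complex.normSq_nonneg _
  · linarith

lemma neg_mem_sector_of_polar {r θ : ℝ} {ζ : ℂ} (hr : 0 ≤ r)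
    (hθ : lensExponent κ * (π / 2) ≤ |θ|) (hθ' : |θ| ≤ π)
    (hre : ζ.re = r * cos θ) (him : ζ.im = r * sin θ) : -ζ ∈ sector κ := by
  rw [lensExponent_mul_pi_div_two] at hθ
  have htan : κ * cos (arctan κ) = sin (arctan κ) := by
    simpa only [tan_arctan] using tan_mul_cos (cos_arctan_pos κ).ne'
  have hcos : cos (|θ| - arctan κ) ≤ 0 :=
    cos_nonpos_of_pi_div_two_le_of_le (by linarith)
      (by linarith [neg_pi_div_two_lt_arctan κ])
  rw [sector, Set.mem_ofPred_eq, Complex.neg_im, Complex.neg_re, abs_neg, hre, him, abs_mul,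
    abs_of_nonneg hr, abs_sin_eq_sin_abs_of_abs_le_pi hθ', ← cos_abs θ]
  refine le_of_mul_le_mul_right ?_ (cos_arctan_pos κ)
  calc κ * (r * sin |θ|) * cos (arctan κ) = r * sin |θ| * (κ * cos (arctan κ)) := by ring
    _ = r * cos (|θ| - arctan κ) - r * cos |θ| * cos (arctan κ) := by
      rw [htan, cos_sub]; ring
    _ ≤ -(r * cos |θ|) * cos (arctan κ) := by
      linarith [mul_nonpos_of_nonneg_of_nonpos hr hcos]

lemma neg_mem_sector_of_le_abs_arg {m : ℂ} (hm : lensExponent κ * (π / 2) ≤ |m.arg|) :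
    -m ∈ sector κ :=
  neg_mem_sector_of_polar (norm_nonneg m) hm (Complex.abs_arg_le_pi m)
    (Complex.norm_mul_cos_arg m).symm (Complex.norm_mul_sin_arg m).symm

lemma abs_arg_of_re_eq_zero_s2 {z : ℂ} (hre : z.re = 0) (hz : z ≠ 0) : |z.arg| = π / 2 := by
  refine le_antisymm (Complex.abs_arg_le_pi_div_two_iff.2 hre.ge) (not_lt.1 fun h => ?_)
  rcases Complex.abs_arg_lt_pi_div_two_iff.1 h with h | h
  · exact h.ne' hre
  · exact hz h

lemma neg_cpow_lensExponent_mem_sector (hκ : 0 ≤ κ) {z : ℂ} (hre : z.re = 0) :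
    -(z ^ (lensExponent κ : ℂ)) ∈ sector κ := by
  have hpos : 0 < lensExponent κ := zero_lt_one.trans_le (one_le_lensExponent hκ)
  rcases eq_or_ne z 0 with rfl | hz
  · simp [Complex.zero_cpow (Complex.ofReal_ne_zero.2 hpos.ne'), sector]
  have harg : |z.arg * lensExponent κ| = lensExponent κ * (π / 2) := by
    rw [abs_mul, abs_of_pos hpos, abs_arg_of_re_eq_zero_s2 hre hz, mul_comm]
  refine neg_mem_sector_of_polar (by positivity) harg.ge ?_ (Complex.cpow_ofReal_re _ _)
    (Complex.cpow_ofReal_im _ _)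
  rw [harg]
  nlinarith [lensExponent_lt_two κ, pi_pos]

lemma cpow_ne_one {α : ℝ} (hα0 : 0 < α) (hα2 : α < 2) {ζ : ℂ} (hζ : 0 ≤ ζ.re) (hζ1 : ζ ≠ 1) :
    ζ ^ (α : ℂ) ≠ 1 := by
  intro h
  have hnorm : ‖ζ‖ = 1 := by
    have : ‖ζ‖ ^ α = 1 := by rw [← Complex.norm_cpow_real, h, norm_one]
    rwa [← one_rpow α, rpow_left_inj (norm_nonneg _) zero_le_one hα0.ne'] at this
  have hcos : cos (ζ.arg * α) = 1 := by
    simpa [Complex.cpow_ofReal_re, hnorm] using congrArg Complex.re h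
  have hlt : |ζ.arg * α| < 2 * π := by
    have := Complex.abs_arg_le_pi_div_two_iff.2 hζ
    rw [abs_mul, abs_of_pos hα0]
    nlinarith [abs_nonneg ζ.arg, pi_pos]
  have harg : ζ.arg = 0 := by
    have := (cos_eq_one_iff_of_lt_of_lt (abs_lt.1 hlt).1 (abs_lt.1 hlt).2).1 hcos
    exact (mul_eq_zero.1 this).resolve_right hα0.ne'
  apply hζ1
  rw [← Complex.norm_mul_exp_arg_mul_I ζ, hnorm, harg]
  simp

lemma exists_cpow_eq {α : ℝ} (hα0 : 0 < α) {m : ℂ} (hm : |m.arg| ≤ α * (π / 2)) :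
    ∃ ζ : ℂ, 0 ≤ ζ.re ∧ ζ ^ (α : ℂ) = m ∧ ‖ζ‖ = ‖m‖ ^ α⁻¹ := by
  have habs : |m.arg * α⁻¹| ≤ π / 2 := by
    rwa [abs_mul, abs_of_pos (inv_pos.2 hα0), ← div_eq_mul_inv, div_le_iff₀' hα0]
  obtain ⟨hlow, hupp⟩ := abs_le.1 habs
  have him : (Complex.log m * ((α⁻¹ : ℝ) : ℂ)).im = m.arg * α⁻¹ := by
    rw [Complex.im_mul_ofReal, Complex.log_im]
  refine ⟨m ^ ((α⁻¹ : ℝ) : ℂ), ?_, ?_, Complex.norm_cpow_real _ _⟩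
  · rw [Complex.cpow_ofReal_re]
    have := cos_nonneg_of_neg_pi_div_two_le_of_le hlow hupp
    positivity
  · rw [← Complex.cpow_mul _ (by rw [him]; linarith [pi_pos]) (by rw [him]; linarith [pi_pos]),
      ← Complex.ofReal_mul, inv_mul_cancel₀ hα0.ne', Complex.ofReal_one, Complex.cpow_one]

end Lens

section BernsteinWalsh

lemma eval_reflect_eq {K : Type*} [Field K] {p : Polynomial K} {d : ℕ} (hp : p.natDegree ≤ d)
    {x : K} (hx : x ≠ 0) : (p.reflect d).eval x = p.eval x⁻¹ * x ^ d := by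
  let _ : Invertible x⁻¹ := invertibleOfNonzero (inv_ne_zero hx)
  have h := Polynomial.eval₂_reflect_mul_pow (RingHom.id K) x⁻¹ d p hp
  simp only [invOf_eq_inv, inv_inv, Polynomial.eval₂_id] at h
  rw [← h, mul_assoc, ← mul_pow, inv_mul_cancel₀ hx, one_pow, mul_one]

lemma isOpen_re_pos : IsOpen {z : ℂ | 0 < z.re} :=
  isOpen_lt continuous_const Complex.continuous_re

lemma one_add_ne_zero_of_re_nonneg {z : ℂ} (hz : 0 ≤ z.re) : 1 + z ≠ 0 := by
  intro h
  have := congrArg Complex.re h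
  simp only [Complex.add_re, Complex.one_re, Complex.zero_re] at this
  linarith

lemma norm_cayley_le_one {z : ℂ} (hz : 0 ≤ z.re) : ‖(1 - z) / (1 + z)‖ ≤ 1 := by
  rw [norm_div, div_le_one (norm_pos_iff.2 (one_add_ne_zero_of_re_nonneg hz)),
    ← sq_le_sq₀ (norm_nonneg _) (norm_nonneg _), Complex.sq_norm, Complex.sq_norm]
  simp only [Complex.normSq_apply, Complex.sub_re, Complex.one_re, Complex.sub_im,
    Complex.one_im, Complex.add_re, Complex.add_im]
  nlinarith

/-- The difference quotient `(z ^ α - 1) / (z - 1)`, continued to `z = 1` by the derivative. -/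
noncomputable def cpowSlope (α : ℝ) : ℂ → ℂ := dslope (fun z => z ^ (α : ℂ)) 1

variable {α : ℝ}

lemma one_sub_mul_cpowSlope (α : ℝ) (z : ℂ) :
    (1 - z) * cpowSlope α z = 1 - z ^ (α : ℂ) := by
  have h : (z - 1) • cpowSlope α z = z ^ (α : ℂ) - 1 ^ (α : ℂ) := sub_smul_dslope _ 1 z
  rw [Complex.one_cpow, smul_eq_mul] at h
  linear_combination -h

lemma continuousAt_cpow_ofReal (hα0 : 0 < α) {z : ℂ} (hz : 0 ≤ z.re) :
    ContinuousAt (fun z : ℂ => z ^ (α : ℂ)) z :=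
  Complex.continuousAt_cpow_const_of_re_pos (Or.inl hz) (by simpa using hα0)

lemma differentiableAt_cpowSlope (α : ℝ) {z : ℂ} (hz : 0 < z.re) :
    DifferentiableAt ℂ (cpowSlope α) z := by
  have : DifferentiableOn ℂ (cpowSlope α) {z : ℂ | 0 < z.re} := by
    rw [cpowSlope, Complex.differentiableOn_dslope (isOpen_re_pos.mem_nhds (by simp))]
    exact fun w hw => (differentiableAt_id.cpow_const (Or.inl hw)).differentiableWithinAt
  exact this.differentiableAt (isOpen_re_pos.mem_nhds hz)

lemma continuousAt_cpowSlope (hα0 : 0 < α) {z : ℂ} (hz : 0 ≤ z.re) :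
    ContinuousAt (cpowSlope α) z := by
  rcases eq_or_ne z 1 with rfl | hz1
  · exact (differentiableAt_cpowSlope α (by simp)).continuousAt
  · exact (continuousAt_dslope_of_ne hz1).2 (continuousAt_cpow_ofReal hα0 hz)

lemma cpowSlope_ne_zero (hα0 : 0 < α) (hα2 : α < 2) {z : ℂ} (hz : 0 ≤ z.re) :
    cpowSlope α z ≠ 0 := by
  intro h0
  rcases eq_or_ne z 1 with rfl | hz1
  · have hderiv : HasDerivAt (fun z : ℂ => z ^ (α : ℂ)) ((α : ℂ) * 1 ^ ((α : ℂ) - 1) * 1) 1 :=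
      (hasDerivAt_id (1 : ℂ)).cpow_const (Or.inl (by simp))
    rw [cpowSlope, dslope_same, hderiv.deriv, Complex.one_cpow, mul_one, mul_one,
      Complex.ofReal_eq_zero] at h0
    exact hα0.ne' h0
  · have := one_sub_mul_cpowSlope α z
    rw [h0, mul_zero] at this
    exact cpow_ne_one hα0 hα2 hz hz1 (sub_eq_zero.1 this.symm).symm

/-- The function `p ((1 - z ^ α)⁻¹) * ((1 - z) / (1 + z)) ^ d`, for `p` of degree at most `d`,
written so that its singularity at `z = 1` is removed. -/
noncomputable def lensQuotient (α : ℝ) (p : Polynomial ℂ) (d : ℕ) (z : ℂ) : ℂ :=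
  (p.reflect d).eval (1 - z ^ (α : ℂ)) / (cpowSlope α z * (1 + z)) ^ d

variable {p : Polynomial ℂ} {d : ℕ}

lemma lensQuotient_eq (hα0 : 0 < α) (hα2 : α < 2) (hp : p.natDegree ≤ d) {z : ℂ}
    (hz : 0 ≤ z.re) (hz1 : z ≠ 1) :
    lensQuotient α p d z = p.eval (1 - z ^ (α : ℂ))⁻¹ * ((1 - z) / (1 + z)) ^ d := by
  have hpow : 1 - z ^ (α : ℂ) ≠ 0 := sub_ne_zero.2 (cpow_ne_one hα0 hα2 hz hz1).symm
  have hslope := cpowSlope_ne_zero hα0 hα2 hz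
  have hadd := one_add_ne_zero_of_re_nonneg hz
  rw [lensQuotient, eval_reflect_eq hp hpow, mul_div_assoc, ← div_pow,
    ← one_sub_mul_cpowSlope α z]
  congr 2
  field_simp

lemma norm_lensQuotient_le (hα0 : 0 < α) (hα2 : α < 2) (hp : p.natDegree ≤ d) {z : ℂ}
    (hz : 0 ≤ z.re) (hz1 : z ≠ 1) :
    ‖lensQuotient α p d z‖ ≤ ‖p.eval (1 - z ^ (α : ℂ))⁻¹‖ := by
  rw [lensQuotient_eq hα0 hα2 hp hz hz1, norm_mul, norm_pow]
  exact mul_le_of_le_one_right (norm_nonneg _)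
    (pow_le_one₀ (norm_nonneg _) (norm_cayley_le_one hz))

lemma diffContOnCl_lensQuotient (hα0 : 0 < α) (hα2 : α < 2) (p : Polynomial ℂ) (d : ℕ) :
    DiffContOnCl ℂ (lensQuotient α p d) {z : ℂ | 0 < z.re} := by
  have hden {z : ℂ} (hz : 0 ≤ z.re) : (cpowSlope α z * (1 + z)) ^ d ≠ 0 :=
    pow_ne_zero _ (mul_ne_zero (cpowSlope_ne_zero hα0 hα2 hz) (one_add_ne_zero_of_re_nonneg hz))
  refine ⟨fun z hz => DifferentiableAt.differentiableWithinAt ?_, ?_⟩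
  · refine DifferentiableAt.div ?_ ?_ (hden (le_of_lt hz))
    · exact (p.reflect d).differentiable.differentiableAt.comp z
        ((differentiableAt_const _).sub (differentiableAt_id.cpow_const (Or.inl hz)))
    · exact ((differentiableAt_cpowSlope α hz).mul (by fun_prop)).pow d
  · rw [Complex.closure_setOfPred_lt_re]
    refine fun z hz => ContinuousAt.continuousWithinAt (ContinuousAt.div ?_ ?_ (hden hz))
    · exact (p.reflect d).continuous.continuousAt.comp
        (continuousAt_const.sub (continuousAt_cpow_ofReal hα0 hz))
    · exact ((continuousAt_cpowSlope hα0 hz).mul (by fun_prop)).pow d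

lemma exists_norm_lensQuotient_le (hα1 : 1 ≤ α) (hα2 : α < 2) (hp : p.natDegree ≤ d) :
    ∃ C, ∀ z : ℂ, 0 ≤ z.re → 2 ≤ ‖z‖ → ‖lensQuotient α p d z‖ ≤ C := by
  obtain ⟨C, hC⟩ : ∃ C, ∀ z ∈ Metric.closedBall (0 : ℂ) 1, ‖p.eval z‖ ≤ C :=
    (isCompact_closedBall (0 : ℂ) 1).exists_bound_of_continuousOn p.continuous.continuousOn
  refine ⟨C, fun z hz hz2 => ?_⟩
  have hz1 : z ≠ 1 := by
    rintro rfl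
    norm_num at hz2
  have hpow : 2 ≤ ‖z ^ (α : ℂ)‖ := by
    rw [Complex.norm_cpow_real]
    exact hz2.trans (self_le_rpow_of_one_le (by linarith) hα1)
  have hsub : 1 ≤ ‖1 - z ^ (α : ℂ)‖ := by
    have := norm_sub_norm_le (z ^ (α : ℂ)) 1
    rw [norm_one, norm_sub_rev] at this
    linarith
  refine (norm_lensQuotient_le (by linarith) hα2 hp hz hz1).trans (hC _ ?_)
  rw [mem_closedBall_zero_iff, norm_inv]
  exact inv_le_one_of_one_le₀ hsub

variable {κ K : ℝ}

lemma norm_lensQuotient_le_of_re_eq_zero (hκ : 0 ≤ κ) (hp : p.natDegree ≤ d)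
    (hK : ∀ w ∈ lens κ, ‖p.eval w‖ ≤ K) {z : ℂ} (hz : z.re = 0) :
    ‖lensQuotient (lensExponent κ) p d z‖ ≤ K := by
  have hz1 : z ≠ 1 := by
    rintro rfl
    simp at hz
  have hmem := inv_one_add_mem_lens (neg_cpow_lensExponent_mem_sector hκ hz)
  rw [← sub_eq_add_neg] at hmem
  exact (norm_lensQuotient_le (zero_lt_one.trans_le (one_le_lensExponent hκ))
    (lensExponent_lt_two κ) hp hz.ge hz1).trans (hK _ hmem)

lemma norm_lensQuotient_le_of_norm_eval_le (hκ : 0 ≤ κ) (hp : p.natDegree ≤ d)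
    (hK : ∀ w ∈ lens κ, ‖p.eval w‖ ≤ K) {z : ℂ} (hz : 0 ≤ z.re) :
    ‖lensQuotient (lensExponent κ) p d z‖ ≤ K := by
  have hα1 := one_le_lensExponent hκ
  have hα2 := lensExponent_lt_two κ
  obtain ⟨C, hC⟩ := exists_norm_lensQuotient_le hα1 hα2 hp
  refine PhragmenLindelof.right_half_plane_of_bounded_on_real
    (diffContOnCl_lensQuotient (by linarith) hα2 p d) ⟨1, one_lt_two, 0, ?_⟩
    ⟨C, Filter.eventually_map.2 ?_⟩
    (fun y => norm_lensQuotient_le_of_re_eq_zero hκ hp hK (by simp)) hz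
  · refine Asymptotics.IsBigO.of_bound C ?_
    filter_upwards [Filter.mem_inf_of_left
        (tendsto_norm_cobounded_atTop.eventually_ge_atTop (2 : ℝ)),
      Filter.mem_inf_of_right (Filter.mem_principal_self _)] with z hz2 hz0
    simpa using hC z (le_of_lt hz0) hz2
  · filter_upwards [Filter.eventually_ge_atTop (2 : ℝ)] with x hx
    refine hC x (by simp only [Complex.ofReal_re]; linarith) ?_
    simpa only [Complex.norm_real, norm_eq_abs] using hx.trans (le_abs_self x)

theorem norm_eval_inv_one_sub_cpow_le (hκ : 0 ≤ κ) (hp : p.natDegree ≤ d)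
    (hK : ∀ w ∈ lens κ, ‖p.eval w‖ ≤ K) {ζ : ℂ} (hζ : 0 ≤ ζ.re) (hζ1 : ζ ≠ 1) :
    ‖p.eval (1 - ζ ^ (lensExponent κ : ℂ))⁻¹‖ ≤ K * (‖1 + ζ‖ / ‖1 - ζ‖) ^ d := by
  have hle := norm_lensQuotient_le_of_norm_eval_le hκ hp hK hζ
  have hsub : 0 < ‖1 - ζ‖ := norm_pos_iff.2 (sub_ne_zero.2 hζ1.symm)
  have hadd : 0 < ‖1 + ζ‖ := norm_pos_iff.2 (one_add_ne_zero_of_re_nonneg hζ)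
  rw [lensQuotient_eq (zero_lt_one.trans_le (one_le_lensExponent hκ)) (lensExponent_lt_two κ) hp
    hζ hζ1, norm_mul, norm_pow, norm_div, ← le_div_iff₀ (by positivity)] at hle
  rwa [← inv_div ‖1 - ζ‖, inv_pow, ← div_eq_mul_inv]

end BernsteinWalsh

section MarkovInequality

lemma norm_sub_one_div_le {z : ℂ} {a : ℝ} (ha : 0 ≤ a) (hz : ‖z - 1‖ ≤ a / (1 + a)) :
    z ≠ 0 ∧ ‖(z - 1) / z‖ ≤ a := by
  have hnorm : 1 / (1 + a) ≤ ‖z‖ := by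
    have := norm_sub_norm_le 1 (1 - z)
    rw [norm_one, sub_sub_cancel, norm_sub_rev] at this
    have : 1 - a / (1 + a) = 1 / (1 + a) := by field_simp; ring
    linarith
  have hpos : 0 < ‖z‖ := lt_of_lt_of_le (by positivity) hnorm
  refine ⟨norm_pos_iff.1 hpos, ?_⟩
  rw [norm_div, div_le_iff₀ hpos]
  calc ‖z - 1‖ ≤ a * (1 / (1 + a)) := by rwa [mul_one_div]
    _ ≤ a * ‖z‖ := by gcongr

lemma norm_one_add_div_norm_one_sub_le {ζ : ℂ} {ρ : ℝ} (hζ : ‖ζ‖ ≤ ρ) (hρ : ρ < 1) :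
    ‖1 + ζ‖ / ‖1 - ζ‖ ≤ (1 + ρ) / (1 - ρ) := by
  have hadd := norm_add_le 1 ζ
  have hsub := norm_sub_norm_le 1 ζ
  rw [norm_one] at hadd hsub
  refine div_le_div₀ ?_ ?_ ?_ ?_ <;> linarith [norm_nonneg ζ]

variable {κ K : ℝ} {p : Polynomial ℂ} {d : ℕ}

lemma nonneg_of_norm_eval_le_on_lens (hK : ∀ w ∈ lens κ, ‖p.eval w‖ ≤ K) : 0 ≤ K :=
  (norm_nonneg _).trans (hK _ (ofReal_mem_lens le_rfl zero_le_one))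

lemma norm_eval_inv_one_sub_le (hκ : 0 ≤ κ) (hp : p.natDegree ≤ d)
    (hK : ∀ w ∈ lens κ, ‖p.eval w‖ ≤ K) {ρ : ℝ} (hρ0 : 0 < ρ) (hρ1 : ρ < 1) {m : ℂ}
    (hm : ‖m‖ ≤ ρ ^ lensExponent κ) :
    ‖p.eval (1 - m)⁻¹‖ ≤ K * ((1 + ρ) / (1 - ρ)) ^ d := by
  have hK0 := nonneg_of_norm_eval_le_on_lens hK
  have hα0 : 0 < lensExponent κ := zero_lt_one.trans_le (one_le_lensExponent hκ)
  rcases le_total (lensExponent κ * (π / 2)) |m.arg| with harg | harg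
  · have hmem := inv_one_add_mem_lens (neg_mem_sector_of_le_abs_arg harg)
    rw [← sub_eq_add_neg] at hmem
    refine (hK _ hmem).trans (le_mul_of_one_le_right hK0 (one_le_pow₀ ?_))
    rw [le_div_iff₀ (by linarith)]
    linarith
  · obtain ⟨ζ, hζre, rfl, hζnorm⟩ := exists_cpow_eq hα0 harg
    have hζρ : ‖ζ‖ ≤ ρ := by
      rw [hζnorm]
      calc _ ≤ (ρ ^ lensExponent κ) ^ (lensExponent κ)⁻¹ := by gcongr
        _ = ρ := rpow_rpow_inv hρ0.le hα0.ne'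
    have hζ1 : ζ ≠ 1 := by
      rintro rfl
      rw [norm_one] at hζρ
      linarith
    refine (norm_eval_inv_one_sub_cpow_le hκ hp hK hζre hζ1).trans ?_
    have := norm_one_add_div_norm_one_sub_le hζρ hρ1
    gcongr K * ?_ ^ d

lemma norm_eval_le_of_norm_sub_one_le (hκ : 0 ≤ κ) (hp : p.natDegree ≤ d)
    (hK : ∀ w ∈ lens κ, ‖p.eval w‖ ≤ K) {ρ : ℝ} (hρ0 : 0 < ρ) (hρ1 : ρ < 1) {z : ℂ}
    (hz : ‖z - 1‖ ≤ ρ ^ lensExponent κ / (1 + ρ ^ lensExponent κ)) :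
    ‖p.eval z‖ ≤ K * ((1 + ρ) / (1 - ρ)) ^ d := by
  obtain ⟨hz0, hm⟩ := norm_sub_one_div_le (by positivity) hz
  have hinv : (1 - (z - 1) / z)⁻¹ = z := by field_simp; ring
  simpa only [hinv] using norm_eval_inv_one_sub_le hκ hp hK hρ0 hρ1 hm

lemma norm_derivative_eval_one_le_of_radius (hκ : 0 ≤ κ) (hp : p.natDegree ≤ d)
    (hK : ∀ w ∈ lens κ, ‖p.eval w‖ ≤ K) {ρ : ℝ} (hρ0 : 0 < ρ) (hρ1 : ρ < 1) :
    ‖p.derivative.eval 1‖ ≤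
      K * ((1 + ρ) / (1 - ρ)) ^ d * ((ρ ^ lensExponent κ)⁻¹ + 1) := by
  have ha : 0 < ρ ^ lensExponent κ := rpow_pos_of_pos hρ0 _
  have hcauchy := Complex.norm_deriv_le_of_forall_mem_sphere_norm_le (c := 1)
    (f := fun z => p.eval z) (div_pos ha (by positivity)) p.differentiable.diffContOnCl
    fun z hz => norm_eval_le_of_norm_sub_one_le hκ hp hK hρ0 hρ1 (mem_sphere_iff_norm.1 hz).le
  rw [Polynomial.deriv, div_div_eq_mul_div, mul_div_assoc] at hcauchy
  refine hcauchy.trans_eq ?_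
  field_simp

lemma one_add_div_one_sub_le_exp {ρ : ℝ} (hρ0 : 0 ≤ ρ) (hρ1 : ρ < 1) :
    (1 + ρ) / (1 - ρ) ≤ exp (2 * ρ / (1 - ρ ^ 2)) := by
  have hsub : 0 < 1 - ρ := by linarith
  have hpos : 0 < (1 + ρ) / (1 - ρ) := by positivity
  have hlog : 0 ≤ log ((1 + ρ) / (1 - ρ)) := by
    refine log_nonneg ?_
    rw [le_div_iff₀ hsub]
    linarith
  have hsinh : log ((1 + ρ) / (1 - ρ)) ≤ 2 * ρ / (1 - ρ ^ 2) := by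
    refine (self_le_sinh_iff.2 hlog).trans_eq ?_
    have : 1 - ρ ^ 2 ≠ 0 := by nlinarith
    rw [sinh_log hpos]
    field_simp
    ring
  exact (log_le_iff_le_exp hpos).1 hsinh

lemma exp_twenty_five_sixteenths_le : exp (25 / 16) ≤ 49 / 10 := by
  refine le_of_pow_le_pow_left₀ (n := 16) (by norm_num) (by norm_num) ?_
  calc exp (25 / 16) ^ 16 = exp 1 ^ 25 := by
        rw [← exp_nat_mul, ← exp_nat_mul]; norm_num
    _ ≤ 2.7182818286 ^ 25 := by gcongr; exact exp_one_lt_d9.le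
    _ ≤ (49 / 10) ^ 16 := by norm_num

lemma one_add_div_one_sub_pow_le (hd : 4 ≤ d) :
    ((1 + 3 / (4 * d : ℝ)) / (1 - 3 / (4 * d : ℝ))) ^ d ≤ 49 / 10 := by
  have hd' : (4 : ℝ) ≤ d := by exact_mod_cast hd
  set ρ : ℝ := 3 / (4 * d) with hρ
  have hρ0 : 0 ≤ ρ := by positivity
  have hρ1 : ρ ≤ 3 / 16 := by
    rw [hρ, div_le_div_iff₀ (by positivity) (by norm_num)]
    linarith
  have hdρ : d * (2 * ρ) = 3 / 2 := by
    rw [hρ]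
    field_simp
    norm_num
  calc ((1 + ρ) / (1 - ρ)) ^ d ≤ exp (2 * ρ / (1 - ρ ^ 2)) ^ d := by
        gcongr
        · exact div_nonneg (by linarith) (by linarith)
        · exact one_add_div_one_sub_le_exp hρ0 (by linarith)
    _ = exp (3 / 2 / (1 - ρ ^ 2)) := by rw [← exp_nat_mul, ← mul_div_assoc, hdρ]
    _ ≤ exp (25 / 16) := by
        rw [exp_le_exp, div_le_iff₀ (by nlinarith)]
        nlinarith
    _ ≤ 49 / 10 := exp_twenty_five_sixteenths_le

lemma natCast_le_rpow_lensExponent (hκ : 0 ≤ κ) (hd : 1 ≤ d) :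
    (d : ℝ) ≤ (d : ℝ) ^ lensExponent κ :=
  self_le_rpow_of_one_le (by exact_mod_cast hd) (one_le_lensExponent hκ)

lemma norm_derivative_eval_one_le_of_four_le (hκ : 0 ≤ κ) (hd : 4 ≤ d) (hp : p.natDegree ≤ d)
    (hK : ∀ w ∈ lens κ, ‖p.eval w‖ ≤ K) :
    ‖p.derivative.eval 1‖ ≤ 10 * (d : ℝ) ^ lensExponent κ * K := by
  set α := lensExponent κ
  have hd' : (4 : ℝ) ≤ d := by exact_mod_cast hd
  have hK0 := nonneg_of_norm_eval_le_on_lens hK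
  have hdα : (d : ℝ) ≤ d ^ α := natCast_le_rpow_lensExponent hκ (by omega)
  have hinv : ((3 / (4 * d) : ℝ) ^ α)⁻¹ ≤ 16 / 9 * (d : ℝ) ^ α := by
    rw [← inv_rpow (by positivity), inv_div, mul_comm (4 : ℝ), mul_div_assoc, mul_comm,
      mul_rpow (by norm_num) (by positivity)]
    gcongr
    calc (4 / 3 : ℝ) ^ α ≤ (4 / 3 : ℝ) ^ (2 : ℝ) :=
          rpow_le_rpow_of_exponent_le (by norm_num) (lensExponent_lt_two κ).le
      _ = 16 / 9 := by norm_num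
  calc ‖p.derivative.eval 1‖
      ≤ K * ((1 + 3 / (4 * d : ℝ)) / (1 - 3 / (4 * d : ℝ))) ^ d *
          (((3 / (4 * d) : ℝ) ^ α)⁻¹ + 1) :=
        norm_derivative_eval_one_le_of_radius hκ hp hK (by positivity)
          (by rw [div_lt_one (by positivity)]; linarith)
    _ ≤ K * (49 / 10) * (16 / 9 * (d : ℝ) ^ α + 1 / 4 * (d : ℝ) ^ α) := by
        gcongr
        · exact one_add_div_one_sub_pow_le hd
        · linarith
    _ ≤ 10 * (d : ℝ) ^ α * K := by nlinarith [mul_nonneg hK0 (by linarith : (0 : ℝ) ≤ d ^ α)]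

lemma norm_derivative_eval_one_le_of_natDegree_le_one (hp : p.natDegree ≤ 1)
    (hK : ∀ t : ℝ, 0 ≤ t → t ≤ 1 → ‖p.eval (t : ℂ)‖ ≤ K) : ‖p.derivative.eval 1‖ ≤ 2 * K := by
  obtain ⟨a, b, rfl⟩ := Polynomial.exists_eq_X_add_C_of_natDegree_le_one hp
  have hdiff : (Polynomial.C a * Polynomial.X + Polynomial.C b).derivative.eval 1 =
      (Polynomial.C a * Polynomial.X + Polynomial.C b).eval ((1 : ℝ) : ℂ) -
        (Polynomial.C a * Polynomial.X + Polynomial.C b).eval ((0 : ℝ) : ℂ) := by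
    simp
  rw [hdiff, two_mul]
  exact (norm_sub_le _ _).trans
    (add_le_add (hK 1 zero_le_one le_rfl) (hK 0 le_rfl zero_le_one))

lemma norm_derivative_eval_one_le_of_natDegree_le_three (hp : p.natDegree ≤ 3)
    (hK : ∀ t : ℝ, 0 ≤ t → t ≤ 1 → ‖p.eval (t : ℂ)‖ ≤ K) :
    ‖p.derivative.eval 1‖ ≤ 18 * K := by
  -- Lagrange interpolation at the nodes `1`, `3 / 4`, `1 / 4`, `0`, differentiated at `1`
  have hinterp : p.derivative.eval 1 = ((19 / 3 : ℝ) : ℂ) * p.eval ((1 : ℝ) : ℂ)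
      - ((8 : ℝ) : ℂ) * p.eval ((3 / 4 : ℝ) : ℂ) + ((8 / 3 : ℝ) : ℂ) * p.eval ((1 / 4 : ℝ) : ℂ)
      - p.eval ((0 : ℝ) : ℂ) := by
    rw [p.as_sum_range_C_mul_X_pow' (n := 4) (by omega)]
    simp only [Finset.sum_range_succ, Finset.sum_range_zero, Polynomial.derivative_add,
      Polynomial.derivative_C_mul_X_pow, Polynomial.derivative_zero, Polynomial.eval_add,
      Polynomial.eval_mul, Polynomial.eval_C, Polynomial.eval_pow, Polynomial.eval_X,
      Polynomial.eval_zero]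
    push_cast
    ring
  have hbound {c t : ℝ} (hc : 0 ≤ c) (ht0 : 0 ≤ t) (ht1 : t ≤ 1) :
      ‖(c : ℂ) * p.eval (t : ℂ)‖ ≤ c * K := by
    rw [norm_mul, Complex.norm_real, norm_of_nonneg hc]
    exact mul_le_mul_of_nonneg_left (hK t ht0 ht1) hc
  rw [hinterp]
  calc _ ≤ 19 / 3 * K + 8 * K + 8 / 3 * K + K :=
        (norm_sub_le _ _).trans <| add_le_add ((norm_add_le _ _).trans <| add_le_add
          ((norm_sub_le _ _).trans <| add_le_add
            (hbound (by norm_num) (by norm_num) (by norm_num))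
            (hbound (by norm_num) (by norm_num) (by norm_num)))
          (hbound (by norm_num) (by norm_num) (by norm_num)))
          (hK 0 le_rfl zero_le_one)
    _ = 18 * K := by ring

theorem norm_derivative_eval_one_le_of_lens (hκ : 0 ≤ κ) (hd : 1 ≤ d) (hp : p.natDegree ≤ d)
    (hK : ∀ w ∈ lens κ, ‖p.eval w‖ ≤ K) :
    ‖p.derivative.eval 1‖ ≤ 10 * (d : ℝ) ^ lensExponent κ * K := by
  have hK0 := nonneg_of_norm_eval_le_on_lens hK
  have hreal : ∀ t : ℝ, 0 ≤ t → t ≤ 1 → ‖p.eval (t : ℂ)‖ ≤ K := fun t ht0 ht1 =>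
    hK _ (ofReal_mem_lens ht0 ht1)
  have hdα := natCast_le_rpow_lensExponent hκ hd
  rcases le_or_gt 4 d with hd4 | hd4
  · exact norm_derivative_eval_one_le_of_four_le hκ hd4 hp hK
  rcases hd.eq_or_lt with rfl | hd1
  · refine (norm_derivative_eval_one_le_of_natDegree_le_one hp hreal).trans ?_
    norm_num
    linarith
  · have : (2 : ℝ) ≤ d := by exact_mod_cast hd1
    refine (norm_derivative_eval_one_le_of_natDegree_le_three (by omega) hreal).trans ?_
    nlinarith

end MarkovInequality

section Duality

lemma apply_eq_sum_mul_apply_single {𝕜 ι : Type*} [CommSemiring 𝕜] [TopologicalSpace 𝕜]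
    [Fintype ι] [DecidableEq ι] (f : (ι → 𝕜) →L[𝕜] 𝕜) (y : ι → 𝕜) :
    f y = ∑ i, y i * f (Pi.single i 1) := by
  conv_lhs => rw [pi_eq_sum_univ' y]
  simp only [map_sum, map_smul, smul_eq_mul]

lemma apply_pow_eq_eval_ofFn {d : ℕ} (f : (Fin (d + 1) → ℂ) →L[ℂ] ℂ) (w : ℂ) :
    f (fun n => w ^ (n : ℕ)) =
      (Polynomial.ofFn (d + 1) fun n => f (Pi.single n 1)).eval w := by
  rw [apply_eq_sum_mul_apply_single, Polynomial.ofFn_eq_sum_monomial, Polynomial.eval_finsetSum]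
  simp only [Polynomial.eval_monomial, mul_comm]

lemma apply_natCast_eq_derivative_eval_ofFn {d : ℕ} (f : (Fin (d + 1) → ℂ) →L[ℂ] ℂ) :
    f (fun n => ((n : ℕ) : ℂ)) =
      (Polynomial.ofFn (d + 1) fun n => f (Pi.single n 1)).derivative.eval 1 := by
  rw [apply_eq_sum_mul_apply_single, Polynomial.ofFn_eq_sum_monomial, Polynomial.derivative_sum,
    Polynomial.eval_finsetSum]
  simp only [Polynomial.derivative_monomial, Polynomial.eval_monomial, one_pow, mul_one,
    mul_comm (f _)]

/-- The dual form of the Markov inequality on the lens: evaluation at a point of the lens sends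
`z ^ n` to `w ^ n`, and differentiation at `1` sends it to `n`. -/
theorem inv_smul_natCast_mem_of_lens {κ : ℝ} (hκ : 0 ≤ κ) {d : ℕ} (hd : 1 ≤ d)
    {S : Set (Fin (d + 1) → ℂ)} (hconv : Convex ℝ S) (hclosed : IsClosed S)
    (hbal : Balanced ℂ S) (hS : ∀ w ∈ lens κ, (fun n : Fin (d + 1) => w ^ (n : ℕ)) ∈ S) :
    (10 * (d : ℝ) ^ lensExponent κ)⁻¹ • (fun n : Fin (d + 1) => ((n : ℕ) : ℂ)) ∈ S := by
  set M : ℝ := 10 * (d : ℝ) ^ lensExponent κ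
  have hM : 0 < M := by positivity
  by_contra hcon
  obtain ⟨f, u, hfS, hfu⟩ :=
    RCLike.geometric_hahn_banach_closed_point (𝕜 := ℂ) hconv hclosed hcon
  have hbound : ∀ w ∈ lens κ,
      ‖(Polynomial.ofFn (d + 1) fun n => f (Pi.single n 1)).eval w‖ ≤ u := by
    intro w hw
    obtain ⟨σ, hσ, hσw⟩ := Complex.exists_norm_eq_mul_self (f fun n => w ^ (n : ℕ))
    have hlt := hfS _ (balanced_iff_smul_mem.1 hbal hσ.le (hS w hw))
    rw [map_smul, smul_eq_mul, ← hσw] at hlt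
    rw [← apply_pow_eq_eval_ofFn]
    exact (RCLike.ofReal_re (K := ℂ) _).ge.trans hlt.le
  have hmarkov := norm_derivative_eval_one_le_of_lens hκ hd
    (Nat.lt_succ_iff.1 (Polynomial.ofFn_natDegree_lt (Nat.succ_pos d) _)) hbound
  rw [← apply_natCast_eq_derivative_eval_ofFn] at hmarkov
  have hle : M⁻¹ * (f fun n => ((n : ℕ) : ℂ)).re ≤ u :=
    (inv_mul_le_iff₀ hM).2 ((Complex.re_le_norm _).trans hmarkov)
  rw [ContinuousLinearMap.map_smul_of_tower] at hfu
  exact hfu.not_ge ((Complex.smul_re _ _).trans_le hle)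

end Duality

section PolynomialGrowth

open MvPolynomial (eval)

/-- Growth of at most polynomial order at `+∞`, required of the profiles which are composed with
polynomials under the Gaussian integral. -/
def HasPolynomialGrowth (φ : ℝ → ℝ) : Prop := ∃ N : ℕ, φ =O[Filter.atTop] fun s => s ^ N

variable {φ : ℝ → ℝ}

lemma HasPolynomialGrowth.exists_abs_le (hφ : HasPolynomialGrowth φ)
    (hcont : ContinuousOn φ (Set.Ici 0)) :
    ∃ C : ℝ, ∃ N : ℕ, ∀ s, 0 ≤ s → |φ s| ≤ C * (1 + s) ^ N := by
  obtain ⟨N, hN⟩ := hφ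
  obtain ⟨C₁, hC₁⟩ := hN.bound
  obtain ⟨T, hT⟩ := Filter.eventually_atTop.1 hC₁
  obtain ⟨C₂, hC₂⟩ := (isCompact_Icc (a := (0 : ℝ)) (b := T)).exists_bound_of_continuousOn
    (hcont.mono Set.Icc_subset_Ici_self)
  refine ⟨max |C₁| |C₂|, N, fun s hs => ?_⟩
  have hone : 1 ≤ (1 + s) ^ N := one_le_pow₀ (by linarith)
  rcases le_total s T with hsT | hTs
  · calc |φ s| ≤ |C₂| * 1 := by rw [mul_one]; exact (hC₂ s ⟨hs, hsT⟩).trans (le_abs_self _)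
      _ ≤ max |C₁| |C₂| * (1 + s) ^ N := by gcongr; exact le_max_right _ _
  · calc |φ s| ≤ C₁ * ‖s ^ N‖ := hT s hTs
      _ ≤ max |C₁| |C₂| * (1 + s) ^ N := by
        rw [norm_pow, norm_of_nonneg hs]
        gcongr
        · exact (le_abs_self _).trans (le_max_left _ _)
        · linarith

lemma HasPolynomialGrowth.exists_abs_le_eval (hφ : HasPolynomialGrowth φ)
    (hcont : ContinuousOn φ (Set.Ici 0)) {σ : Type*} (G : MvPolynomial σ ℝ) :
    ∃ H : MvPolynomial σ ℝ, ∀ x r, 0 ≤ r → r ≤ eval x G → |φ r| ≤ eval x H := by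
  obtain ⟨C, N, hCN⟩ := hφ.exists_abs_le hcont
  have hC : 0 ≤ C := by simpa using (abs_nonneg _).trans (hCN 0 le_rfl)
  refine ⟨MvPolynomial.C C * (1 + G) ^ N, fun x r hr hrG => (hCN r hr).trans ?_⟩
  simp only [map_mul, map_pow, map_add, map_one, MvPolynomial.eval_C]
  gcongr

end PolynomialGrowth

section GaussianCalculus

open MvPolynomial (eval pderiv X)

lemma hasDerivAt_gaussianPDFReal (μ : ℝ) (v : NNReal) (x : ℝ) :
    HasDerivAt (gaussianPDFReal μ v) (-(x - μ) / v * gaussianPDFReal μ v x) x := by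
  have hexp : HasDerivAt (fun y : ℝ => -(y - μ) ^ 2 / (2 * (v : ℝ))) (-(x - μ) / v) x := by
    refine ((((hasDerivAt_id' x).sub_const μ).pow 2).neg.div_const _).congr_deriv ?_
    rw [pow_one]
    push_cast
    ring
  rw [gaussianPDFReal_def]
  refine (hexp.exp.const_mul (√(2 * π * (v : ℝ)))⁻¹).congr_deriv ?_
  ring

lemma integrable_gaussianPDFReal_smul {μ : ℝ} {v : NNReal} (hv : v ≠ 0) {f : ℝ → ℝ}
    (hf : Integrable f (gaussianReal μ v)) : Integrable fun x => gaussianPDFReal μ v x • f x := by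
  rw [gaussianReal_of_var_ne_zero _ hv, integrable_withDensity_iff_integrable_smul'
    (measurable_gaussianPDF μ v) (Filter.Eventually.of_forall fun _ => gaussianPDF_lt_top)] at hf
  simpa only [toReal_gaussianPDF] using hf

lemma integral_gaussianReal_mul_deriv_sub {μ : ℝ} {v : NNReal} {f f' : ℝ → ℝ}
    (hderiv : ∀ x, HasDerivAt f (f' x) x) (hf : Integrable f (gaussianReal μ v))
    (hf' : Integrable (fun x => v * f' x - (x - μ) * f x) (gaussianReal μ v)) :
    ∫ x, (v * f' x - (x - μ) * f x) ∂(gaussianReal μ v) = 0 := by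
  rcases eq_or_ne v 0 with rfl | hv
  · simp
  have hv' : (v : ℝ) ≠ 0 := by exact_mod_cast hv
  rw [integral_gaussianReal_eq_integral_smul hv]
  refine integral_eq_zero_of_hasDerivAt_of_integrable
    (f := fun x => v * (gaussianPDFReal μ v x • f x)) (fun x => ?_)
    (integrable_gaussianPDFReal_smul hv hf') ((integrable_gaussianPDFReal_smul hv hf).const_mul _)
  refine (((hasDerivAt_gaussianPDFReal μ v x).mul (hderiv x)).const_mul (v : ℝ)).congr_deriv ?_
  rw [smul_eq_mul]
  field_simp
  ring

variable {k : ℕ}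

instance : IsProbabilityMeasure (gaussMeasure k) := by
  unfold gaussMeasure
  infer_instance

lemma integrable_eval_gaussMeasure (Q : MvPolynomial (Fin k) ℝ) :
    Integrable (fun x => eval x Q) (gaussMeasure k) := by
  simp_rw [MvPolynomial.eval_eq']
  refine integrable_finsetSum _ fun m _ => Integrable.const_mul ?_ _
  refine Integrable.fintype_prod (f := fun i t => t ^ m i) fun i => ?_
  exact (memLp_id_gaussianReal' (μ := 0) (v := 1) (m i : ENNReal) (by simp)).integrable_norm_pow'
    |>.mono (by fun_prop) (by simp)

lemma integral_gaussMeasure_deriv_sub (j : Fin k) {F F' : (Fin k → ℝ) → ℝ}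
    (hderiv : ∀ x, HasDerivAt (fun t => F (Function.update x j t)) (F' x) (x j))
    (hF : Integrable F (gaussMeasure k))
    (hF' : Integrable (fun x => F' x - x j * F x) (gaussMeasure k)) :
    ∫ x, (F' x - x j * F x) ∂(gaussMeasure k) = 0 := by
  obtain _ | n := k
  · exact j.elim0
  have hmp := (measurePreserving_piFinSuccAbove (fun _ : Fin (n + 1) => gaussianReal 0 1) j).symm
  have hemb :=
    (MeasurableEquiv.piFinSuccAbove (fun _ : Fin (n + 1) => ℝ) j).symm.measurableEmbedding
  unfold gaussMeasure at hF hF' ⊢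
  rw [← hmp.integrable_comp_emb hemb] at hF hF'
  rw [← hmp.integral_comp hemb]
  refine (integral_prod_symm _ hF').trans (integral_eq_zero_of_ae ?_)
  filter_upwards [hF.prod_left_ae, hF'.prod_left_ae] with y hy hy'
  simp only [Function.comp_def, MeasurableEquiv.piFinSuccAbove_symm_apply, Fin.insertNthEquiv_apply,
    Fin.insertNth_apply_same, Pi.zero_apply] at hy hy' ⊢
  have hstein := integral_gaussianReal_mul_deriv_sub (μ := 0) (v := 1)
    (f := fun t => F (j.insertNth t y)) (f' := fun t => F' (j.insertNth t y))
    (fun t => by simpa using hderiv (j.insertNth t y)) hy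
  simp only [NNReal.coe_one, one_mul, sub_zero] at hstein
  exact hstein hy'

lemma hasDerivAt_eval_update {σ : Type*} [DecidableEq σ] (Q : MvPolynomial σ ℝ) (j : σ)
    (x : σ → ℝ) :
    HasDerivAt (fun t => eval (Function.update x j t) Q) (eval x (pderiv j Q)) (x j) := by
  induction Q using MvPolynomial.induction_on with
  | C a => simpa using hasDerivAt_const (x j) a
  | add p q hp hq => simpa using hp.fun_add hq
  | mul_X p i hp =>
    have hX : HasDerivAt (fun t => Function.update x j t i) ((Pi.single j (1 : ℝ) : σ → ℝ) i)
        (x j) :=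
      hasDerivAt_pi.1 (hasDerivAt_update x j (x j)) i
    simp only [map_mul, MvPolynomial.eval_X, Derivation.leibniz, MvPolynomial.pderiv_X, map_add,
      smul_eq_mul]
    refine (hp.fun_mul hX).congr_deriv ?_
    rcases eq_or_ne i j with rfl | hij
    · simp [add_comm, mul_comm]
    · simp [hij, mul_comm]

lemma abs_eval_le_eval_one_add_sq {σ : Type*} (Q : MvPolynomial σ ℝ) (x : σ → ℝ) :
    |eval x Q| ≤ eval x (1 + Q ^ 2) := by
  simp only [map_add, map_one, map_pow]
  nlinarith [sq_abs (eval x Q), sq_nonneg (|eval x Q| - 1), abs_nonneg (eval x Q)]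

variable {φ : ℝ → ℝ}

lemma HasPolynomialGrowth.integrable_comp_mul_eval (hφ : HasPolynomialGrowth φ)
    (hcont : ContinuousOn φ (Set.Ici 0)) {u : (Fin k → ℝ) → ℝ} (hu : Continuous u)
    (hu0 : ∀ x, 0 ≤ u x) {G : MvPolynomial (Fin k) ℝ} (hG : ∀ x, u x ≤ eval x G)
    (H : MvPolynomial (Fin k) ℝ) :
    Integrable (fun x => φ (u x) * eval x H) (gaussMeasure k) := by
  obtain ⟨D, hD⟩ := hφ.exists_abs_le_eval hcont G
  refine (integrable_eval_gaussMeasure (D * (1 + H ^ 2))).mono'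
    ((hcont.comp_continuous hu hu0).mul (MvPolynomial.continuous_eval H)).aestronglyMeasurable
    (Filter.Eventually.of_forall fun x => ?_)
  have hDx := hD x (u x) (hu0 x) (hG x)
  rw [norm_mul, map_mul]
  exact mul_le_mul hDx (abs_eval_le_eval_one_add_sq H x) (abs_nonneg _)
    ((abs_nonneg _).trans hDx)

lemma HasPolynomialGrowth.integrable_comp (hφ : HasPolynomialGrowth φ)
    (hcont : ContinuousOn φ (Set.Ici 0)) {u : (Fin k → ℝ) → ℝ} (hu : Continuous u)
    (hu0 : ∀ x, 0 ≤ u x) {G : MvPolynomial (Fin k) ℝ} (hG : ∀ x, u x ≤ eval x G) :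
    Integrable (fun x => φ (u x)) (gaussMeasure k) := by
  simpa using hφ.integrable_comp_mul_eval hcont hu hu0 hG 1

/-- The Ornstein–Uhlenbeck operator as an endomorphism of the space of polynomials. -/
noncomputable def ouOperator (σ : Type*) [Fintype σ] :
    MvPolynomial σ ℝ →ₗ[ℝ] MvPolynomial σ ℝ :=
  ∑ j, ((pderiv j).toLinearMap ∘ₗ (pderiv j).toLinearMap -
    LinearMap.mulLeft ℝ (X j) ∘ₗ (pderiv j).toLinearMap)

lemma ouOperator_apply {σ : Type*} [Fintype σ] (P : MvPolynomial σ ℝ) :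
    ouOperator σ P = ∑ j, (pderiv j (pderiv j P) - X j * pderiv j P) := by
  simp [ouOperator]

/-- The carré du champ `∇f · ∇g` of the Ornstein–Uhlenbeck operator. -/
noncomputable def carreDuChamp {σ : Type*} [Fintype σ] (f g : MvPolynomial σ ℝ) :
    MvPolynomial σ ℝ :=
  ∑ j, pderiv j f * pderiv j g

lemma integral_comp_eval_mul_ouOperator {φ' : ℝ → ℝ} {G : MvPolynomial (Fin k) ℝ}
    (hG : ∀ x, 0 ≤ eval x G) (hderiv : ∀ q, 0 ≤ q → HasDerivAt φ (φ' q) q)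
    (hcont : ContinuousOn φ' (Set.Ici 0)) (hφ : HasPolynomialGrowth φ)
    (hφ' : HasPolynomialGrowth φ') (h f : MvPolynomial (Fin k) ℝ) :
    ∫ x, φ (eval x G) * eval x (h * ouOperator (Fin k) f) ∂(gaussMeasure k) =
      -∫ x, (φ' (eval x G) * eval x (h * carreDuChamp G f) +
        φ (eval x G) * eval x (carreDuChamp h f)) ∂(gaussMeasure k) := by
  have hint (Q) : Integrable (fun x => φ (eval x G) * eval x Q) (gaussMeasure k) :=
    hφ.integrable_comp_mul_eval (fun q hq => (hderiv q hq).continuousAt.continuousWithinAt)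
      (MvPolynomial.continuous_eval G) hG (fun _ => le_rfl) Q
  have hint' (Q) : Integrable (fun x => φ' (eval x G) * eval x Q) (gaussMeasure k) :=
    hφ'.integrable_comp_mul_eval hcont (MvPolynomial.continuous_eval G) hG (fun _ => le_rfl) Q
  set F : Fin k → (Fin k → ℝ) → ℝ := fun j x => φ (eval x G) * eval x (h * pderiv j f) with hF
  set F' : Fin k → (Fin k → ℝ) → ℝ := fun j x =>
    φ' (eval x G) * eval x (pderiv j G * (h * pderiv j f)) +
      φ (eval x G) * eval x (pderiv j (h * pderiv j f)) with hF'
  have hFderiv (j x) : HasDerivAt (fun t => F j (Function.update x j t)) (F' j x) (x j) := by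
    have houter : HasDerivAt φ (φ' (eval x G)) (eval (Function.update x j (x j)) G) := by
      rw [Function.update_eq_self]
      exact hderiv _ (hG x)
    refine ((houter.comp (x j) (hasDerivAt_eval_update G j x)).mul
      (hasDerivAt_eval_update (h * pderiv j f) j x)).congr_deriv ?_
    simp only [hF', map_mul, Function.update_eq_self, Function.comp_apply]
    ring
  have hFint (j) : Integrable (fun x => F' j x - x j * F j x) (gaussMeasure k) := by
    refine ((hint' _).add (hint _)).sub ((hint (X j * (h * pderiv j f))).congr ?_)
    refine Filter.Eventually.of_forall fun x => ?_
    simp only [hF, map_mul, MvPolynomial.eval_X]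
    ring
  rw [eq_neg_iff_add_eq_zero]
  refine (integral_add (hint _) ((hint' _).add (hint _))).symm.trans ?_
  calc _ = ∫ x, ∑ j, (F' j x - x j * F j x) ∂(gaussMeasure k) := by
        refine integral_congr_ae (Filter.Eventually.of_forall fun x => ?_)
        simp only [hF, hF', Pi.add_apply, carreDuChamp, ouOperator_apply, map_mul, map_sum,
          map_add, map_sub, Derivation.leibniz, smul_eq_mul, MvPolynomial.eval_X, Finset.mul_sum,
          ← Finset.sum_add_distrib]
        exact Finset.sum_congr rfl fun j _ => by ring
    _ = 0 := by
        rw [integral_finsetSum _ fun j _ => hFint j]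
        exact Finset.sum_eq_zero fun j _ =>
          integral_gaussMeasure_deriv_sub j (hFderiv j) (hint _) (hFint j)

end GaussianCalculus

section Eigendecomposition

open MvPolynomial (pderiv X coeff)

lemma ker_aeval_prod_X_sub_C {ι K V : Type*} [Field K] [AddCommGroup V] [Module K V]
    (f : Module.End K V) (s : Finset ι) {μ : ι → K} (hμ : Function.Injective μ) :
    LinearMap.ker (Polynomial.aeval f (∏ i ∈ s, (Polynomial.X - Polynomial.C (μ i)))) =
      ⨆ i ∈ s, Module.End.eigenspace f (μ i) := by
  classical
  induction s using Finset.induction_on with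
  | empty => simp [Module.End.one_eq_id]
  | insert i s his ih =>
    have hcoprime : IsCoprime (Polynomial.X - Polynomial.C (μ i))
        (∏ j ∈ s, (Polynomial.X - Polynomial.C (μ j))) :=
      IsCoprime.prod_right fun j hj =>
        Polynomial.pairwise_coprime_X_sub_C hμ (ne_of_mem_of_not_mem hj his).symm
    rw [Finset.prod_insert his, Finset.iSup_insert, ← ih,
      ← Polynomial.sup_ker_aeval_eq_ker_aeval_mul_of_coprime f hcoprime, map_sub,
      Polynomial.aeval_X, Polynomial.aeval_C, Module.End.eigenspace_def,
      Algebra.algebraMap_eq_smul_one]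

lemma coeff_X_mul_pderiv {σ R : Type*} [CommSemiring R] (P : MvPolynomial σ R) (j : σ)
    (m : σ →₀ ℕ) : (X j * pderiv j P).coeff m = m j * P.coeff m := by
  classical
  induction P using MvPolynomial.induction_on' with
  | monomial n a =>
    rw [MvPolynomial.X_mul_pderiv_monomial, MvPolynomial.coeff_smul, MvPolynomial.coeff_monomial]
    split_ifs with hnm
    · rw [hnm, nsmul_eq_mul]
    · simp
  | add p q hp hq => rw [map_add, mul_add, MvPolynomial.coeff_add, MvPolynomial.coeff_add, hp, hq,
      mul_add]

variable {σ : Type*} [Fintype σ] {d : ℕ} {P : MvPolynomial σ ℝ}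

lemma coeff_ouOperator_of_totalDegree_le (hP : P.totalDegree ≤ d) {m : σ →₀ ℕ}
    (hm : d ≤ m.degree) : (ouOperator σ P).coeff m = -(d * P.coeff m) := by
  have hzero {n : σ →₀ ℕ} (hn : d < n.degree) : P.coeff n = 0 :=
    MvPolynomial.coeff_eq_zero_of_totalDegree_lt (hP.trans_lt (by rwa [Finsupp.degree_apply] at hn))
  have hterm (j : σ) : (pderiv j (pderiv j P) - X j * pderiv j P).coeff m =
      -((m j : ℝ) * P.coeff m) := by
    have hlap : (pderiv j (pderiv j P)).coeff m = 0 := by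
      rw [MvPolynomial.coeff_pderiv, MvPolynomial.coeff_pderiv, hzero, zero_mul, zero_mul]
      simp only [map_add, Finsupp.degree_single]
      lia
    rw [MvPolynomial.coeff_sub, coeff_X_mul_pderiv, hlap, zero_sub]
  have hdegree : ∑ j, (m j : ℝ) = m.degree := by
    rw [Finsupp.degree_eq_sum, Nat.cast_sum]
  rw [ouOperator_apply, MvPolynomial.coeff_sum, Finset.sum_congr rfl fun j _ => hterm j,
    Finset.sum_neg_distrib, ← Finset.sum_mul, hdegree]
  rcases hm.eq_or_lt with rfl | hlt
  · rfl
  · rw [hzero hlt, mul_zero, mul_zero]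

lemma totalDegree_ouOperator_add_smul_le (hP : P.totalDegree ≤ d) :
    (ouOperator σ P + (d : ℝ) • P).totalDegree ≤ d - 1 := by
  refine Finset.sup_le fun m hm => ?_
  have hmd : m.degree < d := by
    by_contra! hdm
    refine MvPolynomial.mem_support_iff.1 hm ?_
    rw [MvPolynomial.coeff_add, coeff_ouOperator_of_totalDegree_le hP hdm, MvPolynomial.coeff_smul,
      smul_eq_mul, neg_add_cancel]
  rw [Finsupp.degree_apply] at hmd
  exact Nat.le_sub_one_of_lt hmd

lemma aeval_ouOperator_prod_eq_zero (hP : P.totalDegree ≤ d) :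
    Polynomial.aeval (ouOperator σ)
      (∏ n ∈ Finset.range (d + 1), (Polynomial.X - Polynomial.C (-(n : ℝ)))) P = 0 := by
  induction d generalizing P with
  | zero =>
    rw [MvPolynomial.totalDegree_eq_zero_iff_eq_C.1 (Nat.le_zero.1 hP)]
    simp [ouOperator_apply]
  | succ d ih =>
    rw [Finset.prod_range_succ, map_mul, Module.End.mul_apply]
    refine ih ?_
    rw [map_sub, Polynomial.aeval_X, Polynomial.aeval_C, LinearMap.sub_apply,
      Module.algebraMap_end_apply, neg_smul, sub_neg_eq_add]
    exact totalDegree_ouOperator_add_smul_le hP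

lemma exists_ouOperator_eigendecomposition (hP : P.totalDegree ≤ d) :
    ∃ Q : Fin (d + 1) → MvPolynomial σ ℝ, ∑ n, Q n = P ∧
      ∀ n, ouOperator σ (Q n) = -(n : ℝ) • Q n := by
  have hmem : P ∈ ⨆ n ∈ (Finset.univ : Finset (Fin (d + 1))),
      Module.End.eigenspace (ouOperator σ) (-(n : ℝ)) := by
    rw [← ker_aeval_prod_X_sub_C, LinearMap.mem_ker, ← aeval_ouOperator_prod_eq_zero hP,
      Finset.prod_range]
    exact fun m n hmn => Fin.ext (by simpa using hmn)
  obtain ⟨Q, hQ⟩ := (Submodule.mem_iSup_finset_iff_exists_sum _ _).1 hmem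
  exact ⟨fun n => Q n, hQ, fun n => Module.End.mem_eigenspace_iff.1 (Q n).2⟩

end Eigendecomposition

section RadialProfile

open MvPolynomial (eval pderiv C)

/-- Conditions on a function `b` of the squared modulus, with first and second derivatives `b₁` and
`b₂`, under which the complex Mehler semigroup with parameter in `lens κ` decreases the Gaussian
integral of `b`. The last two bound the radial and mixed second derivatives of `z ↦ b (‖z‖ ^ 2)`. -/
structure IsRadialProfile (κ : ℝ) (b b₁ b₂ : ℝ → ℝ) : Prop where
  hasDerivAt : ∀ q, 0 ≤ q → HasDerivAt b (b₁ q) q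
  hasDerivAt_deriv : ∀ q, 0 ≤ q → HasDerivAt b₁ (b₂ q) q
  continuousOn_deriv_deriv : ContinuousOn b₂ (Set.Ici 0)
  growth : HasPolynomialGrowth b
  growth_deriv : HasPolynomialGrowth b₁
  growth_deriv_deriv : HasPolynomialGrowth b₂
  deriv_nonneg : ∀ q, 0 ≤ q → 0 ≤ b₁ q
  radial_nonneg : ∀ q, 0 ≤ q → 0 ≤ b₁ q + 2 * q * b₂ q
  mixed_sq_le : ∀ q, 0 ≤ q → (q * b₂ q) ^ 2 ≤ κ ^ 2 * (b₁ q + 2 * q * b₂ q) * b₁ q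

lemma quadratic_form_nonneg {a b c : ℝ} (ha : 0 ≤ a) (hc : 0 ≤ c) (hb : b ^ 2 ≤ a * c) (x y : ℝ) :
    0 ≤ a * x ^ 2 + 2 * b * x * y + c * y ^ 2 := by
  rcases ha.eq_or_lt with rfl | ha
  · obtain rfl : b = 0 := sq_eq_zero_iff.1 (le_antisymm (by simpa using hb) (sq_nonneg b))
    simpa using mul_nonneg hc (sq_nonneg y)
  · refine nonneg_of_mul_nonneg_right ?_ ha
    calc 0 ≤ (a * x + b * y) ^ 2 + (a * c - b ^ 2) * y ^ 2 :=
          add_nonneg (sq_nonneg _) (mul_nonneg (sub_nonneg.2 hb) (sq_nonneg y))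
      _ = a * (a * x ^ 2 + 2 * b * x * y + c * y ^ 2) := by ring

variable {κ : ℝ} {b b₁ b₂ : ℝ → ℝ} {ζ : ℂ}

lemma IsRadialProfile.continuousOn (hb : IsRadialProfile κ b b₁ b₂) :
    ContinuousOn b (Set.Ici 0) :=
  fun q hq => (hb.hasDerivAt q hq).continuousAt.continuousWithinAt

lemma IsRadialProfile.continuousOn_deriv (hb : IsRadialProfile κ b b₁ b₂) :
    ContinuousOn b₁ (Set.Ici 0) :=
  fun q hq => (hb.hasDerivAt_deriv q hq).continuousAt.continuousWithinAt

lemma IsRadialProfile.hessian_form_nonneg (hb : IsRadialProfile κ b b₁ b₂) (hκ : 0 ≤ κ)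
    (hζ : ζ ∈ sector κ) {q : ℝ} (hq : 0 ≤ q) (x y : ℝ) :
    0 ≤ (b₁ q + 2 * q * b₂ q) * ζ.re * x ^ 2 + 2 * (q * b₂ q * ζ.im) * x * y +
      b₁ q * ζ.re * y ^ 2 := by
  have hre : 0 ≤ ζ.re := (mul_nonneg hκ (abs_nonneg _)).trans hζ
  have him : κ ^ 2 * ζ.im ^ 2 ≤ ζ.re ^ 2 := by
    rw [← sq_abs ζ.im, ← mul_pow]
    exact pow_le_pow_left₀ (by positivity) hζ 2
  have hradial := hb.radial_nonneg q hq
  have hnonneg := hb.deriv_nonneg q hq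
  refine quadratic_form_nonneg (mul_nonneg hradial hre) (mul_nonneg hnonneg hre) ?_ x y
  calc (q * b₂ q * ζ.im) ^ 2 = (q * b₂ q) ^ 2 * ζ.im ^ 2 := mul_pow _ _ _
    _ ≤ κ ^ 2 * (b₁ q + 2 * q * b₂ q) * b₁ q * ζ.im ^ 2 := by
      gcongr
      exact hb.mixed_sq_le q hq
    _ = (b₁ q + 2 * q * b₂ q) * b₁ q * (κ ^ 2 * ζ.im ^ 2) := by ring
    _ ≤ (b₁ q + 2 * q * b₂ q) * b₁ q * ζ.re ^ 2 := by gcongr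
    _ = (b₁ q + 2 * q * b₂ q) * ζ.re * (b₁ q * ζ.re) := by ring

lemma IsRadialProfile.gradient_form_nonneg (hb : IsRadialProfile κ b b₁ b₂) (hκ : 0 ≤ κ)
    (hζ : ζ ∈ sector κ) (f g u v : ℝ) :
    0 ≤ 2 * b₂ (f ^ 2 + g ^ 2) * (f * u + g * v) *
        (ζ.re * (f * u + g * v) + ζ.im * (g * u - f * v)) +
      b₁ (f ^ 2 + g ^ 2) * ζ.re * (u ^ 2 + v ^ 2) := by
  have hq : 0 ≤ f ^ 2 + g ^ 2 := by positivity
  rcases hq.eq_or_lt with hq0 | hqpos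
  · obtain ⟨hf, hg⟩ := (add_eq_zero_iff_of_nonneg (sq_nonneg f) (sq_nonneg g)).1 hq0.symm
    rw [sq_eq_zero_iff] at hf hg
    have hre : 0 ≤ ζ.re := (mul_nonneg hκ (abs_nonneg _)).trans hζ
    simpa [hf, hg] using mul_nonneg (mul_nonneg (hb.deriv_nonneg 0 le_rfl) hre)
      (add_nonneg (sq_nonneg u) (sq_nonneg v))
  · refine nonneg_of_mul_nonneg_right ?_ hqpos
    refine (hb.hessian_form_nonneg hκ hζ hq (f * u + g * v) (g * u - f * v)).trans_eq ?_
    ring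

lemma IsRadialProfile.integral_mul_ouOperator_nonpos (hb : IsRadialProfile κ b b₁ b₂) (hκ : 0 ≤ κ)
    (hζ : ζ ∈ sector κ) {k : ℕ} (f g : MvPolynomial (Fin k) ℝ) :
    ∫ x, b₁ (eval x (f ^ 2 + g ^ 2)) * eval x
      ((C ζ.re * f + C ζ.im * g) * ouOperator (Fin k) f +
        (C ζ.re * g - C ζ.im * f) * ouOperator (Fin k) g) ∂(gaussMeasure k) ≤ 0 := by
  have hG (x : Fin k → ℝ) : 0 ≤ eval x (f ^ 2 + g ^ 2) := by
    simp only [map_add, map_pow]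
    positivity
  have hint (Q) : Integrable (fun x => b₁ (eval x (f ^ 2 + g ^ 2)) * eval x Q) (gaussMeasure k) :=
    hb.growth_deriv.integrable_comp_mul_eval hb.continuousOn_deriv
      (MvPolynomial.continuous_eval _) hG (fun _ => le_rfl) Q
  have hint' (Q) : Integrable (fun x => b₂ (eval x (f ^ 2 + g ^ 2)) * eval x Q) (gaussMeasure k) :=
    hb.growth_deriv_deriv.integrable_comp_mul_eval hb.continuousOn_deriv_deriv
      (MvPolynomial.continuous_eval _) hG (fun _ => le_rfl) Q
  have hsum (h u) : Integrable (fun x => b₂ (eval x (f ^ 2 + g ^ 2)) *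
      eval x (h * carreDuChamp (f ^ 2 + g ^ 2) u) +
      b₁ (eval x (f ^ 2 + g ^ 2)) * eval x (carreDuChamp h u)) (gaussMeasure k) :=
    (hint' _).add (hint _)
  have green := integral_comp_eval_mul_ouOperator hG hb.hasDerivAt_deriv
    hb.continuousOn_deriv_deriv hb.growth_deriv hb.growth_deriv_deriv
  simp only [map_add (eval _) (_ * ouOperator _ _), mul_add (b₁ _)]
  rw [integral_add (hint _) (hint _), green, green, ← neg_add, neg_nonpos,
    ← integral_add (hsum _ _) (hsum _ _)]
  refine integral_nonneg fun x => ?_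
  have hgradient := Finset.sum_nonneg fun j (_ : j ∈ Finset.univ) =>
    hb.gradient_form_nonneg hκ hζ (eval x f) (eval x g) (eval x (pderiv j f)) (eval x (pderiv j g))
  refine hgradient.trans_eq ?_
  simp only [carreDuChamp, map_add, map_sub, map_mul, map_pow, map_sum, Derivation.leibniz,
    Derivation.leibniz_pow, MvPolynomial.pderiv_C, MvPolynomial.eval_C, smul_eq_mul,
    mul_zero, add_zero, nsmul_eq_mul, map_natCast, Finset.mul_sum, ← Finset.sum_add_distrib]
  refine Finset.sum_congr rfl fun j _ => ?_
  push_cast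
  ring

end RadialProfile

section MehlerContraction

open MvPolynomial (eval C)

variable {ι σ : Type*} [Fintype ι]

/-- The values of the polynomial with complex coefficients `∑ i, y i • Q i`. For the homogeneous
chaos components `Q n` of a polynomial and `y n = w ^ n`, this is its image under the Mehler
semigroup with complex parameter `w`. -/
noncomputable def complexCombination (Q : ι → MvPolynomial σ ℝ) (y : ι → ℂ) (x : σ → ℝ) : ℂ :=
  ∑ i, y i * (eval x (Q i) : ℂ)

/-- The pointwise bound for `complexCombination Q y` with `‖y i‖ ≤ A` for all `i`. -/
noncomputable def combinationBound (Q : ι → MvPolynomial σ ℝ) (A : ℝ) : MvPolynomial σ ℝ :=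
  C A * ∑ i, (1 + Q i ^ 2)

variable (Q : ι → MvPolynomial σ ℝ)

lemma norm_complexCombination_le {y : ι → ℂ} {A : ℝ} (hy : ‖y‖ ≤ A) (x : σ → ℝ) :
    ‖complexCombination Q y x‖ ≤ eval x (combinationBound Q A) := by
  simp only [complexCombination, combinationBound, map_mul, map_sum, MvPolynomial.eval_C,
    Finset.mul_sum]
  refine norm_sum_le_of_le _ fun i _ => ?_
  rw [norm_mul, Complex.norm_real]
  exact mul_le_mul ((norm_le_pi_norm y i).trans hy) (abs_eval_le_eval_one_add_sq _ _)
    (norm_nonneg _) ((norm_nonneg y).trans hy)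

lemma continuous_complexCombination (y : ι → ℂ) : Continuous (complexCombination Q y) := by
  unfold complexCombination
  exact continuous_finsetSum _ fun i _ => continuous_const.mul
    (Complex.continuous_ofReal.comp (MvPolynomial.continuous_eval _))

lemma continuous_complexCombination_apply (x : σ → ℝ) :
    Continuous fun y => complexCombination Q y x := by
  unfold complexCombination
  fun_prop

lemma complexCombination_const_mul (c : ℂ) (y : ι → ℂ) (x : σ → ℝ) :
    complexCombination Q (fun i => c * y i) x = c * complexCombination Q y x := by
  simp only [complexCombination, Finset.mul_sum, mul_assoc]

lemma complexCombination_eq (y : ι → ℂ) (x : σ → ℝ) :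
    complexCombination Q y x =
      ⟨eval x (∑ i, (y i).re • Q i), eval x (∑ i, (y i).im • Q i)⟩ := by
  apply Complex.ext <;> simp [complexCombination, Complex.re_sum, Complex.im_sum,
    MvPolynomial.smul_eval]

lemma hasDerivAt_complexCombination {y : ℝ → ι → ℂ} {y' : ι → ℂ} {t : ℝ} (hy : HasDerivAt y y' t)
    (x : σ → ℝ) :
    HasDerivAt (fun s => complexCombination Q (y s) x) (complexCombination Q y' x) t :=
  HasDerivAt.fun_sum fun i _ => (hasDerivAt_pi.1 hy i).mul_const _

variable {κ : ℝ} {b b₁ b₂ : ℝ → ℝ} {k : ℕ} (Q : ι → MvPolynomial (Fin k) ℝ)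

lemma IsRadialProfile.hasDerivAt_integral_norm_sq (hb : IsRadialProfile κ b b₁ b₂)
    {y y' : ℝ → ι → ℂ} (hy : ∀ t, HasDerivAt y (y' t) t) (hy' : Continuous y') (t : ℝ) :
    HasDerivAt (fun s => ∫ x, b (‖complexCombination Q (y s) x‖ ^ 2) ∂(gaussMeasure k))
      (∫ x, b₁ (‖complexCombination Q (y t) x‖ ^ 2) * (2 * inner ℝ (complexCombination Q (y t) x)
        (complexCombination Q (y' t) x)) ∂(gaussMeasure k)) t := by
  have hycont : Continuous y := continuous_iff_continuousAt.2 fun s => (hy s).continuousAt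
  obtain ⟨A, hA⟩ := (isCompact_closedBall t 1).exists_bound_of_continuousOn hycont.continuousOn
  obtain ⟨A', hA'⟩ := (isCompact_closedBall t 1).exists_bound_of_continuousOn hy'.continuousOn
  set M := combinationBound Q A
  set M' := combinationBound Q A'
  obtain ⟨H, hH⟩ := hb.growth_deriv.exists_abs_le_eval hb.continuousOn_deriv (M ^ 2)
  have hnorm_sq {s : ℝ} (hs : s ∈ Metric.closedBall t 1) (x : Fin k → ℝ) :
      ‖complexCombination Q (y s) x‖ ^ 2 ≤ eval x (M ^ 2) := by
    rw [map_pow]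
    exact pow_le_pow_left₀ (norm_nonneg _) (norm_complexCombination_le Q (hA s hs) x) 2
  have hcont (s : ℝ) : Continuous fun x => ‖complexCombination Q (y s) x‖ ^ 2 :=
    (continuous_complexCombination Q _).norm.pow 2
  refine (hasDerivAt_integral_of_dominated_loc_of_deriv_le (Metric.ball_mem_nhds t one_pos)
    (F := fun s x => b (‖complexCombination Q (y s) x‖ ^ 2))
    (F' := fun s x => b₁ (‖complexCombination Q (y s) x‖ ^ 2) *
      (2 * inner ℝ (complexCombination Q (y s) x) (complexCombination Q (y' s) x)))
    (bound := fun x => eval x (H * (2 * (M * M')))) ?_ ?_ ?_ ?_ ?_ ?_).2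
  · exact Filter.Eventually.of_forall fun s => (hb.continuousOn.comp_continuous (hcont s)
      fun x => Set.mem_Ici.2 (sq_nonneg _)).aestronglyMeasurable
  · exact hb.growth.integrable_comp hb.continuousOn (hcont t) (fun x => sq_nonneg _)
      (hnorm_sq (Metric.mem_closedBall_self zero_le_one))
  · exact ((hb.continuousOn_deriv.comp_continuous (hcont t)
        fun x => Set.mem_Ici.2 (sq_nonneg _)).mul
      (continuous_const.mul ((continuous_complexCombination Q _).inner
        (continuous_complexCombination Q _)))).aestronglyMeasurable
  · refine Filter.Eventually.of_forall fun x s hs => ?_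
    replace hs := Metric.ball_subset_closedBall hs
    have hHx := hH x _ (sq_nonneg _) (hnorm_sq hs x)
    have hMx := norm_complexCombination_le Q (hA s hs) x
    rw [norm_mul, norm_mul, norm_ofNat, map_mul, map_mul, map_mul, map_ofNat]
    refine mul_le_mul hHx (mul_le_mul_of_nonneg_left ?_ zero_le_two) (by positivity)
      ((abs_nonneg _).trans hHx)
    exact (norm_inner_le_norm _ _).trans (mul_le_mul hMx (norm_complexCombination_le Q (hA' s hs) x)
      (norm_nonneg _) ((norm_nonneg _).trans hMx))
  · exact integrable_eval_gaussMeasure _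
  · exact Filter.Eventually.of_forall fun x s _ =>
      (hb.hasDerivAt (‖complexCombination Q (y s) x‖ ^ 2) (sq_nonneg _)).comp s
        (hasDerivAt_complexCombination Q (hy s) x).norm_sq

variable {Q}

lemma IsRadialProfile.integral_inner_nonpos (hb : IsRadialProfile κ b b₁ b₂) (hκ : 0 ≤ κ)
    {ζ : ℂ} (hζ : ζ ∈ sector κ) {μ : ι → ℝ} (hQ : ∀ i, ouOperator (Fin k) (Q i) = μ i • Q i)
    (y : ι → ℂ) :
    ∫ x, b₁ (‖complexCombination Q y x‖ ^ 2) * (2 * inner ℝ (complexCombination Q y x)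
      (complexCombination Q (fun i => ζ * (μ i * y i)) x)) ∂(gaussMeasure k) ≤ 0 := by
  set f := ∑ i, (y i).re • Q i with hf
  set g := ∑ i, (y i).im • Q i with hg
  have hL (a : ι → ℝ) : ouOperator (Fin k) (∑ i, a i • Q i) = ∑ i, (μ i * a i) • Q i := by
    simp only [map_sum, map_smul, hQ, smul_smul, mul_comm]
  have hLy (x) : complexCombination Q (fun i => μ i * y i) x =
      ⟨eval x (ouOperator (Fin k) f), eval x (ouOperator (Fin k) g)⟩ := by
    simp only [complexCombination_eq, hf, hg, hL, Complex.re_ofReal_mul, Complex.im_ofReal_mul]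
  calc _ = 2 * ∫ x, b₁ (eval x (f ^ 2 + g ^ 2)) * eval x
          ((C ζ.re * f + C ζ.im * g) * ouOperator (Fin k) f +
            (C ζ.re * g - C ζ.im * f) * ouOperator (Fin k) g) ∂(gaussMeasure k) := by
        rw [← integral_const_mul]
        congr with x
        rw [complexCombination_const_mul, hLy, complexCombination_eq, ← hf, ← hg,
          ← Complex.normSq_eq_norm_sq, Complex.normSq_mk, Complex.inner]
        simp only [map_add, map_sub, map_mul, map_pow, MvPolynomial.eval_C, Complex.mul_re,
          Complex.mul_im, Complex.conj_re, Complex.conj_im]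
        ring_nf
    _ ≤ 0 := mul_nonpos_of_nonneg_of_nonpos zero_le_two
      (hb.integral_mul_ouOperator_nonpos hκ hζ f g)

lemma one_sub_mul_ne_zero {v : ℂ} (hv : 1 - v ∈ lens κ) {t : ℝ}
    (ht : t ∈ Set.Ioo (0 : ℝ) 1) : 1 - t * v ≠ 0 := by
  intro h
  obtain rfl : v = (t⁻¹ : ℝ) := by
    rw [Complex.ofReal_inv]
    exact eq_inv_of_mul_eq_one_right (sub_eq_zero.1 h).symm
  have hinv : 1 < t⁻¹ := (one_lt_inv₀ ht.1).2 ht.2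
  rw [← Complex.ofReal_one, ← Complex.ofReal_sub, lens, Set.mem_ofPred_eq, Complex.ofReal_im,
    Complex.ofReal_re, Complex.normSq_ofReal, abs_zero, mul_zero] at hv
  nlinarith

lemma hasDerivAt_one_sub_mul_pow (v : ℂ) (n : ℕ) (t : ℝ) :
    HasDerivAt (fun s : ℝ => (1 - s * v) ^ n) (n * (1 - t * v) ^ (n - 1) * -v) t := by
  have hlinear : HasDerivAt (fun s : ℝ => 1 - (s : ℂ) * v) (-v) t := by
    simpa using ((Complex.ofRealCLM.hasDerivAt (x := t)).mul_const v).const_sub 1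
  exact hlinear.fun_pow n

/-- Along `t ↦ (1 - t v) ^ n` the Mehler semigroup is generated by the Ornstein–Uhlenbeck operator
times the complex number `v / (1 - t v)`, which stays in the sector. -/
lemma IsRadialProfile.integral_mehler_le (hb : IsRadialProfile κ b b₁ b₂) (hκ : 0 ≤ κ) {d : ℕ}
    {Q : Fin d → MvPolynomial (Fin k) ℝ}
    (hQ : ∀ n, ouOperator (Fin k) (Q n) = -(n : ℝ) • Q n) {w : ℂ} (hw : w ∈ lens κ) :
    ∫ x, b (‖complexCombination Q (fun n => w ^ (n : ℕ)) x‖ ^ 2) ∂(gaussMeasure k) ≤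
      ∫ x, b (‖complexCombination Q 1 x‖ ^ 2) ∂(gaussMeasure k) := by
  obtain ⟨v, rfl⟩ : ∃ v, 1 - v = w := ⟨1 - w, sub_sub_cancel _ _⟩
  set y : ℝ → Fin d → ℂ := fun t n => (1 - t * v) ^ (n : ℕ) with hy
  set y' : ℝ → Fin d → ℂ := fun t n => (n : ℕ) * (1 - t * v) ^ ((n : ℕ) - 1) * -v with hy'
  have hderiv := hb.hasDerivAt_integral_norm_sq Q (y := y) (y' := y')
    (fun t => hasDerivAt_pi.2 fun n => hasDerivAt_one_sub_mul_pow v n t) (by fun_prop)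
  have hgenerator {t : ℝ} (ht : t ∈ Set.Ioo (0 : ℝ) 1) :
      y' t = fun n : Fin d => v / (1 - t * v) * ((-(n : ℝ) : ℝ) * y t n) := by
    have hne := one_sub_mul_ne_zero hw ht
    ext n
    rcases (n : ℕ).eq_zero_or_pos with hn | hn
    · simp [hy', hn]
    · simp only [hy, hy', ← mul_pow_sub_one hn.ne' (1 - t * v)]
      push_cast
      field_simp
  have hanti : AntitoneOn
      (fun t => ∫ x, b (‖complexCombination Q (y t) x‖ ^ 2) ∂(gaussMeasure k)) (Set.Icc 0 1) := by
    refine antitoneOn_of_deriv_nonpos (convex_Icc 0 1)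
      (fun t _ => (hderiv t).continuousAt.continuousWithinAt)
      (fun t _ => (hderiv t).differentiableAt.differentiableWithinAt) fun t ht => ?_
    rw [interior_Icc] at ht
    rw [(hderiv t).deriv, hgenerator ht]
    exact hb.integral_inner_nonpos hκ (div_one_sub_mul_mem_sector hw ht.2.le) hQ (y t)
  simpa [hy, Pi.one_def] using hanti (Set.left_mem_Icc.2 zero_le_one)
    (Set.right_mem_Icc.2 zero_le_one) zero_le_one

end MehlerContraction

section ConvexProfile

open MvPolynomial (eval)

lemma hasPolynomialGrowth_of_tendsto {φ : ℝ → ℝ} {l : ℝ}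
    (hφ : Filter.Tendsto φ Filter.atTop (nhds l)) : HasPolynomialGrowth φ :=
  ⟨0, by simpa using hφ.isBigO_one ℝ⟩

lemma HasPolynomialGrowth.mul {φ ψ : ℝ → ℝ} (hφ : HasPolynomialGrowth φ)
    (hψ : HasPolynomialGrowth ψ) : HasPolynomialGrowth fun s => φ s * ψ s := by
  obtain ⟨N, hN⟩ := hφ
  obtain ⟨M, hM⟩ := hψ
  exact ⟨N + M, by simpa only [pow_add] using hN.mul hM⟩

lemma HasPolynomialGrowth.sub {φ ψ : ℝ → ℝ} (hφ : HasPolynomialGrowth φ)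
    (hψ : HasPolynomialGrowth ψ) : HasPolynomialGrowth fun s => φ s - ψ s := by
  obtain ⟨N, hN⟩ := hφ
  obtain ⟨M, hM⟩ := hψ
  have hpow {i : ℕ} (hi : i ≤ max N M) :
      (fun s : ℝ => s ^ i) =O[Filter.atTop] fun s => s ^ max N M :=
    Asymptotics.IsBigO.pow_of_le_right (Filter.eventually_ge_atTop 1) hi
  exact ⟨max N M, (hN.trans (hpow (le_max_left _ _))).sub (hM.trans (hpow (le_max_right _ _)))⟩

lemma HasPolynomialGrowth.div_const_mul_pow {φ : ℝ → ℝ} (hφ : HasPolynomialGrowth φ) {c : ℝ}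
    (hc : 0 < c) {n : ℕ} (hn : n ≠ 0) : HasPolynomialGrowth fun s => φ s / (c * s ^ n) := by
  simp only [div_eq_mul_inv]
  exact hφ.mul (hasPolynomialGrowth_of_tendsto
    ((Filter.tendsto_pow_atTop hn).const_mul_atTop hc).inv_tendsto_atTop)

lemma HasPolynomialGrowth.comp_sqrt_add {φ : ℝ → ℝ} (hφ : HasPolynomialGrowth φ) (a : ℝ) :
    HasPolynomialGrowth fun q => φ √(q + a) := by
  obtain ⟨N, hN⟩ := hφ
  have htendsto : Filter.Tendsto (fun q => √(q + a)) Filter.atTop Filter.atTop :=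
    tendsto_sqrt_atTop.comp (Filter.tendsto_atTop_add_const_right _ a Filter.tendsto_id)
  have hsqrt : (fun q => √(q + a)) =O[Filter.atTop] fun q => q := by
    refine Asymptotics.IsBigO.of_bound 1 ?_
    filter_upwards [Filter.eventually_ge_atTop 2, Filter.eventually_ge_atTop a] with q hq hqa
    rw [one_mul, norm_of_nonneg (sqrt_nonneg _), norm_of_nonneg (by linarith)]
    exact Real.sqrt_le_iff.2 ⟨by linarith, by nlinarith⟩
  exact ⟨N, (hN.comp_tendsto htendsto).trans (hsqrt.pow N)⟩

/-- The conditions on the integrand `B` of a modular `∫ B(|P|)`. The last one is the paper's bound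
on `s B'' / B' + B' / (s B'')` by `2 + 4κ²`, cleared of denominators. -/
structure IsConvexProfile (κ : ℝ) (B : ℝ → ℝ) : Prop where
  continuousOn : ContinuousOn B (Set.Ici 0)
  contDiffOn : ContDiffOn ℝ 2 B (Set.Ioi 0)
  deriv_pos : ∀ s, 0 < s → 0 < deriv B s
  deriv_deriv_pos : ∀ s, 0 < s → 0 < deriv (deriv B) s
  growth : HasPolynomialGrowth B
  growth_deriv : HasPolynomialGrowth (deriv B)
  growth_deriv_deriv : HasPolynomialGrowth (deriv (deriv B))
  sub_sq_le : ∀ s, 0 < s → (s * deriv (deriv B) s - deriv B s) ^ 2 ≤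
    4 * κ ^ 2 * (s * deriv (deriv B) s) * deriv B s

namespace IsConvexProfile

variable {κ : ℝ} {B : ℝ → ℝ}

lemma hasDerivAt (hB : IsConvexProfile κ B) {s : ℝ} (hs : 0 < s) : HasDerivAt B (deriv B s) s :=
  ((hB.contDiffOn.contDiffAt (Ioi_mem_nhds hs)).differentiableAt (by norm_num)).hasDerivAt

lemma contDiffOn_deriv (hB : IsConvexProfile κ B) : ContDiffOn ℝ 1 (deriv B) (Set.Ioi 0) :=
  hB.contDiffOn.deriv_of_isOpen isOpen_Ioi (by norm_num)

lemma hasDerivAt_deriv (hB : IsConvexProfile κ B) {s : ℝ} (hs : 0 < s) :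
    HasDerivAt (deriv B) (deriv (deriv B) s) s :=
  ((hB.contDiffOn_deriv.contDiffAt (Ioi_mem_nhds hs)).differentiableAt one_ne_zero).hasDerivAt

lemma continuousOn_deriv_deriv (hB : IsConvexProfile κ B) :
    ContinuousOn (deriv (deriv B)) (Set.Ioi 0) :=
  hB.contDiffOn_deriv.continuousOn_deriv_of_isOpen isOpen_Ioi le_rfl

lemma monotoneOn (hB : IsConvexProfile κ B) : MonotoneOn B (Set.Ici 0) := by
  refine monotoneOn_of_deriv_nonneg (convex_Ici 0) hB.continuousOn ?_ ?_ <;> rw [interior_Ici]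
  · exact fun s hs => (hB.hasDerivAt hs).differentiableAt.differentiableWithinAt
  · exact fun s hs => (hB.deriv_pos s hs).le

lemma convexOn (hB : IsConvexProfile κ B) : ConvexOn ℝ (Set.Ici 0) B := by
  refine convexOn_of_deriv2_nonneg (convex_Ici 0) hB.continuousOn ?_ ?_ ?_ <;> rw [interior_Ici]
  · exact fun s hs => (hB.hasDerivAt hs).differentiableAt.differentiableWithinAt
  · exact fun s hs => (hB.hasDerivAt_deriv hs).differentiableAt.differentiableWithinAt
  · exact fun s hs => (hB.deriv_deriv_pos s hs).le

end IsConvexProfile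

lemma hasDerivAt_comp_sqrt_add {φ : ℝ → ℝ} {φ' a q : ℝ} (hφ : HasDerivAt φ φ' √(q + a))
    (hq : q + a ≠ 0) : HasDerivAt (fun r => φ √(r + a)) (φ' / (2 * √(q + a))) q :=
  (hφ.comp q (((hasDerivAt_id' q).add_const a).sqrt hq)).congr_deriv (by ring)

lemma radial_sum_eq {q a R : ℝ} (hR : R ≠ 0) (hsq : R ^ 2 = q + a) (D H : ℝ) :
    D / (2 * R) + 2 * q * ((R * H - D) / (4 * R ^ 3)) = (a * D + q * (R * H)) / (2 * R ^ 3) := by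
  field_simp
  linear_combination 4 * D * hsq

lemma radial_mixed_sq_le {κ q a R D H : ℝ} (hq : 0 ≤ q) (ha : 0 ≤ a) (hR : 0 < R)
    (hsq : R ^ 2 = q + a) (h : (R * H - D) ^ 2 ≤ 4 * κ ^ 2 * (R * H) * D) :
    (q * ((R * H - D) / (4 * R ^ 3))) ^ 2 ≤
      κ ^ 2 * (D / (2 * R) + 2 * q * ((R * H - D) / (4 * R ^ 3))) * (D / (2 * R)) := by
  have hqR : q * q ≤ q * R ^ 2 := by
    rw [hsq]
    gcongr
    exact le_add_of_nonneg_right ha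
  rw [radial_sum_eq hR.ne' hsq]
  calc (q * ((R * H - D) / (4 * R ^ 3))) ^ 2 = q * q * (R * H - D) ^ 2 / (16 * R ^ 6) := by
        field_simp
        ring
    _ ≤ (q * R ^ 2 * (4 * κ ^ 2 * (R * H) * D) + 4 * (κ * R * D) ^ 2 * a) / (16 * R ^ 6) := by
        gcongr
        exact (mul_le_mul hqR h (sq_nonneg _) (by positivity)).trans
          (le_add_of_nonneg_right (by positivity))
    _ = κ ^ 2 * ((a * D + q * (R * H)) / (2 * R ^ 3)) * (D / (2 * R)) := by
        field_simp
        ring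

namespace IsConvexProfile

variable {κ : ℝ} {B : ℝ → ℝ}

lemma isRadialProfile (hB : IsConvexProfile κ B) {a : ℝ} (ha : 0 < a) :
    IsRadialProfile κ (fun q => B √(q + a)) (fun q => deriv B √(q + a) / (2 * √(q + a)))
      (fun q => (√(q + a) * deriv (deriv B) √(q + a) - deriv B √(q + a)) /
        (4 * √(q + a) ^ 3)) := by
  have hpos {q : ℝ} (hq : 0 ≤ q) : 0 < √(q + a) := sqrt_pos.2 (by positivity)
  have hsq {q : ℝ} (hq : 0 ≤ q) : √(q + a) ^ 2 = q + a := sq_sqrt (by positivity)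
  have hid : HasPolynomialGrowth fun s => s := ⟨1, by simpa using Asymptotics.isBigO_refl _ _⟩
  constructor
  case hasDerivAt =>
    exact fun q hq => hasDerivAt_comp_sqrt_add (hB.hasDerivAt (hpos hq)) (by positivity)
  case hasDerivAt_deriv =>
    intro q hq
    have hR := (hpos hq).ne'
    have houter := (hB.hasDerivAt_deriv (hpos hq)).div ((hasDerivAt_id' _).const_mul 2)
      (mul_ne_zero two_ne_zero hR)
    refine (hasDerivAt_comp_sqrt_add houter (by positivity)).congr_deriv ?_
    field_simp
    ring
  case continuousOn_deriv_deriv =>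
    have hsqrt : ContinuousOn (fun q => √(q + a)) (Set.Ici 0) := by fun_prop
    exact ((hsqrt.mul (hB.continuousOn_deriv_deriv.comp hsqrt fun _ => hpos)).sub
      (hB.contDiffOn_deriv.continuousOn.comp hsqrt fun _ => hpos)).div
      (continuousOn_const.mul (hsqrt.pow 3)) fun q hq => by have := hpos hq; positivity
  case growth => exact hB.growth.comp_sqrt_add a
  case growth_deriv =>
    simpa only [pow_one] using
      (hB.growth_deriv.div_const_mul_pow two_pos one_ne_zero).comp_sqrt_add a
  case growth_deriv_deriv =>
    exact (((hid.mul hB.growth_deriv_deriv).sub hB.growth_deriv).div_const_mul_pow four_pos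
      three_ne_zero).comp_sqrt_add a
  all_goals
    intro q hq
    have hR := hpos hq
    have hderiv := hB.deriv_pos _ hR
    have hderiv2 := hB.deriv_deriv_pos _ hR
  case deriv_nonneg => positivity
  case radial_nonneg =>
    rw [radial_sum_eq hR.ne' (hsq hq)]
    positivity
  case mixed_sq_le => exact radial_mixed_sq_le hq ha.le hR (hsq hq) (hB.sub_sq_le _ hR)

end IsConvexProfile

lemma HasPolynomialGrowth.tendsto_integral_comp {φ : ℝ → ℝ} (hφ : HasPolynomialGrowth φ)
    (hcont : ContinuousOn φ (Set.Ici 0)) {k : ℕ} {ι : Type*} {l : Filter ι}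
    [l.IsCountablyGenerated] {u : ι → (Fin k → ℝ) → ℝ} {v : (Fin k → ℝ) → ℝ}
    (hu : ∀ i, Continuous (u i)) (hu0 : ∀ i x, 0 ≤ u i x) (hv0 : ∀ x, 0 ≤ v x)
    {G : MvPolynomial (Fin k) ℝ} (hG : ∀ᶠ i in l, ∀ x, u i x ≤ eval x G)
    (hlim : ∀ x, Filter.Tendsto (fun i => u i x) l (nhds (v x))) :
    Filter.Tendsto (fun i => ∫ x, φ (u i x) ∂(gaussMeasure k)) l
      (nhds (∫ x, φ (v x) ∂(gaussMeasure k))) := by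
  obtain ⟨H, hH⟩ := hφ.exists_abs_le_eval hcont G
  refine tendsto_integral_filter_of_dominated_convergence (fun x => eval x H) ?_ ?_
    (integrable_eval_gaussMeasure H) (Filter.Eventually.of_forall fun x => ?_)
  · exact Filter.Eventually.of_forall fun i =>
      (hcont.comp_continuous (hu i) (hu0 i)).aestronglyMeasurable
  · filter_upwards [hG] with i hi
    exact Filter.Eventually.of_forall fun x => hH x _ (hu0 i x) (hi x)
  · exact (hcont (v x) (hv0 x)).tendsto.comp
      (tendsto_nhdsWithin_iff.2 ⟨hlim x, Filter.Eventually.of_forall fun i => hu0 i x⟩)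

lemma HasPolynomialGrowth.tendsto_integral_sqrt_sq_add {φ : ℝ → ℝ} (hφ : HasPolynomialGrowth φ)
    (hcont : ContinuousOn φ (Set.Ici 0)) {k : ℕ} {u : (Fin k → ℝ) → ℝ} (hu : Continuous u)
    (hu0 : ∀ x, 0 ≤ u x) {G : MvPolynomial (Fin k) ℝ} (hG : ∀ x, u x ≤ eval x G) :
    Filter.Tendsto (fun a => ∫ x, φ √(u x ^ 2 + a) ∂(gaussMeasure k))
      (nhds 0) (nhds (∫ x, φ (u x) ∂(gaussMeasure k))) := by
  refine hφ.tendsto_integral_comp hcont (fun a => by fun_prop) (fun a x => sqrt_nonneg _) hu0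
    (G := 1 + G) ?_ fun x => ?_
  · filter_upwards [Iio_mem_nhds one_pos] with a ha x
    rw [Set.mem_Iio] at ha
    rw [map_add, map_one]
    exact sqrt_le_iff.2 ⟨by linarith [hu0 x, hG x], by nlinarith [hu0 x, hG x]⟩
  · have hsqrt : Continuous fun a : ℝ => √(u x ^ 2 + a) := by fun_prop
    simpa only [add_zero, sqrt_sq (hu0 x)] using hsqrt.tendsto 0

section Modular

variable {ι σ : Type*} [Fintype ι]

lemma isLinearMap_complexCombination (Q : ι → MvPolynomial σ ℝ) (x : σ → ℝ) :
    IsLinearMap ℝ fun y => complexCombination Q y x where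
  map_add y z := by simp [complexCombination, add_mul, Finset.sum_add_distrib]
  map_smul c y := by simp [complexCombination, Finset.mul_sum, mul_assoc]

lemma complexCombination_ofReal (Q : ι → MvPolynomial σ ℝ) (c : ι → ℝ) (x : σ → ℝ) :
    complexCombination Q (fun i => (c i : ℂ)) x = eval x (∑ i, c i • Q i) := by
  simp [complexCombination]

/-- The modular `∫ B(|·|) dγ_k` of `complexCombination Q y`, as a function of the coefficients. -/
noncomputable def modular (B : ℝ → ℝ) {k : ℕ} (Q : ι → MvPolynomial (Fin k) ℝ) (y : ι → ℂ) : ℝ :=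
  ∫ x, B ‖complexCombination Q y x‖ ∂(gaussMeasure k)

lemma modular_ofReal (B : ℝ → ℝ) {k : ℕ} (Q : ι → MvPolynomial (Fin k) ℝ) (c : ι → ℝ) :
    modular B Q (fun i => (c i : ℂ)) = ∫ x, B |eval x (∑ i, c i • Q i)| ∂(gaussMeasure k) := by
  simp only [modular, complexCombination_ofReal, Complex.norm_real, norm_eq_abs]

end Modular

namespace IsConvexProfile

variable {κ : ℝ} {B : ℝ → ℝ} {k : ℕ} {ι : Type*} [Fintype ι]

lemma integrable_norm_complexCombination (hB : IsConvexProfile κ B)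
    (Q : ι → MvPolynomial (Fin k) ℝ) (y : ι → ℂ) :
    Integrable (fun x => B ‖complexCombination Q y x‖) (gaussMeasure k) :=
  hB.growth.integrable_comp hB.continuousOn (continuous_complexCombination Q y).norm
    (fun _ => norm_nonneg _) (norm_complexCombination_le Q le_rfl)

lemma continuous_modular (hB : IsConvexProfile κ B) (Q : ι → MvPolynomial (Fin k) ℝ) :
    Continuous (modular B Q) := by
  refine continuous_iff_continuousAt.2 fun y => ?_
  refine hB.growth.tendsto_integral_comp hB.continuousOn
    (fun z => (continuous_complexCombination Q z).norm) (fun _ _ => norm_nonneg _)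
    (fun _ => norm_nonneg _) (G := combinationBound Q (‖y‖ + 1)) ?_
    fun x => (continuous_complexCombination_apply Q x).norm.tendsto y
  filter_upwards [continuous_norm.continuousAt.eventually_lt continuousAt_const
    (lt_add_one ‖y‖)] with z hz
  exact norm_complexCombination_le Q hz.le

lemma convexOn_modular (hB : IsConvexProfile κ B) (Q : ι → MvPolynomial (Fin k) ℝ) :
    ConvexOn ℝ Set.univ (modular B Q) := by
  refine ⟨convex_univ, fun y _ z _ a b ha hb hab => ?_⟩
  have hint := hB.integrable_norm_complexCombination Q
  have hconvex (x : Fin k → ℝ) : B ‖complexCombination Q (a • y + b • z) x‖ ≤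
      a * B ‖complexCombination Q y x‖ + b * B ‖complexCombination Q z x‖ := by
    have hnorm := (convexOn_univ_norm.comp_linearMap
      (isLinearMap_complexCombination Q x).mk').2 (Set.mem_univ y) (Set.mem_univ z) ha hb hab
    exact (hB.monotoneOn (norm_nonneg _) ((norm_nonneg _).trans hnorm) hnorm).trans
      (hB.convexOn.2 (norm_nonneg _) (norm_nonneg _) ha hb hab)
  simp only [smul_eq_mul, modular]
  rw [← integral_const_mul, ← integral_const_mul,
    ← integral_add ((hint y).const_mul a) ((hint z).const_mul b)]
  exact integral_mono (hint _) (((hint y).const_mul a).add ((hint z).const_mul b)) hconvex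

lemma modular_smul_le (hB : IsConvexProfile κ B) (Q : ι → MvPolynomial (Fin k) ℝ) {c : ℂ}
    (hc : ‖c‖ ≤ 1) (y : ι → ℂ) : modular B Q (c • y) ≤ modular B Q y := by
  refine integral_mono (hB.integrable_norm_complexCombination Q _)
    (hB.integrable_norm_complexCombination Q y) fun x => ?_
  refine hB.monotoneOn (norm_nonneg _) (norm_nonneg _) ?_
  calc ‖complexCombination Q (c • y) x‖ = ‖c‖ * ‖complexCombination Q y x‖ := by
        rw [← norm_mul, ← complexCombination_const_mul]
        rfl
    _ ≤ ‖complexCombination Q y x‖ := mul_le_of_le_one_left (norm_nonneg _) hc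

lemma modular_pow_le (hB : IsConvexProfile κ B) (hκ : 0 ≤ κ) {d : ℕ}
    {Q : Fin d → MvPolynomial (Fin k) ℝ} (hQ : ∀ n, ouOperator (Fin k) (Q n) = -(n : ℝ) • Q n)
    {w : ℂ} (hw : w ∈ lens κ) : modular B Q (fun n => w ^ (n : ℕ)) ≤ modular B Q 1 := by
  have htendsto (y : Fin d → ℂ) :=
    (hB.growth.tendsto_integral_sqrt_sq_add hB.continuousOn (continuous_complexCombination Q y).norm
      (fun _ => norm_nonneg _) (norm_complexCombination_le Q le_rfl)).mono_left
      (nhdsWithin_le_nhds (s := Set.Ioi 0))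
  refine le_of_tendsto_of_tendsto (htendsto _) (htendsto _) ?_
  filter_upwards [self_mem_nhdsWithin] with a ha
  exact (hB.isRadialProfile ha).integral_mehler_le hκ hQ hw

lemma integral_inv_mul_ouOperator_le (hB : IsConvexProfile κ B) (hκ : 0 ≤ κ) {d : ℕ} (hd : 1 ≤ d)
    {P : MvPolynomial (Fin k) ℝ} (hP : P.totalDegree ≤ d) :
    ∫ x, B |eval x ((10 * (d : ℝ) ^ lensExponent κ)⁻¹ • ouOperator (Fin k) P)|
      ∂(gaussMeasure k) ≤ ∫ x, B |eval x P| ∂(gaussMeasure k) := by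
  obtain ⟨Q, rfl, hQ⟩ := exists_ouOperator_eigendecomposition hP
  set m : ℝ := (10 * (d : ℝ) ^ lensExponent κ)⁻¹
  have hmem : m • (fun n : Fin (d + 1) => ((n : ℕ) : ℂ)) ∈
      {y | modular B Q y ≤ modular B Q 1} := by
    refine inv_smul_natCast_mem_of_lens hκ hd ?_ ?_ ?_ fun w => hB.modular_pow_le hκ hQ
    · simpa using (hB.convexOn_modular Q).convex_le (modular B Q 1)
    · exact isClosed_le (hB.continuous_modular Q) continuous_const
    · exact balanced_iff_smul_mem.2 fun _ hc y hy => (hB.modular_smul_le Q hc y).trans hy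
  have hone : modular B Q 1 = ∫ x, B |eval x (∑ n, Q n)| ∂(gaussMeasure k) := by
    simpa [Pi.one_def] using modular_ofReal B Q 1
  have hL : ouOperator (Fin k) (∑ n, Q n) = -∑ n : Fin (d + 1), (n : ℝ) • Q n := by
    simp only [map_sum, hQ, neg_smul, Finset.sum_neg_distrib]
  have hsmul : m • (fun n : Fin (d + 1) => ((n : ℕ) : ℂ)) =
      fun n : Fin (d + 1) => ((m * (n : ℕ) : ℝ) : ℂ) := by
    ext n
    simp
  rw [Set.mem_ofPred_eq, hone, hsmul, modular_ofReal] at hmem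
  simpa only [hL, smul_neg, map_neg, abs_neg, Finset.smul_sum, smul_smul] using hmem

theorem integral_ouOperator_le (hB : IsConvexProfile κ B) (hκ : 0 ≤ κ) {d : ℕ} (hd : 1 ≤ d)
    {P : MvPolynomial (Fin k) ℝ} (hP : P.totalDegree ≤ d) :
    ∫ x, B |eval x (ouOperator (Fin k) P)| ∂(gaussMeasure k) ≤
      ∫ x, B (10 * (d : ℝ) ^ lensExponent κ * |eval x P|) ∂(gaussMeasure k) := by
  have hM : 0 < 10 * (d : ℝ) ^ lensExponent κ := by positivity
  have hscaled := hB.integral_inv_mul_ouOperator_le hκ hd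
    ((MvPolynomial.totalDegree_smul_le (10 * (d : ℝ) ^ lensExponent κ) P).trans hP)
  simpa only [map_smul, inv_smul_smul₀ hM.ne', MvPolynomial.smul_eval, abs_mul, abs_of_pos hM]
    using hscaled

end IsConvexProfile

end ConvexProfile

section MainTheorem

lemma hasPolynomialGrowth_of_add_le {φ : ℝ → ℝ} {ε C r : ℝ} (hε : 0 ≤ ε) (hC : 0 ≤ C)
    (hφ : ∀ x > (0 : ℝ), |φ (x + ε)| ≤ C * (1 + x ^ r)) : HasPolynomialGrowth φ := by
  refine ⟨⌈r⌉₊, Asymptotics.IsBigO.of_bound (C * 2) ?_⟩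
  filter_upwards [Filter.eventually_ge_atTop (ε + 1)] with s hs
  have hs1 : 1 ≤ s := by linarith
  have hx : 0 < s - ε := by linarith
  have hpow : (s - ε) ^ r ≤ s ^ ⌈r⌉₊ :=
    calc (s - ε) ^ r ≤ (s - ε) ^ (⌈r⌉₊ : ℝ) :=
          rpow_le_rpow_of_exponent_le (by linarith) (Nat.le_ceil r)
      _ = (s - ε) ^ ⌈r⌉₊ := rpow_natCast _ _
      _ ≤ s ^ ⌈r⌉₊ := pow_le_pow_left₀ hx.le (by linarith) _
  rw [norm_pow, norm_of_nonneg (zero_le_one.trans hs1)]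
  calc |φ s| ≤ C * (1 + (s - ε) ^ r) := by simpa only [sub_add_cancel] using hφ (s - ε) hx
    _ ≤ C * (s ^ ⌈r⌉₊ + s ^ ⌈r⌉₊) := by
      gcongr
      exact one_le_pow₀ hs1
    _ = C * 2 * s ^ ⌈r⌉₊ := by ring

lemma sub_sq_le_of_div_add_div_le {u v c : ℝ} (hu : 0 < u) (hv : 0 < v)
    (hc : u / v + v / u ≤ c) : (u - v) ^ 2 ≤ (c - 2) * u * v := by
  rw [div_add_div _ _ hv.ne' hu.ne', div_le_iff₀ (mul_pos hv hu)] at hc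
  linarith

lemma isConvexProfile_of_isLUB {B : ℝ → ℝ} (hcont : ContinuousOn B (Set.Ici 0))
    (hC2 : ContDiffOn ℝ 2 B (Set.Ioi 0)) (hB' : ∀ s > (0 : ℝ), 0 < deriv B s)
    (hB'' : ∀ s > (0 : ℝ), 0 < deriv (deriv B) s)
    (hgrowth : ∀ ε > (0 : ℝ), ∃ C N : ℝ, 0 < C ∧ 0 < N ∧ ∀ x > (0 : ℝ),
      max (max |B (x + ε)| (deriv B (x + ε))) (deriv (deriv B) (x + ε)) ≤ C * (1 + x ^ (2 * N)))
    {c : ℝ} (hc : IsLUB {y : ℝ | ∃ s > (0 : ℝ),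
      y = s * deriv (deriv B) s / deriv B s + deriv B s / (s * deriv (deriv B) s)} c) :
    IsConvexProfile (√(c - 2) / 2) B := by
  have hratio (s : ℝ) (hs : 0 < s) := sub_sq_le_of_div_add_div_le (mul_pos hs (hB'' s hs))
    (hB' s hs) (hc.1 ⟨s, hs, rfl⟩)
  have hc2 : 0 ≤ c - 2 := by
    have hnonneg := (sq_nonneg _).trans (hratio 1 one_pos)
    rw [mul_assoc] at hnonneg
    exact nonneg_of_mul_nonneg_left hnonneg
      (mul_pos (mul_pos one_pos (hB'' 1 one_pos)) (hB' 1 one_pos))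
  have hκ : 4 * (√(c - 2) / 2) ^ 2 = c - 2 := by
    rw [div_pow, sq_sqrt hc2]
    ring
  obtain ⟨C, N, hC, -, hbound⟩ := hgrowth 1 one_pos
  simp only [max_le_iff] at hbound
  exact
    { continuousOn := hcont
      contDiffOn := hC2
      deriv_pos := hB'
      deriv_deriv_pos := hB''
      growth := hasPolynomialGrowth_of_add_le zero_le_one hC.le fun x hx => (hbound x hx).1.1
      growth_deriv := hasPolynomialGrowth_of_add_le zero_le_one hC.le fun x hx =>
        (abs_of_pos (hB' _ (add_pos hx one_pos))).trans_le (hbound x hx).1.2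
      growth_deriv_deriv := hasPolynomialGrowth_of_add_le zero_le_one hC.le fun x hx =>
        (abs_of_pos (hB'' _ (add_pos hx one_pos))).trans_le (hbound x hx).2
      sub_sq_le := fun s hs => (hratio s hs).trans_eq (by rw [hκ]) }

lemma OU_eq_eval_ouOperator {k : ℕ} (P : MvPolynomial (Fin k) ℝ) (x : Fin k → ℝ) :
    OU P x = MvPolynomial.eval x (ouOperator (Fin k) P) := by
  simp [OU, ouOperator_apply]

end MainTheorem

/-- General function Bernstein–Markov estimate for the Ornstein–Uhlenbeck operator. -/
theorem general_function_OU_estimate (B : ℝ → ℝ)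
    (hBcont : ContinuousOn B (Set.Ici 0))
    (hBC2 : ContDiffOn ℝ 2 B (Set.Ioi 0))
    (hB' : ∀ s > (0 : ℝ), 0 < deriv B s)
    (hB'' : ∀ s > (0 : ℝ), 0 < deriv (deriv B) s)
    (hgrowth : ∀ ε > (0 : ℝ), ∃ C N : ℝ, 0 < C ∧ 0 < N ∧ ∀ x > (0 : ℝ),
      max (max |B (x + ε)| (deriv B (x + ε))) (deriv (deriv B) (x + ε)) ≤ C * (1 + x ^ (2 * N)))
    (c : ℝ)
    (hc : IsLUB {y : ℝ | ∃ s > (0 : ℝ),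
      y = s * deriv (deriv B) s / deriv B s + deriv B s / (s * deriv (deriv B) s)} c)
    (k : ℕ) (hk : 1 ≤ k) (P : MvPolynomial (Fin k) ℝ) :
    ∫ x, B (|OU P x|) ∂(gaussMeasure k) ≤
      ∫ x, B (10 * (P.totalDegree : ℝ) ^
          (1 + (2 / π) * Real.arctan (Real.sqrt (c - 2) / 2)) *
        |MvPolynomial.eval x P|) ∂(gaussMeasure k) := by
  have hB := isConvexProfile_of_isLUB hBcont hBC2 hB' hB'' hgrowth hc
  have hκ : 0 ≤ √(c - 2) / 2 := by positivity
  change _ ≤ ∫ x, B (10 * (P.totalDegree : ℝ) ^ lensExponent (√(c - 2) / 2) *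
    |MvPolynomial.eval x P|) ∂(gaussMeasure k)
  rcases Nat.eq_zero_or_pos P.totalDegree with hconst | hdegree
  · have hα : lensExponent (√(c - 2) / 2) ≠ 0 :=
      (zero_lt_one.trans_le (one_le_lensExponent hκ)).ne'
    rw [MvPolynomial.totalDegree_eq_zero_iff_eq_C.1 hconst]
    simp [OU, zero_rpow hα]
  · simp only [OU_eq_eval_ouOperator]
    exact hB.integral_ouOperator_le hκ hdegree le_rfl
end
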